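/- arXiv:1811.04394 — 5 statements merged into one kernel-verified Lean document; each statement's English description precedes it below -/
import Mathlib

section
/- PSL(2, ℤ[ω]) has exactly two characters of Zariski-dense representations into PSL(2, ℂ), namely those of the inclusion and its complex conjugate. Precisely: for every group homomorphism ρ : PSL(2, ℤ[ω]) → PSL(2, ℂ) whose image is Zariski-dense — equivalently, since every proper Zariski-closed subgroup of PSL(2, ℂ) is virtually solvable, whose image is not virtually solvable — there exist a ring embedding σ : ℤ[ω] → ℂ and an element g ∈ PSL(2, ℂ) such that ρ(x) = g · PSL(2,σ)(x) · g⁻¹ for all x, where PSL(2,σ) is the homomorphism induced by applying σ entrywise. (ℤ[ω] has exactly two ring embeddings into ℂ, complex conjugates of each other.) -/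
/-- The Eisenstein integers `ℤ[ω]`, the ring of integers of `ℚ(ω)` with
`ω² + ω + 1 = 0`. -/
abbrev Eisenstein : Type := NumberField.RingOfIntegers (CyclotomicField 3 ℚ)

/-- `PSL(2,R)`: the quotient of `SL(2,R)` by its center. -/
abbrev PSL2 (R : Type*) [CommRing R] : Type _ :=
  Matrix.SpecialLinearGroup (Fin 2) R ⧸
    Subgroup.center (Matrix.SpecialLinearGroup (Fin 2) R)

/-- Applying a ring homomorphism entrywise maps the center of `SL(2,R)` into
the center of `SL(2,S)`. -/
lemma center_le_comap_slMap {R S : Type*} [CommRing R] [CommRing S] (f : R →+* S) :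
    Subgroup.center (Matrix.SpecialLinearGroup (Fin 2) R) ≤
      (Subgroup.center (Matrix.SpecialLinearGroup (Fin 2) S)).comap
        (Matrix.SpecialLinearGroup.map f) := by
  intro A hA
  rw [Subgroup.mem_comap, Matrix.SpecialLinearGroup.mem_center_iff]
  obtain ⟨r, hr, hrA⟩ := Matrix.SpecialLinearGroup.mem_center_iff.mp hA
  refine ⟨f r, by rw [← map_pow, hr, map_one], ?_⟩
  ext i j
  simp [← hrA, Matrix.scalar_apply, Matrix.diagonal_apply]
  aesop

/-- The homomorphism `PSL(2,R) → PSL(2,S)` induced by applying a ring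
homomorphism `f : R → S` entrywise. -/
def PSL2Map {R S : Type*} [CommRing R] [CommRing S] (f : R →+* S) :
    PSL2 R →* PSL2 S :=
  QuotientGroup.map _ _ (Matrix.SpecialLinearGroup.map f) (center_le_comap_slMap f)

/-- A group is virtually solvable if it has a solvable subgroup of finite
index. -/
def VirtuallySolvable (G : Type*) [Group G] : Prop :=
  ∃ H : Subgroup G, IsSolvable H ∧ H.FiniteIndex

abbrev SLt (R : Type*) [CommRing R] := Matrix.SpecialLinearGroup (Fin 2) R

def slm {R : Type*} [CommRing R] (a b c d : R) (h : a * d - b * c = 1) : SLt R :=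
  ⟨!![a, b; c, d], by rw [Matrix.det_fin_two_of]; exact h⟩

lemma slm_mul {R : Type*} [CommRing R] (a b c d : R) (h : a * d - b * c = 1)
    (a' b' c' d' : R) (h' : a' * d' - b' * c' = 1) :
    slm a b c d h * slm a' b' c' d' h' =
      slm (a*a'+b*c') (a*b'+b*d') (c*a'+d*c') (c*b'+d*d') (by linear_combination (a*d-b*c)*h' + h) := by
  apply Subtype.ext
  rw [Matrix.SpecialLinearGroup.coe_mul]
  simp [slm, Matrix.mul_fin_two]

lemma slm_inv {R : Type*} [CommRing R] (a b c d : R) (h : a * d - b * c = 1) :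
    (slm a b c d h)⁻¹ = slm d (-b) (-c) a (by linear_combination h) := by
  apply Subtype.ext
  rw [Matrix.SpecialLinearGroup.coe_inv]
  simp [slm, Matrix.adjugate_fin_two]

lemma slm_neg {R : Type*} [CommRing R] (a b c d : R) (h : a * d - b * c = 1) :
    -(slm a b c d h) = slm (-a) (-b) (-c) (-d) (by linear_combination h) := by
  apply Subtype.ext
  rw [Matrix.SpecialLinearGroup.coe_neg]
  simp [slm]

lemma slm_one {R : Type*} [CommRing R] : (1 : SLt R) = slm 1 0 0 1 (by ring) := by
  apply Subtype.ext
  simp [slm, Matrix.one_fin_two]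

lemma slm_inj {R : Type*} [CommRing R] {a b c d : R} {h : a * d - b * c = 1}
    {a' b' c' d' : R} {h' : a' * d' - b' * c' = 1} :
    slm a b c d h = slm a' b' c' d' h' ↔ a = a' ∧ b = b' ∧ c = c' ∧ d = d' := by
  constructor
  · intro e
    have e := congrArg Subtype.val e
    have h1 := congrFun (congrFun e 0) 0
    have h2 := congrFun (congrFun e 0) 1
    have h3 := congrFun (congrFun e 1) 0
    have h4 := congrFun (congrFun e 1) 1
    simp [slm] at h1 h2 h3 h4
    exact ⟨h1, h2, h3, h4⟩
  · rintro ⟨rfl, rfl, rfl, rfl⟩; rfl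

lemma slm_map {R S : Type*} [CommRing R] [CommRing S] (f : R →+* S)
    (a b c d : R) (h : a * d - b * c = 1) :
    Matrix.SpecialLinearGroup.map f (slm a b c d h) =
      slm (f a) (f b) (f c) (f d) (by simp only [← map_mul, ← map_sub, h, map_one]) := by
  apply Subtype.ext
  ext i j
  rw [Matrix.SpecialLinearGroup.map_apply_coe]
  fin_cases i <;> fin_cases j <;> simp [slm]

lemma exists_slm {R : Type*} [CommRing R] (A : SLt R) :
    ∃ a b c d h, A = slm a b c d h := by
  refine ⟨A.1 0 0, A.1 0 1, A.1 1 0, A.1 1 1, ?_, ?_⟩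
  · have := A.2; rwa [Matrix.det_fin_two] at this
  · apply Subtype.ext
    exact Matrix.eta_fin_two A.1

def qq : SLt ℂ →* PSL2 ℂ := QuotientGroup.mk' _

lemma qq_surj (g : PSL2 ℂ) : ∃ A, qq A = g := QuotientGroup.mk'_surjective _ g

lemma qq_neg (A : SLt ℂ) : qq (-A) = qq A := by
  apply (QuotientGroup.mk'_eq_mk' _).2
  refine ⟨-1, ?_, by simp⟩
  rw [Matrix.SpecialLinearGroup.mem_center_iff]
  exact ⟨-1, by simp, by ext i j; fin_cases i <;> fin_cases j <;> simp⟩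

lemma qq_eq {A B : SLt ℂ} (h : qq A = qq B) : A = B ∨ A = -B := by
  obtain ⟨z, hz, e⟩ := (QuotientGroup.mk'_eq_mk' _).1 h
  obtain ⟨r, hr, e2⟩ := Matrix.SpecialLinearGroup.mem_center_iff.1 hz
  simp at hr
  rcases hr with rfl | rfl
  · left
    have : z = 1 := by apply Subtype.ext; simp [← e2]
    simp [← e, this]
  · right
    have : z = -1 := by
      apply Subtype.ext; rw [← e2]
      ext i j; fin_cases i <;> fin_cases j <;> simp
    simp [← e, this]

lemma w_re_im {w : ℂ} (hw : w ^ 2 + w + 1 = 0) : w.re = -1/2 ∧ w.im ^ 2 = 3/4 := by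
  have h1 := congrArg Complex.re hw
  have h2 := congrArg Complex.im hw
  simp [pow_two] at h1 h2
  have h3 : w.im * (2 * w.re + 1) = 0 := by linear_combination h2
  rcases mul_eq_zero.1 h3 with h | h
  · rw [h] at h1; nlinarith [sq_nonneg (w.re + 1/2)]
  · have : w.re = -1/2 := by linarith
    rw [this] at h1
    exact ⟨this, by nlinarith⟩

lemma normSq_w {w : ℂ} (hw : w ^ 2 + w + 1 = 0) (p r : ℝ) :
    Complex.normSq (p + r * w) = p ^ 2 - p * r + r ^ 2 := by
  obtain ⟨h1, h2⟩ := w_re_im hw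
  rw [Complex.normSq_apply]
  simp [h1]
  linear_combination r ^ 2 * h2

lemma approx_w {w : ℂ} (hw : w ^ 2 + w + 1 = 0) (z : ℂ) :
    ∃ m n : ℤ, Complex.normSq (z - (m + n * w)) < 1 := by
  obtain ⟨h1, h2⟩ := w_re_im hw
  have him : w.im ≠ 0 := by intro h; rw [h] at h2; norm_num at h2
  obtain ⟨p, r, hz⟩ : ∃ p r : ℝ, z = p + r * w := by
    refine ⟨z.re + z.im / w.im / 2, z.im / w.im, ?_⟩
    apply Complex.ext
    · simp [h1]; ring
    · simp; field_simp
  refine ⟨round p, round r, ?_⟩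
  have e : z - ((round p : ℤ) + (round r : ℤ) * w) =
      ((p - round p : ℝ) : ℂ) + ((r - round r : ℝ) : ℂ) * w := by
    rw [hz]; push_cast; ring
  rw [e, normSq_w hw]
  have a1 := abs_le.1 (abs_sub_round p)
  have a2 := abs_le.1 (abs_sub_round r)
  generalize p - round p = x at *
  generalize r - round r = y at *
  have : x^2 ≤ 1/4 := by nlinarith
  have : y^2 ≤ 1/4 := by nlinarith
  nlinarith [sq_nonneg (x + y)]

def tt {R : Type*} [CommRing R] (x : R) : SLt R := slm 1 x 0 1 (by ring)
def ss {R : Type*} [CommRing R] : SLt R := slm 0 (-1) 1 0 (by ring)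

lemma tt_mul {R : Type*} [CommRing R] (x y : R) : tt x * tt y = tt (x + y) := by
  simp only [tt, slm_mul, slm_inj]
  refine ⟨?_, ?_, ?_, ?_⟩ <;> ring

lemma tt_inv {R : Type*} [CommRing R] (x : R) : (tt x)⁻¹ = tt (-x) := by
  simp [tt, slm_inv, slm_inj]

lemma tt_zpow {R : Type*} [CommRing R] (x : R) (n : ℤ) : tt x ^ n = tt (n * x) := by
  let f : Multiplicative R →* SLt R :=
    { toFun := fun x => tt x.toAdd
      map_one' := by simp [tt, slm_one]
      map_mul' := fun x y => by simp [tt_mul] }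
  have := map_zpow f (Multiplicative.ofAdd x) n
  rw [← ofAdd_zsmul] at this
  have h2 : tt ((n • x : R)) = tt x ^ n := this
  rw [← h2, zsmul_eq_mul]

lemma weyl {R : Type*} [CommRing R] (u v : R) (h : u * v = 1) :
    ss * tt u * ss = tt (-v) * ss * slm u (-1) 0 v (by linear_combination h) := by
  simp only [tt, ss, slm_mul, slm_inj]
  refine ⟨?_, ?_, ?_, ?_⟩
  · linear_combination h
  all_goals ring

lemma gen_top {O : Type*} [CommRing O] (ζ : O)
    (hrep : ∀ x : O, ∃ m n : ℤ, x = m + n * ζ) (σ : O →+* ℂ) (hσ : Function.Injective σ)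
    (hw : (σ ζ) ^ 2 + σ ζ + 1 = 0) (H : Subgroup (SLt O)) (hS : ss ∈ H)
    (hT : ∀ x, tt x ∈ H) : H = ⊤ := by
  have hU : ∀ (u x v : O) (h : u * v - x * 0 = 1), slm u x 0 v h ∈ H := by
    intro u x v h
    have h' : u * v = 1 := by linear_combination h
    have e : slm u x 0 v h = ss⁻¹ * (tt (-v))⁻¹ * (ss * tt u * ss) * tt (v * (x + 1)) := by
      rw [weyl u v h']
      have : slm u x 0 v h = slm u (-1) 0 v (by linear_combination h') * tt (v * (x + 1)) := by
        simp only [tt, slm_mul, slm_inj]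
        refine ⟨by ring, by linear_combination -(x + 1) * h', by ring, by ring⟩
      rw [this]; group
    rw [e]
    exact H.mul_mem (H.mul_mem (H.mul_mem (H.inv_mem hS) (H.inv_mem (hT _)))
      (H.mul_mem (H.mul_mem hS (hT _)) hS)) (hT _)
  have key : ∀ k : ℕ, ∀ (a b c d : O) (h : a * d - b * c = 1),
      Complex.normSq (σ c) < k → slm a b c d h ∈ H := by
    intro k
    induction k with
    | zero => intro a b c d h hk; exact absurd hk (by simpa using Complex.normSq_nonneg _)
    | succ k ih =>
      intro a b c d h hk
      by_cases hc : c = 0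
      · subst hc; exact hU _ _ _ _
      have hσc : σ c ≠ 0 := by rwa [Ne, map_eq_zero_iff σ hσ]
      obtain ⟨m, n, hmn⟩ := approx_w hw (σ a / σ c)
      set q : O := m + n * ζ with hq
      have e : slm a b c d h = tt q * (ss⁻¹ *
          slm (-c) (-d) (a - q * c) (b - q * d) (by linear_combination h)) := by
        simp only [tt, ss, slm_inv, slm_mul, slm_inj]
        refine ⟨?_, ?_, ?_, ?_⟩ <;> ring
      rw [e]
      refine H.mul_mem (hT _) (H.mul_mem (H.inv_mem hS) (ih _ _ _ _ _ ?_))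
      have e1 : σ (a - q * c) = (σ a / σ c - (m + n * σ ζ)) * σ c := by
        simp [hq]; field_simp
      rw [e1, map_mul]
      have hpos : 0 < Complex.normSq (σ c) := Complex.normSq_pos.2 hσc
      have hle : Complex.normSq (σ c) ≤ k := by
        obtain ⟨x, y, rfl⟩ := hrep c
        have e2 : Complex.normSq (σ (x + y * ζ)) = ((x ^ 2 - x * y + y ^ 2 : ℤ) : ℝ) := by
          have := normSq_w hw x y
          simp only [map_add, map_mul, map_intCast]
          push_cast
          rw [← this]; simp
        rw [e2] at hk ⊢
        have : x ^ 2 - x * y + y ^ 2 < (k + 1 : ℤ) := by exact_mod_cast hk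
        exact_mod_cast Int.lt_add_one_iff.1 this
      calc _ < 1 * Complex.normSq (σ c) := by gcongr
        _ ≤ k := by rw [one_mul]; exact hle
  rw [eq_top_iff]
  intro A _
  obtain ⟨a, b, c, d, h, rfl⟩ := exists_slm A
  obtain ⟨k, hk⟩ := exists_nat_gt (Complex.normSq (σ c))
  exact key k _ _ _ _ _ hk

open scoped Pointwise in
lemma finite_range_aux {O G : Type*} [CommRing O] [Group G] [Finite Oˣ]
    (hgen : ∀ H : Subgroup (SLt O), ss ∈ H → (∀ x, tt x ∈ H) → H = ⊤) (φ : SLt O →* G)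
    (hv : ∀ x, ∃ v, (v = 0 ∨ IsUnit v) ∧ φ (tt x) = φ (tt v)) :
    (Set.range φ).Finite := by
  classical
  let B : Set (SLt O) := {A | ∃ u x v h, A = slm u x 0 v h}
  have Bmul : ∀ a ∈ B, ∀ b ∈ B, a * b ∈ B := by
    rintro _ ⟨u, x, v, h, rfl⟩ _ ⟨u', x', v', h', rfl⟩
    refine ⟨u * u', u * x' + x * v', v * v', by linear_combination u' * v' * h + h', ?_⟩
    simp [slm_mul, slm_inj]
  have ttB : ∀ x, tt x ∈ B := fun x => ⟨1, x, 1, by ring, rfl⟩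
  have oneB : 1 ∈ B := ⟨1, 0, 1, by ring, slm_one⟩
  let d : Oˣ → SLt O := fun u => slm (u : O) 0 0 ((u⁻¹ : Oˣ) : O) (by simp)
  have dB : ∀ u, d u ∈ B := fun u => ⟨_, _, _, _, rfl⟩
  have Bdec : ∀ b ∈ B, ∃ v u, (v = 0 ∨ IsUnit v) ∧ φ b = φ (tt v) * φ (d u) := by
    rintro _ ⟨u, x, v, h, rfl⟩
    have h' : u * v = 1 := by linear_combination h
    obtain ⟨y, hy, e⟩ := hv (x * u)
    refine ⟨y, ⟨u, v, h', by rw [mul_comm]; exact h'⟩, hy, ?_⟩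
    rw [← e, ← map_mul]
    congr 1
    simp only [tt, d, slm_mul, slm_inj]
    refine ⟨by ring, ?_, by ring, ?_⟩
    · simp; linear_combination -x * h'
    · simp
  have hfin0 : {v : O | v = 0 ∨ IsUnit v}.Finite := by
    have : {v : O | v = 0 ∨ IsUnit v} = {0} ∪ Set.range (Units.val : Oˣ → O) := by
      ext v; simp [IsUnit]
    rw [this]
    exact (Set.finite_singleton _).union (Set.finite_range _)
  have hB : (φ '' B).Finite := by
    refine (Set.Finite.image2 (fun v u => φ (tt v) * φ (d u)) hfin0
      (Set.finite_univ (α := Oˣ))).subset ?_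
    rintro _ ⟨b, hb, rfl⟩
    obtain ⟨v, u, h, e⟩ := Bdec b hb
    exact ⟨v, h, u, trivial, e.symm⟩
  let Y : Set G := φ '' B ∪ Set.image2 (fun g g' => g * φ ss * g') (φ '' B) (φ '' B)
  have hY : Y.Finite := hB.union (Set.Finite.image2 _ hB hB)
  let H : Subgroup (SLt O) := (MulAction.stabilizer G Y).comap φ
  have hH : H = ⊤ := by
    apply hgen
    · change φ ss ∈ MulAction.stabilizer G Y
      rw [MulAction.mem_stabilizer_set_iff_smul_set_subset hY]
      rintro _ ⟨_, (⟨b, hb, rfl⟩ | ⟨_, ⟨b, hb, rfl⟩, _, ⟨b', hb', rfl⟩, rfl⟩), rfl⟩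
      · right
        exact ⟨1, ⟨1, oneB, map_one _⟩, φ b, ⟨b, hb, rfl⟩, by simp⟩
      · obtain ⟨v, u, h, e⟩ := Bdec b hb
        have e1 : d u * ss = ss * d u⁻¹ := by
          simp only [d, ss, slm_mul, slm_inj]
          simp
        have e2 : φ ss • (φ b * φ ss * φ b') = φ (ss * tt v * ss) * φ (d u⁻¹ * b') := by
          rw [e, smul_eq_mul, ← map_mul, ← map_mul, ← map_mul, ← map_mul, ← map_mul]
          congr 1
          calc ss * (tt v * d u * ss * b') = ss * tt v * (d u * ss) * b' := by group
            _ = _ := by rw [e1]; group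
        change φ ss • (φ b * φ ss * φ b') ∈ Y
        rw [e2]
        have m1 := Bmul _ (dB u⁻¹) _ hb'
        rcases h with rfl | ⟨v, rfl⟩
        · left
          refine ⟨ss * tt 0 * ss * (d u⁻¹ * b'), ?_, by rw [map_mul]⟩
          refine Bmul _ ⟨-1, 0, -1, by ring, ?_⟩ _ m1
          simp only [tt, ss, slm_mul, slm_inj]
          simp
        · right
          rw [weyl (v : O) ((v⁻¹ : Oˣ) : O) (by simp)]
          refine ⟨_, ⟨_, ttB (-((v⁻¹ : Oˣ) : O)), rfl⟩, _, ⟨_, Bmul _ ⟨v, -1, (v⁻¹ : Oˣ), by simp, rfl⟩ _ m1, rfl⟩, ?_⟩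
          simp only [map_mul, mul_assoc]
    · intro x
      change φ (tt x) ∈ MulAction.stabilizer G Y
      rw [MulAction.mem_stabilizer_set_iff_smul_set_subset hY]
      rintro _ ⟨_, (⟨b, hb, rfl⟩ | ⟨_, ⟨b, hb, rfl⟩, _, ⟨b', hb', rfl⟩, rfl⟩), rfl⟩
      · left
        exact ⟨tt x * b, Bmul _ (ttB x) _ hb, by simp⟩
      · right
        exact ⟨_, ⟨_, Bmul _ (ttB x) _ hb, rfl⟩, _, ⟨b', hb', rfl⟩, by simp [mul_assoc]⟩
  refine hY.subset ?_
  rintro _ ⟨A, rfl⟩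
  have hA : A ∈ H := hH ▸ Subgroup.mem_top A
  have h1 : φ A • Y = Y := hA
  rw [← h1]
  exact ⟨1, Or.inl ⟨1, oneB, map_one _⟩, by simp⟩

lemma zeta_cube {O : Type*} [CommRing O] {ζ : O} (h : ζ ^ 2 + ζ + 1 = 0) : ζ * ζ ^ 2 = 1 := by
  linear_combination (ζ - 1) * h

def dd {O : Type*} [CommRing O] {ζ : O} (h : ζ ^ 2 + ζ + 1 = 0) : SLt O :=
  slm ζ 0 0 (ζ ^ 2) (by linear_combination zeta_cube h)

lemma dd_tt {O : Type*} [CommRing O] {ζ : O} (h : ζ ^ 2 + ζ + 1 = 0) (x : O) :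
    dd h * tt x = tt (ζ ^ 2 * x) * dd h := by
  simp only [dd, tt, slm_mul, slm_inj]
  refine ⟨by ring, by linear_combination -ζ * x * zeta_cube h, by ring, by ring⟩

lemma dd_zt {O : Type*} [CommRing O] {ζ : O} (h : ζ ^ 2 + ζ + 1 = 0) :
    dd h * tt ζ = tt 1 * dd h := by
  rw [dd_tt]; congr 2; linear_combination zeta_cube h

lemma tt_rep {O G : Type*} [CommRing O] [Group G] (φ : SLt O →* G) (ζ : O) (m n : ℤ) :
    φ (tt (m + n * ζ)) = φ (tt 1) ^ m * φ (tt ζ) ^ n := by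
  rw [← map_zpow, ← map_zpow, ← map_mul, tt_zpow, tt_zpow, tt_mul, mul_one]

lemma case_comm {O G : Type*} [CommRing O] [Group G] {ζ : O} (h : ζ ^ 2 + ζ + 1 = 0)
    (hrep : ∀ x : O, ∃ m n : ℤ, x = m + n * ζ) (φ : SLt O →* G)
    (hc : φ (dd h) * φ (tt 1) = φ (tt 1) * φ (dd h)) (x : O) :
    ∃ v, (v = 0 ∨ IsUnit v) ∧ φ (tt x) = φ (tt v) := by
  have e1 : φ (tt ζ) = φ (tt 1) := by
    have := congrArg φ (dd_zt h)
    rw [map_mul, map_mul, ← hc] at this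
    exact mul_left_cancel this
  have e2 : φ (tt (ζ ^ 2)) = φ (tt 1) := by
    have := congrArg φ (dd_tt h 1)
    rw [map_mul, map_mul, hc, mul_one] at this
    exact (mul_right_cancel this).symm
  have e3 : φ (tt 1) ^ (3 : ℤ) = 1 := by
    have : tt 1 * tt ζ * tt (ζ ^ 2) = 1 := by
      rw [tt_mul, tt_mul, slm_one, tt, slm_inj]
      exact ⟨rfl, by linear_combination h, rfl, rfl⟩
    have := congrArg φ this
    rw [map_mul, map_mul, e1, e2, map_one] at this
    rw [← this, zpow_ofNat, pow_succ, pow_two]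
  have e0 : φ (tt (0 : O)) = 1 := by
    rw [← map_one φ, slm_one, tt]
  obtain ⟨m, n, rfl⟩ := hrep x
  rw [tt_rep, e1, ← zpow_add]
  have e4 : φ (tt 1) ^ (m + n) = φ (tt 1) ^ ((m + n) % 3) := by
    conv_lhs => rw [← Int.emod_add_mul_ediv (m + n) 3, zpow_add, zpow_mul, e3, one_zpow, mul_one]
  rw [e4]
  have : (m + n) % 3 = 0 ∨ (m + n) % 3 = 1 ∨ (m + n) % 3 = 2 := by omega
  rcases this with h | h | h <;> rw [h]
  · exact ⟨0, Or.inl rfl, by simp [e0]⟩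
  · exact ⟨1, Or.inr isUnit_one, by simp⟩
  · refine ⟨-1, Or.inr isUnit_one.neg, ?_⟩
    rw [← tt_inv, map_inv, ← mul_left_inj (φ (tt 1)), inv_mul_cancel, ← e3]
    group

lemma case_two {O G : Type*} [CommRing O] [Group G] {ζ : O} (h : ζ ^ 2 + ζ + 1 = 0)
    (hrep : ∀ x : O, ∃ m n : ℤ, x = m + n * ζ) (φ : SLt O →* G)
    (hc : φ (tt 1) ^ (2 : ℤ) = 1) (x : O) :
    ∃ v, (v = 0 ∨ IsUnit v) ∧ φ (tt x) = φ (tt v) := by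
  have e1 : φ (tt ζ) ^ (2 : ℤ) = 1 := by
    have := congrArg φ (dd_zt h)
    rw [map_mul, map_mul] at this
    have : φ (tt ζ) = (φ (dd h))⁻¹ * φ (tt 1) * ((φ (dd h))⁻¹)⁻¹ := by
      rw [mul_assoc, inv_inv, ← this]; group
    rw [this, conj_zpow, hc]; group
  have hz : IsUnit ζ := IsUnit.of_mul_eq_one _ (zeta_cube h)
  obtain ⟨m, n, rfl⟩ := hrep x
  have red : ∀ g : G, g ^ (2 : ℤ) = 1 → ∀ m : ℤ, g ^ m = g ^ (m % 2) := by
    intro g hg m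
    conv_lhs => rw [← Int.emod_add_mul_ediv m 2, zpow_add, zpow_mul, hg, one_zpow, mul_one]
  have e2 : φ (tt (m + n * ζ)) = φ (tt (((m % 2 : ℤ) : O) + ((n % 2 : ℤ) : O) * ζ)) := by
    rw [tt_rep, tt_rep, red _ hc m, red _ e1 n]
  refine ⟨_, ?_, e2⟩
  rcases Int.emod_two_eq_zero_or_one m with h1 | h1 <;>
  rcases Int.emod_two_eq_zero_or_one n with h2 | h2 <;> rw [h1, h2]
  · left; simp
  · right; simpa using hz
  · right; simp
  · right
    have : ((1 : ℤ) : O) + ((1 : ℤ) : O) * ζ = -ζ ^ 2 := by push_cast; linear_combination h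
    rw [this]
    exact (hz.pow 2).neg

lemma sq_one_cases {a : ℂ} (h : a ^ 2 = 1) : a = 1 ∨ a = -1 := by
  simpa using h

lemma core3 {O : Type*} [CommRing O] {ζ : O} (h : ζ ^ 2 + ζ + 1 = 0)
    (hrep : ∀ x : O, ∃ m n : ℤ, x = m + n * ζ)
    (hgen : ∀ H : Subgroup (SLt O), ss ∈ H → (∀ x, tt x ∈ H) → H = ⊤)
    (φ : SLt O →* PSL2 ℂ) {w : ℂ} (hw : w ^ 2 + w + 1 = 0) (σ : O →+* ℂ) (hσ : σ ζ = w)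
    (hD : φ (dd h) = qq (dd hw)) (hT : φ (tt 1) = qq (tt 1)) (A : SLt O) :
    φ A = qq (Matrix.SpecialLinearGroup.map σ A) := by
  let ψ : SLt O →* PSL2 ℂ := qq.comp (Matrix.SpecialLinearGroup.map σ)
  have hw1 : w ≠ 1 := by rintro rfl; norm_num at hw
  have hw0 : w ≠ 0 := by rintro rfl; norm_num at hw
  have pD : ψ (dd h) = qq (dd hw) := by
    simp [ψ, dd, slm_map, hσ]
  have pT : ∀ x, ψ (tt x) = qq (tt (σ x)) := by
    intro x
    simp [ψ, tt, slm_map]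
  have pS : ψ ss = qq ss := by
    simp [ψ, ss, slm_map]
  have hz : φ (tt ζ) = ψ (tt ζ) := by
    have e1 := congrArg φ (dd_zt h)
    have e2 := congrArg ψ (dd_zt h)
    rw [map_mul, map_mul, hD, hT] at e1
    rw [map_mul, map_mul, pD, pT 1, map_one, ← e1] at e2
    exact (mul_left_cancel e2).symm
  have h1 : φ (tt 1) = ψ (tt 1) := by rw [hT, pT 1, map_one]
  have hS : φ ss = ψ ss := by
    rw [pS]
    obtain ⟨M, hM⟩ := qq_surj (φ ss)
    obtain ⟨a, b, c, d, hdet, rfl⟩ := exists_slm M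
    have r1 : dd h * ss * dd h = ss := by
      simp only [dd, ss, slm_mul, slm_inj]
      refine ⟨by ring, ?_, ?_, by ring⟩
      · linear_combination -zeta_cube h
      · linear_combination zeta_cube h
    have r2 : (ss : SLt O) * tt 1 * ss = tt (-1) * ss * tt (-1) := by
      simp only [tt, ss, slm_mul, slm_inj]
      refine ⟨?_, ?_, ?_, ?_⟩ <;> ring
    have s1 := congrArg φ r1
    have s2 := congrArg φ r2
    rw [← tt_inv] at s2
    simp only [map_mul, map_inv, hD, hT, ← hM] at s1 s2
    simp only [← map_mul, ← map_inv] at s1 s2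
    have w3 := zeta_cube hw
    have ha : a = 0 ∧ d = 0 := by
      rcases qq_eq s1 with e | e
      · simp only [dd, slm_mul, slm_inj] at e
        obtain ⟨e1, e2, e3, e4⟩ := e
        constructor
        · have : a * (w * (w - 1)) * (w + 1) = 0 := by linear_combination w * e1
          have hw2 : w + 1 ≠ 0 := by
            intro h0
            apply hw0
            have : w ^ 2 = 0 := by linear_combination hw - h0
            exact pow_eq_zero_iff (two_ne_zero) |>.1 this
          simpa [hw0, hw2, sub_eq_zero, hw1] using this
        · have : d * (w - 1) = 0 := by linear_combination e4 - w * d * w3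
          simpa [sub_eq_zero, hw1] using this
      · simp only [dd, slm_neg, slm_mul, slm_inj] at e
        obtain ⟨e1, e2, e3, e4⟩ := e
        exfalso
        have hb : b = 0 := by linear_combination (1/2) * e2 - (1/2) * b * w3
        have : a * w = 0 := by linear_combination a * hw - e1
        have ha : a = 0 := by simpa [hw0] using this
        rw [ha, hb] at hdet
        norm_num at hdet
    obtain ⟨rfl, rfl⟩ := ha
    have hc : c ≠ 0 := by rintro rfl; norm_num at hdet
    rw [← hM]
    have hb : b = -1 ∨ b = 1 := by
      rcases qq_eq s2 with e | e
      · left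
        simp only [slm_inv, tt, slm_mul, slm_inj] at e
        have : c * (b + 1) = 0 := by linear_combination e.1
        have : b + 1 = 0 := by simpa [hc] using this
        linear_combination this
      · right
        simp only [slm_inv, tt, slm_neg, slm_mul, slm_inj] at e
        have : c * (b - 1) = 0 := by linear_combination e.1
        have : b - 1 = 0 := by simpa [hc] using this
        linear_combination this
    rcases hb with rfl | rfl
    · congr 1
      rw [ss, slm_inj]
      exact ⟨rfl, rfl, by linear_combination hdet, rfl⟩
    · rw [← qq_neg ss]
      congr 1
      rw [ss, slm_neg, slm_inj]
      exact ⟨by simp, by simp, by linear_combination -hdet, by simp⟩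
  have := hgen (φ.eqLocus ψ) hS (by
    intro x
    obtain ⟨m, n, rfl⟩ := hrep x
    change φ _ = ψ _
    rw [tt_rep, tt_rep, hz, h1])
  have hA : A ∈ φ.eqLocus ψ := this ▸ Subgroup.mem_top A
  exact hA

def Concl {O : Type*} [CommRing O] (φ : SLt O →* PSL2 ℂ) : Prop :=
  ∃ σ : O →+* ℂ, Function.Injective σ ∧ ∃ g : PSL2 ℂ, ∀ A,
    φ A = g * qq (Matrix.SpecialLinearGroup.map σ A) * g⁻¹

lemma concl_conj {O : Type*} [CommRing O] (φ : SLt O →* PSL2 ℂ) (g : PSL2 ℂ)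
    (h : Concl ((MulAut.conj g).toMonoidHom.comp φ)) : Concl φ := by
  obtain ⟨σ, hσ, k, hk⟩ := h
  refine ⟨σ, hσ, g⁻¹ * k, fun A => ?_⟩
  have := hk A
  simp at this
  calc φ A = g⁻¹ * (g * φ A * g⁻¹) * g := by group
    _ = _ := by rw [this]; group

lemma core2 {O : Type*} [CommRing O] {ζ : O} (h : ζ ^ 2 + ζ + 1 = 0)
    (hrep : ∀ x : O, ∃ m n : ℤ, x = m + n * ζ)
    (hgen : ∀ H : Subgroup (SLt O), ss ∈ H → (∀ x, tt x ∈ H) → H = ⊤)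
    (hσ : ∀ w : ℂ, w ^ 2 + w + 1 = 0 → ∃ σ : O →+* ℂ, Function.Injective σ ∧ σ ζ = w)
    (φ : SLt O →* PSL2 ℂ) {w : ℂ} (hw : w ^ 2 + w + 1 = 0)
    (hD : φ (dd h) = qq (dd hw)) (b : ℂ) (hb : b ≠ 0) (hT : φ (tt 1) = qq (tt b)) :
    Concl φ := by
  obtain ⟨r, hr⟩ := IsAlgClosed.exists_pow_nat_eq b (n := 2) (by norm_num)
  have hr0 : r ≠ 0 := by rintro rfl; apply hb; rw [← hr]; norm_num
  let P : SLt ℂ := slm r⁻¹ 0 0 r (by field_simp; ring)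
  apply concl_conj φ (qq P)
  obtain ⟨σ, hi, hs⟩ := hσ w hw
  refine ⟨σ, hi, 1, fun A => ?_⟩
  rw [one_mul, inv_one, mul_one]
  refine core3 h hrep hgen _ hw σ hs ?_ ?_ A
  · simp only [MonoidHom.comp_apply, hD]
    change qq P * _ * (qq P)⁻¹ = _
    rw [← map_inv, ← map_mul, ← map_mul]
    congr 1
    simp only [P, dd, slm_inv, slm_mul, slm_inj]
    refine ⟨?_, ?_, ?_, ?_⟩ <;> (try simp) <;> field_simp
  · simp only [MonoidHom.comp_apply, hT]
    change qq P * _ * (qq P)⁻¹ = _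
    rw [← map_inv, ← map_mul, ← map_mul]
    congr 1
    simp only [P, tt, slm_inv, slm_mul, slm_inj, ← hr]
    refine ⟨?_, ?_, ?_, ?_⟩ <;> (try simp) <;> field_simp

lemma cube_trace {a b c d : ℂ} {hd : a * d - b * c = 1} (h : qq (slm a b c d hd) ^ 3 = 1) :
    qq (slm a b c d hd) = 1 ∨ (a + d) ^ 2 = 1 := by
  by_cases ht : (a + d) ^ 2 = 1
  · exact Or.inr ht
  left
  have ht : (a + d) ^ 2 - 1 ≠ 0 := sub_ne_zero.2 ht
  have key : b = 0 ∧ c = 0 ∧ a = d := by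
    rw [pow_succ, pow_two, ← map_mul, ← map_mul, ← map_one qq, slm_mul, slm_mul] at h
    have : ((a + d) ^ 2 - 1) * b = 0 ∧ ((a + d) ^ 2 - 1) * c = 0 ∧
        ((a + d) ^ 2 - 1) * (a - d) = 0 := by
      rcases qq_eq h with e | e <;> simp only [slm_one, slm_neg, slm_inj] at e <;>
        obtain ⟨e1, e2, e3, e4⟩ := e
      · exact ⟨by linear_combination e2 + b * hd, by linear_combination e3 + c * hd,
          by linear_combination e1 - e4 + (a - d) * hd⟩
      · exact ⟨by linear_combination e2 + b * hd, by linear_combination e3 + c * hd,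
          by linear_combination e1 - e4 + (a - d) * hd⟩
    simpa [ht, sub_eq_zero] using this
  obtain ⟨rfl, rfl, rfl⟩ := key
  have : a ^ 2 = 1 := by linear_combination hd
  rw [← map_one qq]
  rcases sq_one_cases this with rfl | rfl
  · rw [slm_one]
  · rw [← qq_neg 1, slm_one, slm_neg]; simp

lemma core1 {O : Type*} [CommRing O] {ζ : O} (h : ζ ^ 2 + ζ + 1 = 0)
    (hrep : ∀ x : O, ∃ m n : ℤ, x = m + n * ζ)
    (hgen : ∀ H : Subgroup (SLt O), ss ∈ H → (∀ x, tt x ∈ H) → H = ⊤)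
    (hσ : ∀ w : ℂ, w ^ 2 + w + 1 = 0 → ∃ σ : O →+* ℂ, Function.Injective σ ∧ σ ζ = w)
    (φ : SLt O →* PSL2 ℂ) {w : ℂ} (hw : w ^ 2 + w + 1 = 0)
    (hD : φ (dd h) = qq (dd hw)) (hc : ¬ φ (dd h) * φ (tt 1) = φ (tt 1) * φ (dd h))
    (h2 : ¬ φ (tt 1) ^ (2 : ℤ) = 1) :
    Concl φ := by
  have hw1 : w ≠ 1 := by rintro rfl; norm_num at hw
  have hw0 : w ≠ 0 := by rintro rfl; norm_num at hw
  have z3 := zeta_cube h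
  have w3 := zeta_cube hw
  obtain ⟨M, hM⟩ := qq_surj (φ (tt 1))
  obtain ⟨a, b, c, d, hd, rfl⟩ := exists_slm M
  have r1 : (tt 1 * dd h) ^ 3 = 1 := by
    rw [pow_succ, pow_two]
    simp only [tt, dd, slm_one, slm_mul, slm_inj]
    refine ⟨by linear_combination z3, ?_, by ring, ?_⟩
    · linear_combination ζ ^ 4 * h
    · linear_combination (1 + ζ ^ 3) * z3
  have r2 : (tt 1 * (dd h * dd h)) ^ 3 = 1 := by
    rw [pow_succ, pow_two]
    simp only [tt, dd, slm_one, slm_mul, slm_inj]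
    refine ⟨by linear_combination (1 + ζ ^ 3) * z3, ?_, by ring, ?_⟩
    · linear_combination (ζ ^ 8 * (1 + (ζ ^ 2 - ζ))) * h
    · linear_combination (1 + ζ ^ 3 + ζ ^ 6 + ζ ^ 9) * z3
  have s1 := congrArg φ r1
  have s2 := congrArg φ r2
  rw [map_pow, map_one, map_mul, hD, ← hM, ← map_mul, dd, slm_mul] at s1
  rw [map_pow, map_one, map_mul, map_mul, hD, ← hM, ← map_mul, ← map_mul, dd, slm_mul, slm_mul] at s2
  have t1 := (cube_trace s1).resolve_left (by
    intro e
    have e' : φ (tt 1) * φ (dd h) = 1 := by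
      rw [hD, ← hM, ← map_mul, dd, slm_mul, e]
    apply hc
    rw [eq_inv_of_mul_eq_one_left e']; group)
  have t2 := (cube_trace s2).resolve_left (by
    intro e
    have e' : φ (tt 1) * (φ (dd h) * φ (dd h)) = 1 := by
      rw [hD, ← hM, ← map_mul, ← map_mul, dd, slm_mul, slm_mul, e]
    apply hc
    rw [eq_inv_of_mul_eq_one_left e']; group)
  replace t1 : (a * w + d * w ^ 2) ^ 2 = 1 := by linear_combination t1
  replace t2 : (a * w ^ 2 + d * w) ^ 2 = 1 := by
    have : a * w ^ 2 + d * w = a * w ^ 2 + d * w ^ 4 := by linear_combination -d * w * w3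
    rw [this]
    linear_combination t2
  have t3 : (w * (w - 1)) * ((a - d) * (a + d)) = 0 := by
    linear_combination t1 - t2 + (a ^ 2 - d ^ 2) * w * (w - 1) * hw
  have t4 : (a - d) * (a + d) = 0 := by
    simpa [hw0, sub_ne_zero.2 hw1] using t3
  have t5 : a = d := by
    rcases mul_eq_zero.1 t4 with e | e
    · exact sub_eq_zero.1 e
    · exfalso
      apply h2
      rw [← hM, zpow_ofNat, pow_two, ← map_mul, ← map_one qq, ← qq_neg 1]
      congr 1
      simp only [slm_mul, slm_one, slm_neg, slm_inj]
      refine ⟨?_, ?_, ?_, ?_⟩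
      · linear_combination a * e - hd
      · linear_combination b * e
      · linear_combination c * e
      · linear_combination d * e - hd
  subst t5
  have t6 : a ^ 2 = 1 := by
    linear_combination t2 - a ^ 2 * (w ^ 2 + w - 1) * hw
  obtain ⟨b, c, hbc, hM⟩ : ∃ b c, ∃ hbc : 1 * 1 - b * c = 1, qq (slm 1 b c 1 hbc) = φ (tt 1) := by
    rcases sq_one_cases t6 with rfl | rfl
    · exact ⟨b, c, _, hM⟩
    · refine ⟨-b, -c, by linear_combination hd, ?_⟩
      rw [← hM, ← qq_neg, slm_neg]
      congr 1
      rw [slm_inj]; simp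
  have hbc0 : b * c = 0 := by linear_combination -hbc
  have hne : ¬ (b = 0 ∧ c = 0) := by
    rintro ⟨rfl, rfl⟩
    apply hc
    have : φ (tt 1) = 1 := by rw [← hM, ← map_one qq, slm_one]
    rw [this]; simp
  by_cases hc0 : c = 0
  · subst hc0
    have hb : b ≠ 0 := by rintro rfl; exact hne ⟨rfl, rfl⟩
    exact core2 h hrep hgen hσ φ hw hD b hb hM.symm
  · have hb : b = 0 := by simpa [hc0] using hbc0
    subst hb
    apply concl_conj φ (qq ss)
    have hw' : (w ^ 2) ^ 2 + w ^ 2 + 1 = 0 := by linear_combination (w ^ 2 - w + 1) * hw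
    refine core2 h hrep hgen hσ _ hw' ?_ (-c) (neg_ne_zero.2 hc0) ?_
    · simp only [MonoidHom.comp_apply, hD]
      change qq ss * _ * (qq ss)⁻¹ = _
      rw [← map_inv, ← map_mul, ← map_mul]
      congr 1
      simp only [ss, dd, slm_inv, slm_mul, slm_inj]
      refine ⟨by ring, by ring, by ring, ?_⟩
      linear_combination -w * w3
    · simp only [MonoidHom.comp_apply, ← hM]
      change qq ss * _ * (qq ss)⁻¹ = _
      rw [← map_inv, ← map_mul, ← map_mul]
      congr 1
      simp only [ss, tt, slm_inv, slm_mul, slm_inj]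
      refine ⟨?_, ?_, ?_, ?_⟩ <;> ring

lemma eig {a b c d w : ℂ} (h : (a - w) * (d - w) = b * c) :
    ∃ x y, ¬ (x = 0 ∧ y = 0) ∧ (a - w) * x + b * y = 0 ∧ c * x + (d - w) * y = 0 := by
  by_cases hb : b = 0
  · by_cases hd : d - w = 0
    · exact ⟨0, 1, by simp, by simp [hb], by simp [hd]⟩
    · have ha : a - w = 0 := by simpa [hb, hd] using h
      exact ⟨d - w, -c, by simp [hd], by simp [ha, hb], by ring⟩
  · exact ⟨b, w - a, by simp [hb], by ring, by linear_combination -h⟩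

lemma core0 {O : Type*} [CommRing O] {ζ : O} (h : ζ ^ 2 + ζ + 1 = 0)
    (hrep : ∀ x : O, ∃ m n : ℤ, x = m + n * ζ)
    (hgen : ∀ H : Subgroup (SLt O), ss ∈ H → (∀ x, tt x ∈ H) → H = ⊤)
    (hσ : ∀ w : ℂ, w ^ 2 + w + 1 = 0 → ∃ σ : O →+* ℂ, Function.Injective σ ∧ σ ζ = w)
    (φ : SLt O →* PSL2 ℂ) {w : ℂ} (hw : w ^ 2 + w + 1 = 0)
    (hc : ¬ φ (dd h) * φ (tt 1) = φ (tt 1) * φ (dd h))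
    (h2 : ¬ φ (tt 1) ^ (2 : ℤ) = 1) :
    Concl φ := by
  have hw1 : w ≠ 1 := by rintro rfl; norm_num at hw
  have hw0 : w ≠ 0 := by rintro rfl; norm_num at hw
  have z3 := zeta_cube h
  have w3 := zeta_cube hw
  have r1 : dd h ^ 3 = 1 := by
    rw [pow_succ, pow_two]
    simp only [dd, slm_one, slm_mul, slm_inj]
    exact ⟨by linear_combination z3, by ring, by ring, by linear_combination (1 + ζ ^ 3) * z3⟩
  obtain ⟨a, b, c, d, hd, hM, htr⟩ : ∃ a b c d, ∃ hd : a * d - b * c = 1,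
      qq (slm a b c d hd) = φ (dd h) ∧ a + d = -1 := by
    obtain ⟨M, hM⟩ := qq_surj (φ (dd h))
    obtain ⟨a, b, c, d, hd, rfl⟩ := exists_slm M
    have s1 := congrArg φ r1
    rw [map_pow, ← hM, map_one] at s1
    have := (cube_trace s1).resolve_left (by
      intro e; rw [e] at hM; apply hc; rw [← hM]; simp)
    rcases sq_one_cases this with e | e
    · refine ⟨-a, -b, -c, -d, by linear_combination hd, ?_, by linear_combination -e⟩
      rw [← slm_neg a b c d hd, qq_neg, hM]
    · exact ⟨a, b, c, d, hd, hM, e⟩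
  obtain ⟨x, y, n1, e1, e2⟩ := eig (a := a) (b := b) (c := c) (d := d) (w := w)
    (by linear_combination hd + hw - w * htr)
  obtain ⟨x', y', n2, e3, e4⟩ := eig (a := a) (b := b) (c := c) (d := d) (w := w ^ 2)
    (by linear_combination hd + (w ^ 2 - w + 1) * hw - w ^ 2 * htr)
  have hww : w * (w - 1) ≠ 0 := mul_ne_zero hw0 (sub_ne_zero.2 hw1)
  have hdet : x * y' - x' * y ≠ 0 := by
    intro h0
    have f1 : (w * (w - 1)) * (x * x') = 0 := by
      linear_combination x' * e1 - x * e3 + b * h0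
    have f2 : (w * (w - 1)) * (y * y') = 0 := by
      linear_combination y' * e2 - y * e4 - c * h0
    have f1 : x * x' = 0 := (mul_eq_zero.1 f1).resolve_left hww
    have f2 : y * y' = 0 := (mul_eq_zero.1 f2).resolve_left hww
    rcases mul_eq_zero.1 f1 with rfl | rfl <;> rcases mul_eq_zero.1 f2 with rfl | rfl <;>
      simp_all
  obtain ⟨δ, hδ⟩ : ∃ δ, (x * y' - x' * y) * δ = 1 := ⟨_, mul_inv_cancel₀ hdet⟩
  let P : SLt ℂ := slm x (x' * δ) y (y' * δ) (by linear_combination hδ)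
  have hP : slm a b c d hd * P = P * dd hw := by
    simp only [P, dd, slm_mul, slm_inj]
    refine ⟨?_, ?_, ?_, ?_⟩
    · linear_combination e1
    · linear_combination δ * e3
    · linear_combination e2
    · linear_combination δ * e4
  apply concl_conj φ (qq P)⁻¹
  refine core1 h hrep hgen hσ _ hw ?_ ?_ ?_
  · simp only [MonoidHom.comp_apply, ← hM]
    change (qq P)⁻¹ * _ * (qq P)⁻¹⁻¹ = _
    rw [inv_inv, mul_assoc, ← map_mul, hP, map_mul]; group
  · simp only [MonoidHom.comp_apply, ← map_mul]
    intro e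
    exact hc (by simpa using (MulAut.conj (qq P)⁻¹).injective e)
  · simp only [MonoidHom.comp_apply, ← map_zpow]
    intro e
    apply h2
    have := (MulAut.conj (qq P)⁻¹).injective (e.trans (map_one _).symm)
    rwa [map_zpow] at this

lemma main_gen {O : Type*} [CommRing O] [Finite Oˣ] {ζ : O} (h : ζ ^ 2 + ζ + 1 = 0)
    (hrep : ∀ x : O, ∃ m n : ℤ, x = m + n * ζ)
    (hσ : ∀ w : ℂ, w ^ 2 + w + 1 = 0 → ∃ σ : O →+* ℂ, Function.Injective σ ∧ σ ζ = w)
    {w : ℂ} (hw : w ^ 2 + w + 1 = 0)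
    (φ : SLt O →* PSL2 ℂ) (hf : ¬ (Set.range φ).Finite) : Concl φ := by
  obtain ⟨σ, hi, hs⟩ := hσ w hw
  have hgen : ∀ H : Subgroup (SLt O), ss ∈ H → (∀ x, tt x ∈ H) → H = ⊤ :=
    gen_top ζ hrep σ hi (by rw [hs]; exact hw)
  refine core0 h hrep hgen hσ φ hw ?_ ?_
  · intro hc
    exact hf (finite_range_aux hgen φ (case_comm h hrep φ hc))
  · intro hc
    exact hf (finite_range_aux hgen φ (case_two h hrep φ hc))

lemma exists_w : ∃ w : ℂ, w ^ 2 + w + 1 = 0 := by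
  have h := Complex.isPrimitiveRoot_exp 3 (by norm_num)
  have := h.geom_sum_eq_zero (by norm_num)
  rw [Finset.sum_range_succ, Finset.sum_range_succ, Finset.sum_range_succ,
    Finset.sum_range_zero] at this
  exact ⟨_, by linear_combination this⟩

lemma eis_facts : ∃ ζ : Eisenstein, ζ ^ 2 + ζ + 1 = 0 ∧
    (∀ x : Eisenstein, ∃ m n : ℤ, x = m + n * ζ) ∧
    (∀ w : ℂ, w ^ 2 + w + 1 = 0 →
      ∃ σ : Eisenstein →+* ℂ, Function.Injective σ ∧ σ ζ = w) ∧ Finite Eisensteinˣ := by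
  have hcyc : IsCyclotomicExtension {3} ℚ (CyclotomicField 3 ℚ) :=
    CyclotomicField.isCyclotomicExtension 3 ℚ
  have hz := IsCyclotomicExtension.zeta_spec 3 ℚ (CyclotomicField 3 ℚ)
  have h0 : hz.toInteger ^ 2 + hz.toInteger + 1 = 0 :=
    IsCyclotomicExtension.Rat.Three.eta_sq_add_eta_add_one hz
  refine ⟨hz.toInteger, h0, ?_, ?_, ?_⟩
  · intro x
    have hd : hz.integralPowerBasis.dim = 2 := by
      rw [IsPrimitiveRoot.integralPowerBasis_dim]; rfl
    have := hz.integralPowerBasis.basis.sum_repr x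
    rw [← Equiv.sum_comp (finCongr hd.symm), Fin.sum_univ_two] at this
    simp [PowerBasis.basis_eq_pow] at this
    exact ⟨_, _, this.symm⟩
  · intro w hw
    let σ0 : CyclotomicField 3 ℚ →+* ℂ := Classical.arbitrary _
    let σ1 : Eisenstein →+* ℂ := σ0.comp (algebraMap _ _)
    have hi : Function.Injective σ1 :=
      σ0.injective.comp NumberField.RingOfIntegers.coe_injective
    have h1 := congrArg σ1 h0
    simp only [map_add, map_pow, map_one, map_zero] at h1
    have : (σ1 hz.toInteger - w) * (σ1 hz.toInteger - w ^ 2) = 0 := by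
      linear_combination h1 + (w - 1 - σ1 hz.toInteger) * hw
    rcases mul_eq_zero.1 this with e | e
    · exact ⟨σ1, hi, sub_eq_zero.1 e⟩
    · refine ⟨(starRingEnd ℂ).comp σ1, (starRingEnd ℂ).injective.comp hi, ?_⟩
      obtain ⟨r1, r2⟩ := w_re_im hw
      rw [RingHom.comp_apply, sub_eq_zero.1 e]
      have : w ^ 2 = -1 - w := by linear_combination hw
      rw [this]
      apply Complex.ext
      · simp [r1]; norm_num
      · simp
  · apply Set.finite_univ_iff.1
    refine (List.finite_toSet _).subset (fun u _ => IsCyclotomicExtension.Rat.Three.Units.mem hz u)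

/-- `PSL(2, ℤ[ω])` has exactly two characters of Zariski-dense representations
into `PSL(2, ℂ)`: every representation with Zariski-dense image (equivalently,
image not virtually solvable) is conjugate to the homomorphism induced by one
of the two ring embeddings `ℤ[ω] → ℂ`. -/
theorem bianchi_two_characters (ρ : PSL2 Eisenstein →* PSL2 ℂ)
    (hzar : ¬ VirtuallySolvable ρ.range) :
    ∃ σ : Eisenstein →+* ℂ, Function.Injective σ ∧
      ∃ g : PSL2 ℂ, ∀ x : PSL2 Eisenstein, ρ x = g * PSL2Map σ x * g⁻¹ := by
  obtain ⟨ζ, h, hrep, hσ, hfin⟩ := eis_facts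
  obtain ⟨w, hw⟩ := exists_w
  let π : SLt Eisenstein →* PSL2 Eisenstein := QuotientGroup.mk' _
  have hπ : Function.Surjective π := QuotientGroup.mk'_surjective _
  have hf : ¬ (Set.range (ρ.comp π)).Finite := by
    intro hf
    apply hzar
    have : Set.range (ρ.comp π) = Set.range ρ := by
      rw [MonoidHom.coe_comp]; exact hπ.range_comp _
    rw [this] at hf
    have : Finite ρ.range := hf.to_subtype
    exact ⟨⊥, (inferInstance : Group.IsSolvable (⊥ : Subgroup ρ.range)), inferInstance⟩
  obtain ⟨σ, hi, g, hg⟩ := main_gen h hrep hσ hw (ρ.comp π) hf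
  refine ⟨σ, hi, g, fun x => ?_⟩
  obtain ⟨A, rfl⟩ := hπ x
  exact hg A
end

section
/- Let K and K' be number fields and let τ be an injective map from the set of finite places of K' to the set of finite places of K (i.e. from the height-one prime spectrum of 𝓞_{K'} to that of 𝓞_K) such that for every finite place w of K' the completion K'_w is isomorphic to K_{τ(w)} as a topological field (there is a ring isomorphism which is a homeomorphism). Then τ is a bijection. -/
open IsDedekindDomain

namespace FPB
open NumberField WithZero

section loc
variable {K : Type} [Field K] [NumberField K] (v : HeightOneSpectrum (𝓞 K))

lemma nilp_iff (x : v.adicCompletion K) :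
    Filter.Tendsto (fun n : ℕ => x ^ n) Filter.atTop (nhds 0) ↔ Valued.v x < 1 := by
  rw [show Valued.v x < 1 ↔ ‖x‖ < 1 from (Valued.toNormedField.norm_lt_one_iff).symm]
  have h2 := tendsto_pow_atTop_nhds_zero_iff_norm_lt_one (x := x)
  exact h2

lemma val_algebraMap (r : 𝓞 K) :
    Valued.v (algebraMap (𝓞 K) (v.adicCompletion K) r) = v.intValuation r := by
  rw [← HeightOneSpectrum.valuation_of_algebraMap (K := K)]
  exact HeightOneSpectrum.valuedAdicCompletion_eq_valuation v r

lemma approx (x : v.adicCompletion K) (hx : Valued.v x ≤ 1) :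
    ∃ r : 𝓞 K, Valued.v (x - algebraMap (𝓞 K) (v.adicCompletion K) r) < 1 := by
  have hd := HeightOneSpectrum.denseRange_algebraMap K v
  have ho : IsOpen {y : v.adicCompletion K | Valued.v (x - y) < 1} := by
    have h1 : IsOpen {y : v.adicCompletion K | Valued.v y < 1} := by
      have : {y : v.adicCompletion K | Valued.v y < 1} = {y | ‖y‖ < 1} := by
        ext y; exact (Valued.toNormedField.norm_lt_one_iff (x := y)).symm
      rw [this]
      exact isOpen_lt continuous_norm continuous_const
    exact h1.preimage (f := fun y => x - y) (by fun_prop)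
  obtain ⟨k, hk⟩ := hd.exists_mem_open ho ⟨x, by simp⟩
  have hk1 : v.valuation K k ≤ 1 := by
    rw [← HeightOneSpectrum.valuedAdicCompletion_eq_valuation' v k]
    have : (algebraMap K (v.adicCompletion K) k) = x - (x - algebraMap K (v.adicCompletion K) k) := by
      ring
    change Valued.v (algebraMap K (v.adicCompletion K) k) ≤ 1
    rw [this]
    exact (Valuation.map_sub _ _ _).trans (max_le hx (le_of_lt hk))
  obtain ⟨a, ha⟩ := HeightOneSpectrum.exists_valuation_sub_lt_of_integer v hk1 1
  refine ⟨a, ?_⟩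
  have h2 : x - algebraMap (𝓞 K) (v.adicCompletion K) a
      = (x - algebraMap K (v.adicCompletion K) k) -
        algebraMap K (v.adicCompletion K) (algebraMap (𝓞 K) K a - k) := by
    rw [map_sub, ← IsScalarTower.algebraMap_apply]; ring
  rw [h2]
  refine lt_of_le_of_lt (Valuation.map_sub _ _ _) (max_lt hk ?_)
  have : Valued.v (algebraMap K (v.adicCompletion K) (algebraMap (𝓞 K) K a - k)) = _ :=
    HeightOneSpectrum.valuedAdicCompletion_eq_valuation' v (algebraMap (𝓞 K) K a - k)
  rw [this]; simpa using ha

end loc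

section iso
variable {K K' : Type} [Field K] [NumberField K] [Field K'] [NumberField K']
  {v : HeightOneSpectrum (𝓞 K)} {w : HeightOneSpectrum (𝓞 K')}

lemma lt_one_of (e : w.adicCompletion K' ≃+* v.adicCompletion K) (he : Continuous e)
    (x : w.adicCompletion K') (hx : Valued.v x < 1) : Valued.v (e x) < 1 := by
  rw [← nilp_iff] at hx ⊢
  have := (he.tendsto 0).comp hx
  simpa [Function.comp_def] using this

lemma lt_one_iff (e : w.adicCompletion K' ≃+* v.adicCompletion K) (he : Continuous e)
    (he' : Continuous e.symm)
    (x : w.adicCompletion K') : Valued.v (e x) < 1 ↔ Valued.v x < 1 :=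
  ⟨fun h => by simpa using lt_one_of e.symm he' _ h, lt_one_of e he x⟩

lemma le_one_iff (e : w.adicCompletion K' ≃+* v.adicCompletion K) (he : Continuous e)
    (he' : Continuous e.symm)
    (x : w.adicCompletion K') : Valued.v (e x) ≤ 1 ↔ Valued.v x ≤ 1 := by
  by_cases hx : x = 0
  · simp [hx]
  have h := lt_one_iff e he he' x⁻¹
  have h1 : Valued.v x ≠ 0 := by simpa using hx
  have h2 : Valued.v (e x) ≠ 0 := by simpa using hx
  rw [map_inv₀, map_inv₀, map_inv₀, inv_lt_one₀ (zero_lt_iff.2 h1),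
    inv_lt_one₀ (zero_lt_iff.2 h2)] at h
  rw [← not_lt, h, not_lt]

lemma norm_le (e : w.adicCompletion K' ≃+* v.adicCompletion K) (he : Continuous e)
    (he' : Continuous e.symm) : Ideal.absNorm w.asIdeal ≤ Ideal.absNorm v.asIdeal := by
  have key : ∀ r : 𝓞 K', ∃ s : 𝓞 K, Valued.v (e (algebraMap (𝓞 K') (w.adicCompletion K') r)
      - algebraMap (𝓞 K) (v.adicCompletion K) s) < 1 := fun r => by
    apply approx
    rw [le_one_iff e he he', val_algebraMap]
    exact w.intValuation_le_one r
  choose g hg using key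
  rw [Ideal.absNorm_apply, Ideal.absNorm_apply, Submodule.cardQuot_apply, Submodule.cardQuot_apply]
  have : Finite (𝓞 K ⧸ v.asIdeal) := Ideal.finiteQuotientOfFreeOfNeBot _ v.ne_bot
  refine Nat.card_le_card_of_injective
    (fun q : 𝓞 K' ⧸ w.asIdeal => (Ideal.Quotient.mk v.asIdeal (g q.out) : 𝓞 K ⧸ v.asIdeal)) ?_
  intro q q' h
  simp only at h
  rw [Ideal.Quotient.eq, ← HeightOneSpectrum.intValuation_lt_one_iff_mem, ← val_algebraMap,
    map_sub] at h
  set r : 𝓞 K' := q.out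
  set r' : 𝓞 K' := q'.out
  have h3 : Valued.v (e (algebraMap (𝓞 K') (w.adicCompletion K') (r - r'))) < 1 := by
    have : e (algebraMap (𝓞 K') (w.adicCompletion K') (r - r')) =
      (e (algebraMap (𝓞 K') (w.adicCompletion K') r) - algebraMap (𝓞 K) (v.adicCompletion K) (g r))
      - (e (algebraMap (𝓞 K') (w.adicCompletion K') r')
        - algebraMap (𝓞 K) (v.adicCompletion K) (g r'))
      + (algebraMap (𝓞 K) (v.adicCompletion K) (g r) -
        algebraMap (𝓞 K) (v.adicCompletion K) (g r')) := by
      rw [map_sub, map_sub]; ring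
    rw [this]
    refine lt_of_le_of_lt (Valuation.map_add _ _ _) (max_lt ?_ h)
    exact lt_of_le_of_lt (Valuation.map_sub _ _ _) (max_lt (hg r) (hg r'))
  rw [lt_one_iff e he he', val_algebraMap, HeightOneSpectrum.intValuation_lt_one_iff_mem,
    ← Ideal.Quotient.eq] at h3
  have e1 : Ideal.Quotient.mk w.asIdeal r = q := Quotient.out_eq' q
  have e2 : Ideal.Quotient.mk w.asIdeal r' = q' := Quotient.out_eq' q'
  rw [e1, e2] at h3
  exact h3

/-- multiplicity of v in the ideal I -/
noncomputable def mu (v : HeightOneSpectrum (𝓞 K)) (I : Ideal (𝓞 K)) : ℕ :=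
  (Associates.mk v.asIdeal).count (Associates.mk I).factors

lemma val_nat (p : ℕ) (hp : p ≠ 0) :
    Valued.v ((p : v.adicCompletion K)) = exp (-(mu v (Ideal.span {(p : 𝓞 K)}) : ℤ)) := by
  have := val_algebraMap v (p : 𝓞 K)
  rw [map_natCast] at this
  rw [this, HeightOneSpectrum.intValuation_if_neg _ (by exact_mod_cast hp)]
  rfl

lemma le_exp_of_lt_one {x : ℤᵐ⁰} (h : x < 1) : x ≤ exp (-1 : ℤ) := by
  by_cases hx : x = 0
  · simp [hx]
  · rw [← log_le_iff_le_exp hx]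
    have : log x < 0 := by
      rw [log_lt_iff_lt_exp hx]; simpa using h
    omega

lemma mu_eq (e : w.adicCompletion K' ≃+* v.adicCompletion K) (he : Continuous e)
    (he' : Continuous e.symm) (p : ℕ) (hp : p ≠ 0) :
    mu w (Ideal.span {(p : 𝓞 K')}) = mu v (Ideal.span {(p : 𝓞 K)}) := by
  obtain ⟨π, hπ⟩ := HeightOneSpectrum.valuedAdicCompletion_surjective K' w (exp (-1 : ℤ))
  obtain ⟨ρ, hρ⟩ := HeightOneSpectrum.valuedAdicCompletion_surjective K v (exp (-1 : ℤ))
  have lt1 : (exp (-1 : ℤ) : ℤᵐ⁰) < 1 := by rw [← exp_zero, exp_lt_exp]; norm_num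
  have hπ0 : π ≠ 0 := by rintro rfl; rw [map_zero] at hπ; exact exp_ne_zero hπ.symm
  have hρ0 : ρ ≠ 0 := by rintro rfl; rw [map_zero] at hρ; exact exp_ne_zero hρ.symm
  have h1 : Valued.v (e π) ≤ exp (-1 : ℤ) :=
    le_exp_of_lt_one (lt_one_of e he π (hπ ▸ lt1))
  have h2 : Valued.v (e.symm ρ) ≤ exp (-1 : ℤ) :=
    le_exp_of_lt_one (lt_one_of e.symm he' ρ (hρ ▸ lt1))
  have h3 : Valued.v (ρ / e π) ≤ 1 := by
    have : ρ / e π = e (e.symm ρ / π) := by simp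
    rw [this, le_one_iff e he he', map_div₀, hπ]
    exact div_le_one_of_le₀ h2 zero_le
  have h4 : Valued.v (e π) = exp (-1 : ℤ) := by
    refine le_antisymm h1 ?_
    rw [map_div₀, hρ, div_le_one₀ (zero_lt_iff.2 (by simpa using hπ0))] at h3
    exact h3
  set k := mu w (Ideal.span {(p : 𝓞 K')})
  have hk : Valued.v ((p : w.adicCompletion K') / π ^ k) = 1 := by
    rw [map_div₀, map_pow, hπ, val_nat p hp, ← exp_nsmul, ← exp_sub]
    simp [k]
  have hk' : Valued.v (e ((p : w.adicCompletion K') / π ^ k)) = 1 := by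
    refine le_antisymm ((le_one_iff e he he' _).2 hk.le) (not_lt.1 ?_)
    rw [lt_one_iff e he he', hk]; exact lt_irrefl _
  rw [map_div₀, map_div₀, map_pow, map_pow, h4, map_natCast, val_nat p hp, ← exp_nsmul, ← exp_sub,
    ← exp_zero, exp_inj] at hk'
  simp at hk'
  omega

end iso
end FPB
namespace FPB
open NumberField

section fac
variable {K : Type} [Field K] [NumberField K]

/-- The ideal with given factorization. -/
noncomputable def phi (f : HeightOneSpectrum (𝓞 K) →₀ ℕ) : Ideal (𝓞 K) :=
  f.prod fun v k => v.asIdeal ^ k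

/-- Its norm. -/
noncomputable def nm (f : HeightOneSpectrum (𝓞 K) →₀ ℕ) : ℕ :=
  f.prod fun v k => Ideal.absNorm v.asIdeal ^ k

lemma absNorm_phi (f : HeightOneSpectrum (𝓞 K) →₀ ℕ) : Ideal.absNorm (phi f) = nm f := by
  simp [phi, nm, Finsupp.prod, map_prod]

lemma phi_add (f g : HeightOneSpectrum (𝓞 K) →₀ ℕ) : phi (f + g) = phi f * phi g := by
  classical
  exact Finsupp.prod_add_index' (by simp) (by intros; rw [pow_add])

lemma phi_ne_zero (f : HeightOneSpectrum (𝓞 K) →₀ ℕ) : phi f ≠ 0 :=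
  Finset.prod_ne_zero_iff.2 fun v _ => pow_ne_zero _ v.ne_bot

lemma mu_mul (v : HeightOneSpectrum (𝓞 K)) {I J : Ideal (𝓞 K)} (hI : I ≠ 0) (hJ : J ≠ 0) :
    mu v (I * J) = mu v I + mu v J := by
  unfold mu
  rw [← Associates.mk_mul_mk, Associates.count_mul (Associates.mk_ne_zero.2 hI)
    (Associates.mk_ne_zero.2 hJ) v.associates_irreducible]

lemma mu_pow (v w : HeightOneSpectrum (𝓞 K)) (k : ℕ) :
    mu v (w.asIdeal ^ k) = Finsupp.single w k v := by
  classical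
  unfold mu
  rw [Associates.mk_pow, Associates.count_pow (Associates.mk_ne_zero.2 w.ne_bot)
    v.associates_irreducible, Finsupp.single_apply]
  split_ifs with h
  · subst h
    rw [Associates.count_self w.associates_irreducible, mul_one]
  · rw [Associates.count_eq_zero_of_ne v.associates_irreducible w.associates_irreducible, mul_zero]
    intro h2
    apply h
    ext1
    rw [Associates.mk_eq_mk_iff_associated, associated_iff_eq] at h2
    exact h2.symm

lemma mu_phi (v : HeightOneSpectrum (𝓞 K)) (f : HeightOneSpectrum (𝓞 K) →₀ ℕ) :
    mu v (phi f) = f v := by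
  classical
  induction f using Finsupp.induction_linear with
  | zero =>
    have := mu_pow v v 0
    simpa [phi] using this
  | add f g hf hg => rw [phi_add, mu_mul v (phi_ne_zero _) (phi_ne_zero _), hf, hg]; rfl
  | single w k =>
    rw [← mu_pow v w k, phi, Finsupp.prod_single_index (by simp)]

lemma exists_phi {I : Ideal (𝓞 K)} (hI : I ≠ 0) : ∃ f, phi f = I := by
  have hfin : {v : HeightOneSpectrum (𝓞 K) | mu v I ≠ 0}.Finite := by
    have := Associates.finite_factors hI
    rw [Filter.eventually_cofinite] at this
    refine this.subset ?_
    intro v hv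
    simpa [mu] using hv
  refine ⟨Finsupp.onFinset hfin.toFinset (fun v => mu v I) (by simp), ?_⟩
  conv_rhs => rw [← Ideal.finprod_heightOneSpectrum_factorization hI]
  rw [phi, Finsupp.onFinset_prod _ (by simp), finprod_eq_prod_of_mulSupport_subset]
  · rfl
  · intro v hv
    simp only [Function.mem_mulSupport, HeightOneSpectrum.maxPowDividing] at hv
    simp only [Set.Finite.coe_toFinset, Set.mem_ofPred_eq]
    intro h
    apply hv
    rw [show (Associates.mk v.asIdeal).count (Associates.mk I).factors = 0 from h, pow_zero]

lemma phi_inj : Function.Injective (phi (K := K)) := by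
  intro f g h
  ext v
  rw [← mu_phi, h, mu_phi]

lemma nm_ne_zero (f : HeightOneSpectrum (𝓞 K) →₀ ℕ) : nm f ≠ 0 := by
  rw [← absNorm_phi, Ne, Ideal.absNorm_eq_zero_iff]; exact phi_ne_zero f

lemma card_fiber (n : ℕ) (hn : n ≠ 0) :
    ENat.card (nm (K := K) ⁻¹' {n}) = Nat.card {I : Ideal (𝓞 K) // Ideal.absNorm I = n} := by
  have e : (nm (K := K) ⁻¹' {n}) ≃ {I : Ideal (𝓞 K) // Ideal.absNorm I = n} := by
    refine Equiv.ofBijective (fun f => ⟨phi f.1, by rw [absNorm_phi]; exact f.2⟩) ⟨?_, ?_⟩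
    · intro f g h
      exact Subtype.ext (phi_inj (congrArg Subtype.val h))
    · rintro ⟨I, hI⟩
      obtain ⟨f, rfl⟩ := exists_phi (I := I) (by
        rintro rfl
        apply hn; rw [← hI]; simp)
      exact ⟨⟨f, by rw [← hI, absNorm_phi]; rfl⟩, rfl⟩
  have : Finite {I : Ideal (𝓞 K) // Ideal.absNorm I = n} := Ideal.finite_setOfPred_absNorm_eq n
  rw [ENat.card_congr e, ENat.card_eq_coe_natCard]

end fac

section euler
open ENNReal

/-- Sum over monomials -/
noncomputable def E {V : Type} (x : V → ℝ≥0∞) : ℝ≥0∞ :=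
  ∑' f : V →₀ ℕ, f.prod fun v k => x v ^ k

lemma E_lower {V V' : Type} (x : V → ℝ≥0∞) (τ : V' → V) (hτ : Function.Injective τ)
    (S : Finset V) (hS : ∀ v ∈ S, v ∉ Set.range τ) :
    E (x ∘ τ) * ∑ v ∈ S, x v ≤ E x := by
  classical
  have h1 : E (x ∘ τ) * ∑ v ∈ S, x v = ∑' q : (V' →₀ ℕ) × S,
      (q.1.prod fun v k => x (τ v) ^ k) * x q.2 := by
    rw [ENNReal.tsum_prod', E, ← ENNReal.tsum_mul_right]
    refine tsum_congr fun f => ?_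
    dsimp only
    rw [ENNReal.tsum_mul_left, tsum_fintype, Finset.sum_coe_sort S x]
    rfl
  rw [h1, E]
  let F : (V' →₀ ℕ) × S → (V →₀ ℕ) := fun q => q.1.mapDomain τ + Finsupp.single q.2.1 1
  have hF : Function.Injective F := by
    rintro ⟨f, s⟩ ⟨g, t⟩ h
    have hfg : f = g := by
      ext v
      have := DFunLike.congr_fun h (τ v)
      simp only [F, Finsupp.add_apply, Finsupp.mapDomain_apply hτ] at this
      rwa [Finsupp.single_eq_of_ne (fun h => hS _ s.2 ⟨v, h⟩),
        Finsupp.single_eq_of_ne (fun h => hS _ t.2 ⟨v, h⟩), add_zero, add_zero] at this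
    subst hfg
    have h2 : Finsupp.single s.1 1 = Finsupp.single t.1 1 := add_left_cancel h
    rw [Finsupp.single_left_inj one_ne_zero] at h2
    rw [Subtype.ext h2]
  refine le_trans (le_of_eq (tsum_congr ?_)) (ENNReal.tsum_comp_le_tsum_of_injective hF _)
  rintro ⟨f, s⟩
  simp only [F]
  rw [Finsupp.prod_add_index' (by simp) (by intros; rw [pow_add]),
    Finsupp.prod_mapDomain_index (by simp) (by intros; rw [pow_add]),
    Finsupp.prod_single_index (by simp), pow_one]

lemma geom_le (y : ℝ) (h0 : 0 ≤ y) (h1 : y ≤ 1 / 2) (N : ℕ) :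
    ∑ k ∈ Finset.range N, y ^ k ≤ Real.exp (2 * y) := by
  have h2 : ∑ k ∈ Finset.range N, y ^ k ≤ (1 - y)⁻¹ := by
    rw [← tsum_geometric_of_lt_one h0 (by linarith)]
    exact (summable_geometric_of_lt_one h0 (by linarith)).sum_le_tsum _ (fun _ _ => by positivity)
  refine h2.trans ?_
  have h3 : (1 - y)⁻¹ ≤ 1 + 2 * y := by
    rw [inv_le_iff_one_le_mul₀ (by linarith)]; nlinarith
  have := Real.add_one_le_exp (2 * y)
  linarith

lemma E_upper {V : Type} (x : V → ℝ≥0∞) (hx : ∀ v, x v ≤ 1 / 2) (hs : ∑' v, x v ≠ ∞) :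
    E x ≤ ENNReal.ofReal (Real.exp (2 * (∑' v, x v).toReal)) := by
  classical
  rw [E, ENNReal.tsum_eq_iSup_sum]
  refine iSup_le fun F => ?_
  let T : Finset V := F.biUnion fun f => f.support
  let N : ℕ := (F.sup fun f => T.sup f) + 1
  have hx' : ∀ v, x v ≠ ∞ := fun v => ne_top_of_le_ne_top (by simp) (hx v)
  have step : ∑ f ∈ F, (f.prod fun v k => x v ^ k) ≤
      ∏ v : T, ∑ k ∈ Finset.range N, x v ^ k := by
    rw [Finset.prod_univ_sum]
    refine le_of_eq_of_le (Finset.sum_congr rfl (g := fun f => ∏ v : T, x v ^ (f v)) ?_) ?_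
    · intro f hf
      rw [Finset.prod_coe_sort T (fun v => x v ^ f v)]
      refine Finsupp.prod_of_support_subset _ ?_ _ (by simp)
      exact Finset.subset_biUnion_of_mem (fun f : V →₀ ℕ => f.support) hf
    · let G : (V →₀ ℕ) → (T → ℕ) := fun f v => f v
      have hG : Set.InjOn G F := by
        intro f hf g hg h
        ext v
        by_cases hv : v ∈ T
        · exact congrFun h ⟨v, hv⟩
        · have hf' : v ∉ f.support := fun h => hv (Finset.mem_biUnion.2 ⟨f, hf, h⟩)
          have hg' : v ∉ g.support := fun h => hv (Finset.mem_biUnion.2 ⟨g, hg, h⟩)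
          rw [Finsupp.notMem_support_iff.1 hf', Finsupp.notMem_support_iff.1 hg']
      rw [← Finset.sum_image (f := fun g : T → ℕ => ∏ v : T, x v ^ (g v)) hG]
      refine Finset.sum_le_sum_of_subset ?_
      intro g hg
      obtain ⟨f, hf, rfl⟩ := Finset.mem_image.1 hg
      rw [Fintype.mem_piFinset]
      intro v
      rw [Finset.mem_range, Nat.lt_succ_iff]
      exact (Finset.le_sup (f := f) v.2).trans
        (Finset.le_sup (f := fun f : V →₀ ℕ => T.sup f) hf)
  refine step.trans ?_
  have each : ∀ v : V, ∑ k ∈ Finset.range N, x v ^ k ≤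
      ENNReal.ofReal (Real.exp (2 * (x v).toReal)) := by
    intro v
    have h1 : (x v).toReal ≤ 1 / 2 := by
      have := ENNReal.toReal_mono (by simp) (hx v)
      simpa using this
    refine le_of_eq_of_le ?_ (ENNReal.ofReal_le_ofReal
      (geom_le (x v).toReal ENNReal.toReal_nonneg h1 N))
    rw [ENNReal.ofReal_sum_of_nonneg (fun _ _ => by positivity)]
    refine Finset.sum_congr rfl fun k _ => ?_
    rw [ENNReal.ofReal_pow ENNReal.toReal_nonneg, ENNReal.ofReal_toReal (hx' v)]
  refine (Finset.prod_le_prod' fun (v : T) _ => each v).trans ?_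
  rw [← ENNReal.ofReal_prod_of_nonneg (fun _ _ => (Real.exp_pos _).le), ← Real.exp_sum]
  refine ENNReal.ofReal_le_ofReal (Real.exp_le_exp.2 ?_)
  rw [← Finset.mul_sum, Finset.sum_coe_sort T (fun v => (x v).toReal),
    ← ENNReal.toReal_sum (fun v _ => hx' v)]
  have := ENNReal.toReal_mono hs (ENNReal.sum_le_tsum (f := x) T)
  linarith

end euler
end FPB
namespace FPB
open NumberField ENNReal Filter Topology

section zeta
variable (K : Type) [Field K] [NumberField K]

/-- local term -/
noncomputable def xs (s : ℝ) (v : HeightOneSpectrum (𝓞 K)) : ℝ≥0∞ :=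
  (Ideal.absNorm v.asIdeal : ℝ≥0∞) ^ (-s)

/-- n-th term -/
noncomputable def tt (s : ℝ) (n : ℕ) : ℝ :=
  if n = 0 then 0 else (Nat.card {I : Ideal (𝓞 K) // Ideal.absNorm I = n} : ℝ) / (n : ℝ) ^ s

lemma tt_nonneg (s : ℝ) (n : ℕ) : 0 ≤ tt K s n := by
  unfold tt; split_ifs <;> positivity

lemma E_eq (s : ℝ) : E (xs K s) = ∑' n, ENNReal.ofReal (tt K s n) := by
  have h1 : E (xs K s) = ∑' f : HeightOneSpectrum (𝓞 K) →₀ ℕ, (nm f : ℝ≥0∞) ^ (-s) := by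
    refine tsum_congr fun f => ?_
    rw [nm, Finsupp.prod, Finsupp.prod, Nat.cast_prod,
      ← ENNReal.prod_rpow_of_ne_top (by simp)]
    refine Finset.prod_congr rfl fun v _ => ?_
    rw [xs, Nat.cast_pow, ← ENNReal.rpow_natCast, ← ENNReal.rpow_natCast, ← ENNReal.rpow_mul,
      ← ENNReal.rpow_mul, mul_comm]
  rw [h1, ← ENNReal.tsum_fiberwise _ nm]
  refine tsum_congr fun n => ?_
  by_cases hn : n = 0
  · subst hn
    have : IsEmpty (nm (K := K) ⁻¹' {0}) := ⟨fun f => nm_ne_zero f.1 f.2⟩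
    simp [tt]
  · have : ∀ b : (nm (K := K) ⁻¹' {n}), (nm b.1 : ℝ≥0∞) ^ (-s) = (n : ℝ≥0∞) ^ (-s) := by
      intro b; rw [show nm b.1 = n from b.2]
    rw [tsum_congr this, ENNReal.tsum_const, card_fiber n hn, tt, if_neg hn, div_eq_mul_inv,
      ENNReal.ofReal_mul (by positivity), ← Real.rpow_neg (by positivity),
      ← ENNReal.ofReal_rpow_of_pos (by positivity)]
    simp

lemma zeta_eq (s : ℝ) : dedekindZeta K s = ((∑' n, tt K s n : ℝ) : ℂ) := by
  rw [dedekindZeta, LSeries, Complex.ofReal_tsum]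
  refine tsum_congr fun n => ?_
  rw [LSeries.term_def, tt]
  split_ifs with h
  · simp
  · push_cast
    rw [Complex.ofReal_cpow (by positivity)]
    simp

lemma tendsto_E : Tendsto (fun s : ℝ => ENNReal.ofReal (s - 1) * E (xs K s)) (𝓝[>] 1)
    (𝓝 (ENNReal.ofReal (dedekindZeta_residue K))) := by
  have h1 := tendsto_sub_one_mul_dedekindZeta_nhdsGT K
  have h2 : Tendsto (fun s : ℝ => (s - 1) * ∑' n, tt K s n) (𝓝[>] 1)
      (𝓝 (dedekindZeta_residue K)) := by
    have := (Complex.continuous_re.tendsto _).comp h1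
    rw [Complex.ofReal_re] at this
    refine this.congr fun s => ?_
    simp only [Function.comp]
    rw [zeta_eq, ← Complex.ofReal_one, ← Complex.ofReal_sub, ← Complex.ofReal_mul,
      Complex.ofReal_re]
  have h3 := h2.eventually (lt_mem_nhds (dedekindZeta_residue_pos K))
  refine (ENNReal.tendsto_ofReal h2).congr' ?_
  filter_upwards [h3, self_mem_nhdsWithin] with s hs hs1
  have hsum : Summable (tt K s) := by
    by_contra h
    rw [tsum_eq_zero_of_not_summable h] at hs
    simp at hs
  rw [E_eq, ← ENNReal.ofReal_tsum_of_nonneg (tt_nonneg K s) hsum,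
    ENNReal.ofReal_mul (sub_nonneg.2 (le_of_lt hs1))]

lemma tendsto_xs (v : HeightOneSpectrum (𝓞 K)) :
    Tendsto (fun s : ℝ => xs K s v) (𝓝[>] 1) (𝓝 (xs K 1 v)) := by
  unfold xs
  refine Tendsto.mono_left ?_ nhdsWithin_le_nhds
  have h := HeightOneSpectrum.one_lt_absNorm v
  have h0 : (0 : ℝ) < (Ideal.absNorm v.asIdeal : ℝ) := by exact_mod_cast (by omega)
  have e : ∀ s : ℝ, (Ideal.absNorm v.asIdeal : ℝ≥0∞) ^ (-s) =
      ENNReal.ofReal ((Ideal.absNorm v.asIdeal : ℝ) ^ (-s)) := by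
    intro s
    rw [← ENNReal.ofReal_rpow_of_pos h0]; simp
  simp only [e]
  refine ENNReal.tendsto_ofReal ?_
  exact ((Real.continuous_const_rpow h0.ne').comp continuous_neg).tendsto 1

lemma xs_mono {s : ℝ} (hs : 1 ≤ s) (v : HeightOneSpectrum (𝓞 K)) : xs K s v ≤ xs K 1 v := by
  have h := HeightOneSpectrum.one_lt_absNorm v
  refine ENNReal.rpow_le_rpow_of_exponent_le (by exact_mod_cast h.le) (by linarith)

lemma xs_one_le (v : HeightOneSpectrum (𝓞 K)) : xs K 1 v ≤ 1 / 2 := by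
  have h : 2 ≤ Ideal.absNorm v.asIdeal := HeightOneSpectrum.one_lt_absNorm v
  rw [xs, ENNReal.rpow_neg_one, one_div]
  exact ENNReal.inv_le_inv.2 (by exact_mod_cast h)

/-- The sum of the inverse norms of the primes diverges. -/
lemma sum_primes : ∑' v, xs K 1 v = ∞ := by
  by_contra hfin
  have hle : ∀ s : ℝ, 1 < s → E (xs K s) ≤
      ENNReal.ofReal (Real.exp (2 * (∑' v, xs K 1 v).toReal)) := by
    intro s hs
    refine le_trans ?_ (E_upper (xs K 1) (xs_one_le K) hfin)
    refine ENNReal.tsum_le_tsum fun f => ?_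
    exact Finset.prod_le_prod' fun v _ => pow_le_pow_left' (xs_mono K hs.le v) _
  set C := ENNReal.ofReal (Real.exp (2 * (∑' v, xs K 1 v).toReal))
  have h0 : Tendsto (fun s : ℝ => ENNReal.ofReal (s - 1) * C) (𝓝[>] 1) (𝓝 0) := by
    have h1 : Tendsto (fun s : ℝ => ENNReal.ofReal (s - 1)) (𝓝[>] 1) (𝓝 0) := by
      have : Tendsto (fun s : ℝ => s - 1) (𝓝[>] 1) (𝓝 (1 - 1)) :=
        ((continuous_id.sub continuous_const).tendsto 1).mono_left nhdsWithin_le_nhds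
      simpa using ENNReal.tendsto_ofReal this
    simpa using ENNReal.Tendsto.mul_const h1 (Or.inr ENNReal.ofReal_ne_top)
  have h2 : ENNReal.ofReal (dedekindZeta_residue K) ≤ 0 := by
    refine le_of_tendsto_of_tendsto (tendsto_E K) h0 ?_
    filter_upwards [self_mem_nhdsWithin] with s hs
    gcongr
    exact hle s hs
  have := dedekindZeta_residue_pos K
  rw [nonpos_iff_eq_zero, ENNReal.ofReal_eq_zero] at h2
  linarith

end zeta

lemma sum_compl {K K' : Type} [Field K] [NumberField K] [Field K'] [NumberField K']
    (τ : HeightOneSpectrum (𝓞 K') → HeightOneSpectrum (𝓞 K)) (hτ : Function.Injective τ)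
    (hN : ∀ w, Ideal.absNorm (τ w).asIdeal = Ideal.absNorm w.asIdeal) :
    ∑' v : ((Set.range τ)ᶜ : Set (HeightOneSpectrum (𝓞 K))), xs K 1 v ≠ ∞ := by
  set a := ENNReal.ofReal (dedekindZeta_residue K)
  set b := ENNReal.ofReal (dedekindZeta_residue K')
  have hb0 : b ≠ 0 := by
    simpa [b] using dedekindZeta_residue_pos K'
  have hb : b ≠ ∞ := ENNReal.ofReal_ne_top
  have key : ∀ S : Finset ((Set.range τ)ᶜ : Set (HeightOneSpectrum (𝓞 K))),
      b * ∑ v ∈ S, xs K 1 v ≤ a := by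
    intro S
    have hl : Tendsto (fun s : ℝ => (ENNReal.ofReal (s - 1) * E (xs K' s)) * ∑ v ∈ S, xs K s v)
        (𝓝[>] 1) (𝓝 (b * ∑ v ∈ S, xs K 1 v)) := by
      refine ENNReal.Tendsto.mul (tendsto_E K') (Or.inl hb0)
        (tendsto_finsetSum _ fun v _ => tendsto_xs K v) (Or.inr hb)
    refine le_of_tendsto_of_tendsto hl (tendsto_E K) (Eventually.of_forall fun s => ?_)
    dsimp only
    rw [mul_assoc]
    refine mul_le_mul_right ?_ _
    have h := E_lower (xs K s) τ hτ (S.map (Function.Embedding.subtype _)) (by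
      intro v hv
      obtain ⟨u, _, rfl⟩ := Finset.mem_map.1 hv
      exact u.2)
    rw [Finset.sum_map] at h
    have e : xs K s ∘ τ = xs K' s := by
      ext w; simp [xs, hN]
    rw [e] at h
    exact h
  have : ∑' v : ((Set.range τ)ᶜ : Set (HeightOneSpectrum (𝓞 K))), xs K 1 v ≤ a / b := by
    rw [ENNReal.tsum_eq_iSup_sum]
    refine iSup_le fun S => ?_
    rw [ENNReal.le_div_iff_mul_le (Or.inl hb0) (Or.inl hb), mul_comm]
    exact key S
  exact ne_top_of_le_ne_top (ENNReal.div_ne_top ENNReal.ofReal_ne_top hb0) this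

end FPB
namespace FPB
open NumberField ENNReal

section primes
variable {K : Type} [Field K] [NumberField K]

lemma liesOver {p : ℕ} (hp : p.Prime) (v : HeightOneSpectrum (𝓞 K))
    (h : (p : 𝓞 K) ∈ v.asIdeal) : v.asIdeal.LiesOver (Ideal.span {(p : ℤ)}) := by
  have hm : (Ideal.span {(p : ℤ)}).IsMaximal :=
    (Ideal.isPrime_of_prime (Ideal.prime_span_singleton_iff.mpr
      (Nat.prime_iff_prime_int.mp hp))).isMaximal (by simp [hp.ne_zero])
  have := v.isPrime
  refine ⟨hm.eq_of_le (Ideal.IsPrime.under ℤ v.asIdeal).ne_top ?_⟩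
  rw [Ideal.span_singleton_le_iff_mem, Ideal.mem_comap]
  simpa using h

lemma absNorm_eq_pow {p : ℕ} (hp : p.Prime) (v : HeightOneSpectrum (𝓞 K))
    (h : (p : 𝓞 K) ∈ v.asIdeal) :
    ∃ f, f ≠ 0 ∧ Ideal.absNorm v.asIdeal = p ^ f := by
  have := liesOver hp v h
  refine ⟨_, ?_, Ideal.absNorm_eq_pow_inertiaDeg' v.asIdeal hp⟩
  intro h0
  have h1 := Ideal.absNorm_eq_pow_inertiaDeg' v.asIdeal hp
  rw [h0, pow_zero, Ideal.absNorm_eq_one_iff] at h1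
  exact v.isPrime.ne_top h1

lemma exists_prime (v : HeightOneSpectrum (𝓞 K)) :
    ∃ p : ℕ, p.Prime ∧ (p : 𝓞 K) ∈ v.asIdeal := by
  have h0 : Ideal.absNorm v.asIdeal ≠ 0 := by
    rw [Ne, Ideal.absNorm_eq_zero_iff]; exact v.ne_bot
  have hm := Ideal.absNorm_mem v.asIdeal
  have key : ∀ n : ℕ, n ≠ 0 → (n : 𝓞 K) ∈ v.asIdeal → ∃ p : ℕ, p.Prime ∧ (p : 𝓞 K) ∈ v.asIdeal := by
    intro n
    induction n using Nat.recOnMul with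
    | zero => simp
    | one => intro _ h; exact absurd ((Ideal.eq_top_iff_one _).2 (by simpa using h)) v.isPrime.ne_top
    | prime p hp => intro _ h; exact ⟨p, hp, h⟩
    | mul a b ha hb =>
      intro h h'
      rw [Nat.cast_mul] at h'
      rcases v.isPrime.mem_or_mem h' with h' | h'
      · exact ha (by rintro rfl; simp at h) h'
      · exact hb (by rintro rfl; simp at h) h'
  exact key _ h0 hm

/-- residue characteristic -/
noncomputable def pr (v : HeightOneSpectrum (𝓞 K)) : ℕ := (exists_prime v).choose

lemma pr_prime (v : HeightOneSpectrum (𝓞 K)) : (pr v).Prime := (exists_prime v).choose_spec.1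
lemma pr_mem (v : HeightOneSpectrum (𝓞 K)) : (pr v : 𝓞 K) ∈ v.asIdeal :=
  (exists_prime v).choose_spec.2

lemma pr_unique {p : ℕ} (hp : p.Prime) (v : HeightOneSpectrum (𝓞 K))
    (h : (p : 𝓞 K) ∈ v.asIdeal) : pr v = p := by
  obtain ⟨f, hf, h1⟩ := absNorm_eq_pow hp v h
  obtain ⟨g, hg, h2⟩ := absNorm_eq_pow (pr_prime v) v (pr_mem v)
  rw [h2] at h1
  have : pr v ∣ p ^ f := h1 ▸ dvd_pow_self _ hg
  exact (Nat.prime_dvd_prime_iff_eq (pr_prime v) hp).1 ((pr_prime v).dvd_of_dvd_pow this)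

lemma mu_ne_zero_iff {p : ℕ} (hp : p.Prime) (v : HeightOneSpectrum (𝓞 K)) :
    mu v (Ideal.span {(p : 𝓞 K)}) ≠ 0 ↔ (p : 𝓞 K) ∈ v.asIdeal := by
  rw [← HeightOneSpectrum.intValuation_lt_one_iff_mem,
    HeightOneSpectrum.intValuation_if_neg v (Nat.cast_ne_zero.2 hp.ne_zero)]
  unfold mu
  rw [← WithZero.exp_zero, WithZero.exp_lt_exp]
  omega

lemma span_ne {p : ℕ} (hp : p.Prime) : Ideal.span {(p : 𝓞 K)} ≠ 0 := by
  simp [hp.ne_zero]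

lemma encard_le (K : Type) [Field K] [NumberField K] (p : ℕ) :
    ENat.card ((pr (K := K)) ⁻¹' {p}) ≤ (Module.finrank ℤ (𝓞 K) : ℕ) := by
  by_cases hp : p.Prime
  swap
  · have : IsEmpty ((pr (K := K)) ⁻¹' {p}) := ⟨fun v => hp (by
      have := pr_prime v.1; rwa [show pr v.1 = p from v.2] at this)⟩
    rw [Set.isEmpty_coe_sort] at this
    simp [this]
  obtain ⟨f, hf⟩ := exists_phi (span_ne (K := K) hp)
  have hs : (pr (K := K)) ⁻¹' {p} ⊆ (f.support : Set _) := by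
    intro v hv
    have hv : pr v = p := hv
    have := (mu_ne_zero_iff hp v).2 (hv ▸ pr_mem v)
    rw [← hf, mu_phi] at this
    simpa using this
  change Set.encard _ ≤ _
  refine (Set.encard_le_encard hs).trans ?_
  rw [Set.encard_coe_eq_coe_finsetCard, Nat.cast_le]
  have h1 : nm f = p ^ Module.finrank ℤ (𝓞 K) := by
    rw [← absNorm_phi, hf, Ideal.absNorm_span_natCast]
  rw [← Nat.pow_le_pow_iff_right hp.one_lt, ← h1, nm, Finsupp.prod]
  refine Finset.pow_card_le_prod _ _ _ fun v hv => ?_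
  have hfv : f v ≠ 0 := by simpa using hv
  have hm : (p : 𝓞 K) ∈ v.asIdeal := by
    rw [← mu_ne_zero_iff hp, ← hf, mu_phi]; exact hfv
  obtain ⟨g, hg, h2⟩ := absNorm_eq_pow hp v hm
  rw [h2, ← pow_mul]
  exact Nat.le_self_pow (mul_ne_zero hg hfv) p

lemma fiber {α β : Type} (g : α → β) (d : ℕ) (hd : ∀ b, ENat.card (g ⁻¹' {b}) ≤ d)
    (h : β → ℝ≥0∞) (hh : ∑' b, h b ≠ ∞) : ∑' a, h (g a) ≠ ∞ := by
  rw [← ENNReal.tsum_fiberwise _ g]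
  have : ∀ b, (∑' a : g ⁻¹' {b}, h (g a.1)) ≤ d * h b := by
    intro b
    rw [tsum_congr (fun a : g ⁻¹' {b} => show h (g a.1) = h b by rw [show g a.1 = b from a.2]),
      ENNReal.tsum_const]
    gcongr
    have := ENat.toENNReal_le.2 (hd b)
    simpa using this
  refine ne_top_of_le_ne_top ?_ (ENNReal.tsum_le_tsum this)
  rw [ENNReal.tsum_mul_left]
  exact ENNReal.mul_ne_top (by simp) hh

lemma split {L : Type} [Field L] [NumberField L] [Algebra K L] [IsGalois ℚ L]
    {p : ℕ} (hp : p.Prime) (P : HeightOneSpectrum (𝓞 L)) (hP : (p : 𝓞 L) ∈ P.asIdeal)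
    (hn : Ideal.absNorm P.asIdeal = p) (v : HeightOneSpectrum (𝓞 K))
    (hv : (p : 𝓞 K) ∈ v.asIdeal) : Ideal.absNorm v.asIdeal = p := by
  have := v.isPrime
  have := P.isPrime
  have hm : (Ideal.span {(p : ℤ)}).IsMaximal :=
    (Ideal.isPrime_of_prime (Ideal.prime_span_singleton_iff.mpr
      (Nat.prime_iff_prime_int.mp hp))).isMaximal (by simp [hp.ne_zero])
  obtain ⟨⟨Q, hQ1, hQ2⟩⟩ := v.asIdeal.nonempty_primesOver (S := 𝓞 L)
  have h1 := liesOver hp v hv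
  have h2 := liesOver hp P hP
  have h3 : Q.LiesOver (Ideal.span {(p : ℤ)}) := Ideal.LiesOver.trans Q v.asIdeal _
  have e := Ideal.inertiaDeg_eq_of_isGaloisGroup (Ideal.span {(p : ℤ)}) P.asIdeal Q (L ≃ₐ[ℚ] L)
  have e1 := Ideal.pow_inertiaDeg p P.asIdeal
  have e2 := Ideal.pow_inertiaDeg p Q
  have e3 : Ideal.absNorm Q = p := by rw [← e2, ← e, e1, hn]
  have e4 := Ideal.absNorm_eq_pow_inertiaDeg'_of_liesOver Q v.asIdeal v.isPrime v.ne_bot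
  obtain ⟨f, hf, e5⟩ := absNorm_eq_pow hp v hv
  rw [e3, e5, ← pow_mul] at e4
  have : f * v.asIdeal.inertiaDeg' Q = 1 := by
    apply Nat.pow_right_injective hp.two_le
    simpa using e4.symm
  rw [e5, Nat.eq_one_of_mul_eq_one_right this, pow_one]

end primes
end FPB
namespace FPB
open NumberField ENNReal

section final
variable {K K' : Type} [Field K] [NumberField K] [Field K'] [NumberField K']

lemma decomp (τ : HeightOneSpectrum (𝓞 K') → HeightOneSpectrum (𝓞 K))
    (hτ : Function.Injective τ)
    (hN : ∀ w, Ideal.absNorm (τ w).asIdeal = Ideal.absNorm w.asIdeal)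
    {p : ℕ} (hp : p.Prime)
    (hmu : ∀ w, mu w (Ideal.span {(p : 𝓞 K')}) = mu (τ w) (Ideal.span {(p : 𝓞 K)})) :
    ∃ g : HeightOneSpectrum (𝓞 K) →₀ ℕ,
      p ^ Module.finrank ℤ (𝓞 K) = p ^ Module.finrank ℤ (𝓞 K') * nm g ∧
      ∀ v, g v ≠ 0 ↔ (v ∉ Set.range τ ∧ (p : 𝓞 K) ∈ v.asIdeal) := by
  classical
  obtain ⟨f, hf⟩ := exists_phi (span_ne (K := K) hp)
  obtain ⟨f', hf'⟩ := exists_phi (span_ne (K := K') hp)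
  have hff : ∀ w, f' w = f (τ w) := by
    intro w
    rw [← mu_phi, ← mu_phi, hf, hf', hmu]
  refine ⟨f.filter (fun v => v ∉ Set.range τ), ?_, ?_⟩
  · have hsum : f = f'.mapDomain τ + f.filter (fun v => v ∉ Set.range τ) := by
      ext v
      rw [Finsupp.add_apply]
      by_cases hv : v ∈ Set.range τ
      · obtain ⟨w, rfl⟩ := hv
        rw [Finsupp.mapDomain_apply hτ, hff, Finsupp.filter_apply_neg _ _ (by simp), add_zero]
      · rw [Finsupp.mapDomain_of_notMem_range _ _ hv, Finsupp.filter_apply, if_pos hv, zero_add]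
    have h1 : nm (f'.mapDomain τ) = nm f' := by
      unfold nm
      rw [Finsupp.prod_mapDomain_index_inj hτ]
      simp only [hN]
    rw [← Ideal.absNorm_span_natCast, ← Ideal.absNorm_span_natCast, ← hf, ← hf', absNorm_phi f', ← h1,
      ← absNorm_phi, ← absNorm_phi, ← map_mul, ← phi_add, ← hsum]
  · intro v
    rw [← mu_ne_zero_iff hp, ← hf, mu_phi, Finsupp.filter_apply]
    by_cases hv : v ∈ Set.range τ <;> simp [hv]

lemma exists_v (τ : HeightOneSpectrum (𝓞 K') → HeightOneSpectrum (𝓞 K))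
    (hτ : Function.Injective τ)
    (hN : ∀ w, Ideal.absNorm (τ w).asIdeal = Ideal.absNorm w.asIdeal)
    (hmu : ∀ p : ℕ, p ≠ 0 → ∀ w,
      mu w (Ideal.span {(p : 𝓞 K')}) = mu (τ w) (Ideal.span {(p : 𝓞 K)}))
    (v₀ : HeightOneSpectrum (𝓞 K)) (hv₀ : v₀ ∉ Set.range τ) (p : ℕ) (hp : p.Prime) :
    ∃ v : HeightOneSpectrum (𝓞 K), v ∉ Set.range τ ∧ (p : 𝓞 K) ∈ v.asIdeal := by
  have hne : Module.finrank ℤ (𝓞 K) ≠ Module.finrank ℤ (𝓞 K') := by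
    intro he
    obtain ⟨g, hg, hg'⟩ := decomp τ hτ hN (pr_prime v₀) (hmu _ (pr_prime v₀).ne_zero)
    rw [he] at hg
    have h1 : nm g = 1 := by
      have h2 : 0 < pr v₀ ^ Module.finrank ℤ (𝓞 K') := pow_pos (pr_prime v₀).pos _
      exact Nat.eq_of_mul_eq_mul_left h2 (by rw [← hg, mul_one])
    have h3 : g = 0 := by
      apply phi_inj
      rw [← absNorm_phi, Ideal.absNorm_eq_one_iff] at h1
      rw [h1]
      simp [phi]
    exact (hg' v₀).2 ⟨hv₀, pr_mem v₀⟩ (by simp [h3])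
  obtain ⟨g, hg, hg'⟩ := decomp τ hτ hN hp (hmu _ hp.ne_zero)
  have h0 : g ≠ 0 := by
    rintro rfl
    apply hne
    apply Nat.pow_right_injective hp.two_le
    simpa [nm] using hg
  obtain ⟨v, hv⟩ := Finsupp.ne_iff.1 h0
  exact ⟨v, (hg' v).1 (by simpa using hv)⟩

lemma contra (τ : HeightOneSpectrum (𝓞 K') → HeightOneSpectrum (𝓞 K))
    (hτ : Function.Injective τ)
    (hN : ∀ w, Ideal.absNorm (τ w).asIdeal = Ideal.absNorm w.asIdeal)
    (V : ∀ p : ℕ, p.Prime →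
      ∃ v : HeightOneSpectrum (𝓞 K), v ∉ Set.range τ ∧ (p : 𝓞 K) ∈ v.asIdeal)
    (L : Type) [Field L] [NumberField L] [Algebra K L] [IsGalois ℚ L] : False := by
  choose! V hV1 hV2 using V
  let d := Module.finrank ℤ (𝓞 L)
  let G : HeightOneSpectrum (𝓞 L) → ((Set.range τ)ᶜ : Set (HeightOneSpectrum (𝓞 K))) :=
    fun P => ⟨V (pr P) (pr_prime P), hV1 _ (pr_prime P)⟩
  have hG : ∀ P, pr (G P).1 = pr P := fun P => pr_unique (pr_prime P) _ (hV2 _ (pr_prime P))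
  have s1 : ∑' P : HeightOneSpectrum (𝓞 L), xs K 1 (G P).1 ≠ ∞ := by
    refine fiber G d (fun b => ?_) (fun v => xs K 1 v.1) (sum_compl τ hτ hN)
    refine le_trans ?_ (encard_le L (pr b.1))
    change Set.encard _ ≤ Set.encard _
    refine Set.encard_le_encard ?_
    intro P hP
    have hP : G P = b := hP
    change pr P = pr b.1
    rw [← hP, hG]
  have s2 : ∑' P : HeightOneSpectrum (𝓞 L), ENNReal.ofReal (1 / (pr P : ℝ) ^ 2) ≠ ∞ := by
    refine fiber (pr (K := L)) d (encard_le L) (fun n : ℕ => ENNReal.ofReal (1 / (n : ℝ) ^ 2)) ?_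
    exact (Real.summable_one_div_nat_pow.2 one_lt_two).tsum_ofReal_ne_top
  have key : ∀ P : HeightOneSpectrum (𝓞 L),
      xs L 1 P ≤ ENNReal.ofReal (1 / (pr P : ℝ) ^ 2) + xs K 1 (G P).1 := by
    intro P
    have hp := pr_prime P
    obtain ⟨f, hf, h1⟩ := absNorm_eq_pow hp P (pr_mem P)
    by_cases h : f = 1
    · rw [h, pow_one] at h1
      have := split hp P (pr_mem P) h1 (G P).1 (hV2 _ hp)
      refine le_add_left ?_
      rw [xs, xs, h1, this]
    · refine le_add_right ?_
      have h2 : pr P ^ 2 ≤ Ideal.absNorm P.asIdeal := by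
        rw [h1]; exact Nat.pow_le_pow_right hp.pos (by omega)
      rw [xs, ENNReal.rpow_neg, ENNReal.rpow_one, one_div,
        ENNReal.ofReal_inv_of_pos (by have := hp.pos; positivity), ENNReal.inv_le_inv,
        ENNReal.ofReal_pow (by positivity), ENNReal.ofReal_natCast]
      exact_mod_cast h2
  have := ENNReal.tsum_le_tsum key
  rw [ENNReal.tsum_add, sum_primes L, top_le_iff] at this
  exact ENNReal.add_ne_top.2 ⟨s2, s1⟩ this

end final
end FPB

/-- If `τ` is an injective map from the finite places of a number field `K'`
to the finite places of a number field `K` such that corresponding completions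
are isomorphic as topological fields, then `τ` is a bijection. -/
theorem finite_places_injection_is_bijection
    (K K' : Type) [Field K] [NumberField K] [Field K'] [NumberField K']
    (τ : HeightOneSpectrum (NumberField.RingOfIntegers K') →
         HeightOneSpectrum (NumberField.RingOfIntegers K))
    (hinj : Function.Injective τ)
    (hiso : ∀ w : HeightOneSpectrum (NumberField.RingOfIntegers K'),
      ∃ e : w.adicCompletion K' ≃+* (τ w).adicCompletion K,
        Continuous (e : w.adicCompletion K' → (τ w).adicCompletion K) ∧
        Continuous (e.symm : (τ w).adicCompletion K → w.adicCompletion K')) :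
    Function.Bijective τ := by
  have hN : ∀ w, Ideal.absNorm (τ w).asIdeal = Ideal.absNorm w.asIdeal := by
    intro w
    obtain ⟨e, h1, h2⟩ := hiso w
    exact le_antisymm (FPB.norm_le e.symm h2 h1) (FPB.norm_le e h1 h2)
  refine ⟨hinj, ?_⟩
  by_contra hs
  rw [← Set.range_eq_univ, Set.eq_univ_iff_forall] at hs
  push Not at hs
  obtain ⟨v₀, hv₀⟩ := hs
  have V := FPB.exists_v τ hinj hN (fun p hp w => by
    obtain ⟨e, h1, h2⟩ := hiso w
    exact FPB.mu_eq e h1 h2 p hp) v₀ hv₀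
  have hcl : IsAlgClosure ℚ (AlgebraicClosure K) :=
    ⟨inferInstance, Algebra.IsAlgebraic.trans ℚ K (AlgebraicClosure K)⟩
  have hno : Normal ℚ (AlgebraicClosure K) := IsAlgClosure.normal ℚ _
  let L := IntermediateField.normalClosure ℚ K (AlgebraicClosure K)
  have : NumberField L := { to_charZero := inferInstance, to_finiteDimensional := inferInstance }
  have hn : Normal ℚ L := by
    have h := normalClosure.normal ℚ K (AlgebraicClosure K)
    convert h
    exact Subsingleton.elim _ _
  have : IsGalois ℚ L := { to_isSeparable := inferInstance, to_normal := hn }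
  exact FPB.contra τ hinj hN V L
end

section
/- Let Γ₁ and Γ₂ be finitely generated groups having the same finite quotients. Then for every positive integer d, the number of conjugacy classes of subgroups of index d in Γ₁ equals the number of conjugacy classes of subgroups of index d in Γ₂; moreover, for every d and every n, the number of conjugacy classes of index-d subgroups consisting of exactly n subgroups is the same in Γ₁ and Γ₂. -/
/-- Two groups have the same finite quotients. -/
def SameFiniteQuotients (G : Type*) (H : Type*) [Group G] [Group H] : Prop :=
  ∀ (Q : Type) [Group Q] [Finite Q],
    (∃ f : G →* Q, Function.Surjective f) ↔ ∃ f : H →* Q, Function.Surjective f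

/-- Two subgroups are conjugate. -/
def SubgroupConj (G : Type*) [Group G] (H K : Subgroup G) : Prop :=
  ∃ g : G, Subgroup.map (MulAut.conj g).toMonoidHom H = K

/-- The set of conjugacy classes of subgroups of index `d` in `G`: each class
is the set of subgroups conjugate to some fixed subgroup of index `d`. -/
def conjClassesOfIndex (G : Type*) [Group G] (d : ℕ) : Set (Set (Subgroup G)) :=
  {C | ∃ H : Subgroup G, H.index = d ∧ C = {K | SubgroupConj G H K}}

theorem aux_conj_comap {G Q : Type} [Group G] [Group Q] (f : G →* Q)
    (hf : Function.Surjective f) (H : Subgroup Q) :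
    {K | SubgroupConj G (H.comap f) K} = Subgroup.comap f '' {K | SubgroupConj Q H K} := by
  have key : ∀ g : G, Subgroup.map (MulAut.conj g).toMonoidHom (H.comap f) =
      (Subgroup.map (MulAut.conj (f g)).toMonoidHom H).comap f := by
    intro g
    ext x
    rw [Subgroup.mem_comap]
    refine Subgroup.mem_map_equiv.trans (Iff.trans ?_ Subgroup.mem_map_equiv.symm)
    rw [Subgroup.mem_comap, MulAut.conj_symm_apply, MulAut.conj_symm_apply, map_mul, map_mul,
      map_inv]
  ext K
  constructor
  · rintro ⟨g, rfl⟩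
    exact ⟨_, ⟨f g, rfl⟩, (key g).symm⟩
  · rintro ⟨_, ⟨q, rfl⟩, rfl⟩
    obtain ⟨g, rfl⟩ := hf q
    exact ⟨g, key g⟩

def auxS (G : Type) [Group G] (d : ℕ) (p : ℕ → Prop) : Set (Set (Subgroup G)) :=
  {C | C ∈ conjClassesOfIndex G d ∧ p (Nat.card C)}

theorem aux_inj {G Q : Type} [Group G] [Group Q] (f : G →* Q)
    (hf : Function.Surjective f) :
    Function.Injective (Set.image (Subgroup.comap f)) :=
  Set.image_injective.2 (Subgroup.comap_injective hf)

theorem aux_sub {G Q : Type} [Group G] [Group Q] (f : G →* Q)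
    (hf : Function.Surjective f) (d : ℕ) (p : ℕ → Prop) :
    Set.image (Subgroup.comap f) '' auxS Q d p ⊆ auxS G d p := by
  rintro _ ⟨_, ⟨⟨H, hH, rfl⟩, hp⟩, rfl⟩
  refine ⟨⟨H.comap f, ?_, (aux_conj_comap f hf H).symm⟩, ?_⟩
  · rw [Subgroup.index_comap_of_surjective _ hf, hH]
  · rwa [Nat.card_image_of_injective (Subgroup.comap_injective hf)]

theorem aux_eq {G Q : Type} [Group G] [Group Q] (f : G →* Q)
    (hf : Function.Surjective f) (d : ℕ) (p : ℕ → Prop)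
    (hk : ∀ H : Subgroup G, H.index = d → f.ker ≤ H) :
    Set.image (Subgroup.comap f) '' auxS Q d p = auxS G d p := by
  refine (aux_sub f hf d p).antisymm ?_
  rintro _ ⟨⟨H, hH, rfl⟩, hp⟩
  have e : (H.map f).comap f = H := Subgroup.comap_map_eq_self (hk H hH)
  have e2 := aux_conj_comap f hf (H.map f)
  rw [e] at e2
  refine ⟨{K | SubgroupConj Q (H.map f) K}, ⟨⟨H.map f, ?_, rfl⟩, ?_⟩, e2.symm⟩
  · rw [← Subgroup.index_comap_of_surjective _ hf, e, hH]
  · rwa [e2, Nat.card_image_of_injective (Subgroup.comap_injective hf)] at hp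

theorem aux_finite_hom (G P : Type) [Group G] [Group P] [Group.FG G] [Finite P] :
    Finite (G →* P) := by
  obtain ⟨S, hS⟩ := Group.fg_def.1 (inferInstance : Group.FG G)
  refine Finite.of_injective (fun (f : G →* P) (s : S) => f s) ?_
  intro f g h
  exact MonoidHom.eq_of_eqOn_dense hS (fun x hx => congrFun h ⟨x, hx⟩)

theorem aux_quot (G : Type) [Group G] [Group.FG G] (d : ℕ) (hd : 0 < d) :
    ∃ (Q : Type) (_ : Group Q) (_ : Finite Q) (f : G →* Q), Function.Surjective f ∧
      ∀ H : Subgroup G, H.index = d → f.ker ≤ H := by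
  haveI := aux_finite_hom G (Equiv.Perm (Fin d))
  let F : G →* ((G →* Equiv.Perm (Fin d)) → Equiv.Perm (Fin d)) := MonoidHom.pi (fun φ => φ)
  refine ⟨F.range, inferInstance, inferInstance, F.rangeRestrict,
    F.rangeRestrict_surjective, ?_⟩
  intro H hH x hx
  rw [MonoidHom.ker_rangeRestrict, MonoidHom.mem_ker] at hx
  haveI : Finite (G ⧸ H) := Nat.finite_of_card_ne_zero (by
    change H.index ≠ 0
    omega)
  let e : G ⧸ H ≃ Fin d := Finite.equivFinOfCardEq hH
  let φ : G →* Equiv.Perm (Fin d) :=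
    (e.permCongrHom).toMonoidHom.comp (MulAction.toPermHom G (G ⧸ H))
  have h1 : φ x = 1 := congrFun hx φ
  have h2 : MulAction.toPermHom G (G ⧸ H) x = 1 := by
    apply e.permCongrHom.injective
    rw [map_one]
    exact h1
  apply H.normalCore_le
  rw [Subgroup.normalCore_eq_ker]
  exact h2

theorem aux_le (G G' : Type) [Group G] [Group G'] [Group.FG G] [Group.FG G']
    (h : SameFiniteQuotients G G') (d : ℕ) (hd : 0 < d) (p : ℕ → Prop) :
    Nat.card (auxS G d p) ≤ Nat.card (auxS G' d p) := by
  obtain ⟨Q, _, _, f, hf, hk⟩ := aux_quot G d hd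
  obtain ⟨Q', _, _, f', hf', hk'⟩ := aux_quot G' d hd
  obtain ⟨g, hg⟩ := (h Q).1 ⟨f, hf⟩
  have hfin : (auxS G' d p).Finite := by
    rw [← aux_eq f' hf' d p hk']
    exact (Set.toFinite _).image _
  rw [← aux_eq f hf d p hk, Nat.card_image_of_injective (aux_inj f hf),
    ← Nat.card_image_of_injective (aux_inj g hg)]
  exact Nat.card_mono hfin (aux_sub g hg d p)

theorem aux_card_eq (G G' : Type) [Group G] [Group G'] [Group.FG G] [Group.FG G']
    (h : SameFiniteQuotients G G') (d : ℕ) (hd : 0 < d) (p : ℕ → Prop) :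
    Nat.card (auxS G d p) = Nat.card (auxS G' d p) :=
  le_antisymm (aux_le G G' h d hd p)
    (aux_le G' G (fun Q _ _ => (h Q).symm) d hd p)

/-- Finitely generated groups with the same finite quotients have, for each
positive index `d`, the same number of conjugacy classes of index-`d`
subgroups; moreover, for each `n`, the same number of such classes of size
exactly `n`. -/
theorem conj_class_counts_eq (Γ₁ Γ₂ : Type) [Group Γ₁] [Group Γ₂]
    [Group.FG Γ₁] [Group.FG Γ₂] (hfq : SameFiniteQuotients Γ₁ Γ₂)
    (d : ℕ) (hd : 0 < d) :
    Nat.card (conjClassesOfIndex Γ₁ d) = Nat.card (conjClassesOfIndex Γ₂ d) ∧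
      ∀ n : ℕ,
        Nat.card {C : Set (Subgroup Γ₁) //
            C ∈ conjClassesOfIndex Γ₁ d ∧ Nat.card C = n} =
        Nat.card {C : Set (Subgroup Γ₂) //
            C ∈ conjClassesOfIndex Γ₂ d ∧ Nat.card C = n} := by
  refine ⟨?_, fun n => aux_card_eq Γ₁ Γ₂ hfq d hd (fun m => m = n)⟩
  have h := aux_card_eq Γ₁ Γ₂ hfq d hd (fun _ => True)
  simpa [auxS] using h
end

section
/- If Γ₁ and Γ₂ are finitely generated groups having the same finite quotients, then their abelianizations are isomorphic: H₁(Γ₁, ℤ) ≅ H₁(Γ₂, ℤ), i.e. Abelianization Γ₁ ≃* Abelianization Γ₂. -/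
theorem aux_restrict {ι : Type} (q : ι → ℕ) :
    Nonempty ((∀ i, ZMod (q i)) ≃+ ∀ i : {i // q i ≠ 1}, ZMod (q i)) := by
  classical
  let f : (∀ i, ZMod (q i)) →+ ∀ i : {i // q i ≠ 1}, ZMod (q i) :=
    { toFun := fun x i => x i
      map_zero' := rfl
      map_add' := fun _ _ => rfl }
  refine ⟨AddEquiv.ofBijective f ⟨?_, ?_⟩⟩
  · intro x y h
    funext i
    by_cases hi : q i = 1
    · have : Subsingleton (ZMod (q i)) := ZMod.subsingleton_iff.2 hi
      exact Subsingleton.elim _ _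
    · exact congrFun h ⟨i, hi⟩
  · intro y
    refine ⟨fun i => if h : q i ≠ 1 then y ⟨i, h⟩ else 0, ?_⟩
    funext i
    exact dif_pos i.2

theorem aux_structure (A : Type) [AddCommGroup A] [AddGroup.FG A] :
    ∃ (ι : Type) (_ : Fintype ι) (q : ι → ℕ), (∀ i, q i = 0 ∨ IsPrimePow (q i)) ∧
      Nonempty (A ≃+ ∀ i, ZMod (q i)) := by
  classical
  obtain ⟨n, ι, hι, p, hp, e, ⟨E⟩⟩ := AddCommGroup.equiv_free_prod_directSum_zmod A
  let Q : Fin n ⊕ ι → ℕ := Sum.elim (fun _ => 0) (fun i => p i ^ e i)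
  obtain ⟨R⟩ := aux_restrict Q
  let E1 : (Fin n →₀ ℤ) ≃+ ∀ i : Fin n, ZMod (Q (Sum.inl i)) := Finsupp.addEquivFunOnFinite
  let E2 : (DirectSum ι fun i => ZMod (p i ^ e i)) ≃+ ∀ i : ι, ZMod (Q (Sum.inr i)) :=
    DirectSum.addEquivProd _
  let E3 := (LinearEquiv.sumPiEquivProdPi ℤ (Fin n) ι (fun s => ZMod (Q s))).toAddEquiv
  refine ⟨{s // Q s ≠ 1}, inferInstance, fun s => Q s, ?_,
    ⟨((E.trans (E1.prodCongr E2)).trans E3.symm).trans R⟩⟩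
  rintro ⟨s | i, h⟩
  · left; rfl
  · right
    change p i ^ e i ≠ 1 at h
    change IsPrimePow (p i ^ e i)
    have : e i ≠ 0 := by
      intro h0
      simp [h0] at h
    exact (hp i).isPrimePow.pow this

theorem aux_card {ι κ : Type} [Fintype ι] [Fintype κ] (q : ι → ℕ) (r : κ → ℕ) (n : ℕ)
    (hn : 0 < n) (g : (∀ i, ZMod (q i)) →+ ∀ j, ZMod (Nat.gcd n (r j)))
    (hg : Function.Surjective g) :
    ∏ j, Nat.gcd n (r j) ≤ ∏ i, Nat.gcd n (q i) := by
  classical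
  have hq : ∀ i, NeZero (Nat.gcd n (q i)) := fun i => ⟨(Nat.gcd_pos_of_pos_left _ hn).ne'⟩
  have hr : ∀ i, NeZero (Nat.gcd n (r i)) := fun i => ⟨(Nat.gcd_pos_of_pos_left _ hn).ne'⟩
  let s : (∀ i, ZMod (Nat.gcd n (q i))) → ∀ i, ZMod (q i) := fun x i => ((x i).val : ZMod (q i))
  have key : Function.Surjective (fun x => g (s x)) := by
    intro c
    obtain ⟨x, rfl⟩ := hg c
    refine ⟨fun i => ZMod.castHom (Nat.gcd_dvd_right n (q i)) _ (x i), ?_⟩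
    have : ∀ i, ∃ y : ZMod (q i),
        s (fun i => ZMod.castHom (Nat.gcd_dvd_right n (q i)) _ (x i)) i = x i + n • y := by
      intro i
      obtain ⟨a, ha⟩ := ZMod.intCast_surjective (x i)
      simp only [s, ← ha, map_intCast]
      set b : ℕ := ((a : ZMod (Nat.gcd n (q i)))).val with hb
      have h1 : ((b - a : ℤ) : ZMod (Nat.gcd n (q i))) = 0 := by
        simp [hb]
      rw [ZMod.intCast_zmod_eq_zero_iff_dvd] at h1
      obtain ⟨k, hk⟩ := h1
      rw [Nat.gcd_eq_gcd_ab] at hk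
      refine ⟨((Nat.gcdA n (q i) * k : ℤ) : ZMod (q i)), ?_⟩
      have h2 : (b : ℤ) = a + n * (Nat.gcdA n (q i) * k) + q i * (Nat.gcdB n (q i) * k) := by
        linear_combination hk
      have h3 := congrArg (Int.cast : ℤ → ZMod (q i)) h2
      push_cast at h3
      simpa using h3
    choose y hy using this
    have h4 : s (fun i => ZMod.castHom (Nat.gcd_dvd_right n (q i)) _ (x i)) = x + n • y :=
      funext hy
    change g (s _) = _
    rw [h4, map_add, map_nsmul]
    have : n • g y = 0 := by
      funext j
      obtain ⟨a, ha⟩ := ZMod.intCast_surjective (g y j)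
      have : ((n : ℕ) : ZMod (Nat.gcd n (r j))) = 0 :=
        (ZMod.natCast_eq_zero_iff _ _).2 (Nat.gcd_dvd_left _ _)
      simp [this]
    rw [this, add_zero]
  have := Fintype.card_le_of_surjective _ key
  simpa [Fintype.card_pi, ZMod.card] using this

theorem aux_gcd (p k q : ℕ) (hp : p.Prime) :
    Nat.gcd (p ^ (k+1)) q = Nat.gcd (p ^ k) q * (if p ^ (k+1) ∣ q then p else 1) := by
  split_ifs with h
  · rw [Nat.gcd_eq_left h, Nat.gcd_eq_left ((pow_dvd_pow p k.le_succ).trans h), pow_succ]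
  · rw [mul_one]
    apply Nat.dvd_antisymm
    · obtain ⟨m, hm, hm'⟩ := (Nat.dvd_prime_pow hp).1 (Nat.gcd_dvd_left (p ^ (k+1)) q)
      have : m ≠ k + 1 := by
        rintro rfl
        exact h (hm' ▸ Nat.gcd_dvd_right _ _)
      refine Nat.dvd_gcd ?_ (Nat.gcd_dvd_right _ _)
      rw [hm']
      exact pow_dvd_pow p (by omega)
    · exact Nat.gcd_dvd_gcd_of_dvd_left _ (pow_dvd_pow p k.le_succ)

open Finset in
theorem aux_count {ι κ : Type} [Fintype ι] [Fintype κ] (q : ι → ℕ) (r : κ → ℕ)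
    (h : ∀ n, 0 < n → ∏ i, Nat.gcd n (q i) = ∏ j, Nat.gcd n (r j)) (p k : ℕ) (hp : p.Prime) :
    #{i | p ^ (k+1) ∣ q i} = #{j | p ^ (k+1) ∣ r j} := by
  have h1 := h (p ^ (k+1)) (pow_pos hp.pos _)
  have h0 := h (p ^ k) (pow_pos hp.pos _)
  simp only [aux_gcd p k _ hp, Finset.prod_mul_distrib, h0] at h1
  have h2 := Nat.eq_of_mul_eq_mul_left
    (Finset.prod_pos fun j _ => Nat.gcd_pos_of_pos_left _ (pow_pos hp.pos _)) h1
  simp only [Finset.prod_ite, Finset.prod_const, one_pow, mul_one] at h2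
  exact Nat.pow_right_injective hp.two_le h2

open Finset in
theorem aux_fiber {ι : Type} [Fintype ι] (q : ι → ℕ)
    (hq : ∀ i, q i = 0 ∨ IsPrimePow (q i)) (p k : ℕ) (hp : p.Prime) :
    #{i | p ^ (k+1) ∣ q i} = #{i | q i = p ^ (k+1)} + #{i | p ^ (k+1+1) ∣ q i} := by
  classical
  rw [← Finset.card_union_of_disjoint]
  · congr 1
    ext i
    simp only [mem_filter, mem_univ, true_and, mem_union]
    constructor
    · intro hd
      rcases hq i with h0 | h0
      · right; simp [h0]
      · obtain ⟨l, m, hl, hm, hlm⟩ := (isPrimePow_nat_iff _).1 h0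
        rw [← hlm] at hd ⊢
        have : p = l := (Nat.prime_dvd_prime_iff_eq hp hl).1
          (hp.dvd_of_dvd_pow ((dvd_pow_self p k.succ_ne_zero).trans hd))
        subst this
        have := (Nat.pow_dvd_pow_iff_le_right hp.one_lt).1 hd
        rcases this.eq_or_lt with h | h
        · left; rw [h]
        · right; exact pow_dvd_pow p h
    · rintro (h | h)
      · rw [h]
      · exact (pow_dvd_pow p (Nat.le_succ _)).trans h
  · rw [Finset.disjoint_left]
    intro i hi hi'
    simp only [mem_filter, mem_univ, true_and] at hi hi'
    rw [hi, Nat.pow_dvd_pow_iff_le_right hp.one_lt] at hi'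
    omega

open Finset in
theorem aux_all {ι κ : Type} [Fintype ι] [Fintype κ] (q : ι → ℕ) (r : κ → ℕ)
    (hq : ∀ i, q i = 0 ∨ IsPrimePow (q i)) (hr : ∀ i, r i = 0 ∨ IsPrimePow (r i))
    (h : ∀ n, 0 < n → ∏ i, Nat.gcd n (q i) = ∏ j, Nat.gcd n (r j)) (v : ℕ) :
    #{i | q i = v} = #{j | r j = v} := by
  by_cases hv : IsPrimePow v
  · obtain ⟨p, m, hp, hm, rfl⟩ := (isPrimePow_nat_iff _).1 hv
    obtain ⟨k, rfl⟩ : ∃ k, m = k + 1 := ⟨m - 1, by omega⟩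
    have h1 := aux_fiber q hq p k hp
    have h2 := aux_fiber r hr p k hp
    have h3 := aux_count q r h p k hp
    have h4 := aux_count q r h p (k+1) hp
    omega
  by_cases h0 : v = 0
  · subst h0
    obtain ⟨p, hpN, hp⟩ := Nat.exists_infinite_primes (∑ i, q i + ∑ j, r j + 1)
    have h3 := aux_count q r h p 0 hp
    have e1 : ∀ i, p ^ (0+1) ∣ q i ↔ q i = 0 := fun i => by
      have := Finset.single_le_sum (f := q) (fun i _ => Nat.zero_le _) (mem_univ i)
      refine ⟨fun hd => Nat.eq_zero_of_dvd_of_lt hd (by rw [zero_add, pow_one]; omega), ?_⟩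
      intro h; simp [h]
    have e2 : ∀ i, p ^ (0+1) ∣ r i ↔ r i = 0 := fun i => by
      have := Finset.single_le_sum (f := r) (fun i _ => Nat.zero_le _) (mem_univ i)
      refine ⟨fun hd => Nat.eq_zero_of_dvd_of_lt hd (by rw [zero_add, pow_one]; omega), ?_⟩
      intro h; simp [h]
    simpa only [e1, e2] using h3
  · rw [Finset.filter_false_of_mem, Finset.filter_false_of_mem]
    · simp
    · rintro i - rfl
      exact (hr i).elim h0 hv
    · rintro i - rfl
      exact (hq i).elim h0 hv

theorem aux_equiv {ι κ : Type} [Fintype ι] [Fintype κ] (q : ι → ℕ) (r : κ → ℕ)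
    (h : ∀ v, (Finset.univ.filter fun i => q i = v).card =
      (Finset.univ.filter fun j => r j = v).card) :
    Nonempty ((∀ i, ZMod (q i)) ≃+ ∀ j, ZMod (r j)) := by
  classical
  have F : ∀ v, Nonempty ({i // q i = v} ≃ {j // r j = v}) := fun v => by
    rw [← Fintype.card_eq, Fintype.card_subtype, Fintype.card_subtype]
    exact h v
  let σ : ι ≃ κ := Equiv.ofFiberEquiv fun v => (F v).some
  have hσ : q = fun i => r (σ i) := funext fun i => (Equiv.ofFiberEquiv_map _ i).symm
  clear_value σ
  subst hσ
  exact ⟨(RingEquiv.piCongrLeft (fun j => ZMod (r j)) σ).toAddEquiv⟩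

theorem aux_half {Γ₁ Γ₂ : Type} [Group Γ₁] [Group Γ₂] {ι κ : Type} [Fintype ι] [Fintype κ]
    (q : ι → ℕ) (r : κ → ℕ) (hfq : SameFiniteQuotients Γ₁ Γ₂)
    (E : Additive (Abelianization Γ₁) ≃+ ∀ i, ZMod (q i))
    (F : Additive (Abelianization Γ₂) ≃+ ∀ i, ZMod (r i)) (n : ℕ) (hn : 0 < n) :
    ∏ i, Nat.gcd n (q i) ≤ ∏ j, Nat.gcd n (r j) := by
  have hz : ∀ i, NeZero (Nat.gcd n (q i)) := fun i => ⟨(Nat.gcd_pos_of_pos_left _ hn).ne'⟩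
  let red : (∀ i, ZMod (q i)) →+ ∀ i, ZMod (Nat.gcd n (q i)) :=
    { toFun := fun x i => ZMod.castHom (Nat.gcd_dvd_right n (q i)) _ (x i)
      map_zero' := by funext i; exact map_zero _
      map_add' := fun x y => by funext i; exact map_add _ _ _ }
  have hred : Function.Surjective red := fun y => by
    choose x hx using fun i => ZMod.castHom_surjective (Nat.gcd_dvd_right n (q i)) (y i)
    exact ⟨x, funext hx⟩
  let f1 : Abelianization Γ₁ →* Multiplicative (∀ i, ZMod (Nat.gcd n (q i))) :=
    AddMonoidHom.toMultiplicativeRight (red.comp E.toAddMonoidHom)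
  have hf1 : Function.Surjective f1 := fun y => by
    obtain ⟨x, hx⟩ := (hred.comp E.surjective) y.toAdd
    exact ⟨x.toMul, hx⟩
  have hab : Function.Surjective (Abelianization.of (G := Γ₁)) := QuotientGroup.mk_surjective
  have : Finite (Multiplicative (∀ i, ZMod (Nat.gcd n (q i)))) :=
    inferInstanceAs (Finite (∀ i, ZMod (Nat.gcd n (q i))))
  obtain ⟨f2, hf2⟩ := (hfq (Multiplicative (∀ i, ZMod (Nat.gcd n (q i))))).1
    ⟨f1.comp Abelianization.of, hf1.comp hab⟩
  let g : Additive (Abelianization Γ₂) →+ ∀ i, ZMod (Nat.gcd n (q i)) :=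
    MonoidHom.toAdditiveLeft (Abelianization.lift f2)
  refine aux_card r q n hn (g.comp F.symm.toAddMonoidHom) ?_
  have hg : Function.Surjective g := fun y => by
    obtain ⟨x, hx⟩ := hf2 (Multiplicative.ofAdd y)
    refine ⟨Additive.ofMul (Abelianization.of x), ?_⟩
    change (Abelianization.lift f2 (Abelianization.of x)).toAdd = y
    rw [Abelianization.lift_apply_of, hx]
    rfl
  exact hg.comp F.symm.surjective

/-- Finitely generated groups with the same finite quotients have isomorphic
abelianizations: `H₁(Γ₁, ℤ) ≅ H₁(Γ₂, ℤ)`. -/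
theorem abelianization_eq_of_same_finite_quotients (Γ₁ Γ₂ : Type)
    [Group Γ₁] [Group Γ₂] [Group.FG Γ₁] [Group.FG Γ₂]
    (hfq : SameFiniteQuotients Γ₁ Γ₂) :
    Nonempty (Abelianization Γ₁ ≃* Abelianization Γ₂) := by
  have i1 : Group.FG (Abelianization Γ₁) := QuotientGroup.fg _
  have i2 : Group.FG (Abelianization Γ₂) := QuotientGroup.fg _
  obtain ⟨ι, _, q, hq, ⟨E⟩⟩ := aux_structure (Additive (Abelianization Γ₁))
  obtain ⟨κ, _, r, hr, ⟨F⟩⟩ := aux_structure (Additive (Abelianization Γ₂))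
  have hfq' : SameFiniteQuotients Γ₂ Γ₁ := fun Q _ _ => (hfq Q).symm
  obtain ⟨S⟩ := aux_equiv q r (aux_all q r hq hr fun n hn =>
    le_antisymm (aux_half q r hfq E F n hn) (aux_half r q hfq' F E n hn))
  exact ⟨MulEquiv.toAdditive.symm ((E.trans S).trans F.symm)⟩
end

section
/- Every subgroup Δ of PSL(2, ℤ[ω]) of finite index at most 12 has first Betti number b₁(Δ) ≤ 1; equivalently, no subgroup of PSL(2, ℤ[ω]) of finite index at most 12 admits a surjective homomorphism onto ℤ × ℤ. -/
namespace B1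

/-- table lookup (base 16 digits); the digit `0` stands for "undefined" -/
def lk (n i : ℕ) : ℕ := Nat.land (Nat.shiftRight n (Nat.mul 4 i)) 15

def xT : ℕ := 3038472539804448
def tT : ℕ := 1569785460664128

def setp (n a b : ℕ) : ℕ :=
  Nat.lor (Nat.lor n (Nat.shiftLeft b (Nat.mul 4 a))) (Nat.shiftLeft a (Nat.mul 4 b))

def force {α : Type} (n : ℕ) (k : ℕ → α) : α :=
  Nat.rec (k 0) (fun m _ => k (Nat.succ m)) n

theorem force_eq {α : Type} (n : ℕ) (k : ℕ → α) : force n k = k n := by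
  cases n <;> rfl

def okAt (i c : ℕ) : Bool := force c fun c => Nat.beq c 0 || Nat.beq c i

def pts : List ℕ := [1, 2, 3, 4, 5, 6, 7, 8, 9, 10, 11, 12]

def consistent (n : ℕ) : Bool :=
  pts.all fun i =>
    okAt i (lk n (lk xT (lk n (lk xT (lk n (lk xT i)))))) &&
    okAt i (lk n (lk tT (lk n (lk tT (lk n (lk tT i))))))

def ind (j c : ℕ) : ℤ := if (c + 2) / 3 = j + 1 then 1 else 0

def row (n i j : ℕ) : ℤ :=
  ind j i - ind j (lk tT i) + ind j (lk n (lk tT i)) - ind j (lk tT (lk n (lk tT i)))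
  + ind j (lk n (lk tT (lk n (lk tT i)))) - ind j (lk tT (lk n (lk tT (lk n (lk tT i)))))

def cross (n i j : ℕ) : Prop :=
  row n i 1 * row n j 2 - row n i 2 * row n j 1 ≠ 0 ∨
  row n i 2 * row n j 3 - row n i 3 * row n j 2 ≠ 0 ∨
  row n i 3 * row n j 1 - row n i 1 * row n j 3 ≠ 0

instance (l i j) : Decidable (cross l i j) := by unfold cross; infer_instance

def leaf (n : ℕ) : Bool :=
  (pts.all fun i => !(Nat.beq (lk n i) 0)) &&
    pts.any fun i => pts.any fun j => decide (cross n i j)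

def search : List ℕ → ℕ → Bool
  | [], n => leaf n
  | k :: ks, n => cond (Nat.beq (lk n k) 0)
      (pts.all fun b => !(okAt k (lk n b)) ||
        force (setp n k b) fun n' => !(consistent n') || search ks n')
      (search ks n)

theorem search_ok : search pts 0 = true := by decide +kernel


structure Good (σ : ℕ → ℕ) : Prop where
  zero : σ 0 = 0
  lt : ∀ i, i ≤ 12 → σ i ≤ 12
  ne : ∀ i, 1 ≤ i → i ≤ 12 → 1 ≤ σ i
  inv : ∀ i, i ≤ 12 → σ (σ i) = i
  relx : ∀ i, i ≤ 12 → σ (lk xT (σ (lk xT (σ (lk xT i))))) = i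
  relt : ∀ i, i ≤ 12 → σ (lk tT (σ (lk tT (σ (lk tT i))))) = i

def Valid (σ : ℕ → ℕ) (n : ℕ) : Prop := ∀ i, i ≤ 12 → lk n i = 0 ∨ lk n i = σ i

theorem mem_pts {i : ℕ} : i ∈ pts ↔ 1 ≤ i ∧ i ≤ 12 := by
  simp only [pts, List.mem_cons, List.not_mem_nil, or_false]; omega

theorem lk_setp_aux : ∀ a < 13, ∀ b < 13, ∀ j < 13,
    lk (Nat.shiftLeft b (Nat.mul 4 a)) j = if j = a then b else 0 := by decide +kernel

theorem lk_lor (m n j : ℕ) : lk (Nat.lor m n) j = lk m j ||| lk n j := by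
  have h : ∀ a b : ℕ, Nat.lor a b = a ||| b := fun _ _ => rfl
  have h1 : ∀ a b : ℕ, Nat.land a b = a &&& b := fun _ _ => rfl
  have h2 : ∀ a b : ℕ, Nat.shiftRight a b = a >>> b := fun _ _ => rfl
  simp only [lk, h, h1, h2, Nat.shiftRight_or_distrib, Nat.and_or_distrib_right]

theorem lk_setp {n a b j : ℕ} (ha : a ≤ 12) (hb : b ≤ 12) (hj : j ≤ 12) :
    lk (setp n a b) j = (lk n j ||| if j = a then b else 0) ||| if j = b then a else 0 := by
  rw [setp, lk_lor, lk_lor, lk_setp_aux a (by omega) b (by omega) j (by omega),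
    lk_setp_aux b (by omega) a (by omega) j (by omega)]

theorem valid_setp {σ : ℕ → ℕ} (hσ : Good σ) {n a : ℕ} (h : Valid σ n) (ha : a ≤ 12) :
    Valid σ (setp n a (σ a)) := by
  intro j hj
  rw [lk_setp ha (hσ.lt a ha) hj]
  have key : ∀ u v w s : ℕ, (u = 0 ∨ u = s) → (v = 0 ∨ v = s) → (w = 0 ∨ w = s) →
      ((u ||| v) ||| w = 0 ∨ (u ||| v) ||| w = s) := by
    rintro u v w s (rfl | rfl) (rfl | rfl) (rfl | rfl) <;> simp
  apply key _ _ _ _ (h j hj)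
  · split_ifs with h1
    · right; rw [h1]
    · left; rfl
  · split_ifs with h1
    · right; rw [h1, hσ.inv a ha]
    · left; rfl

theorem lkx_le : ∀ i < 13, lk xT i ≤ 12 := by decide
theorem lkt_le : ∀ i < 13, lk tT i ≤ 12 := by decide

def Dd (a b : ℕ) : Prop := (a = 0 ∨ a = b) ∧ b ≤ 12

theorem Dd.s {σ : ℕ → ℕ} (hσ : Good σ) {n : ℕ} (h : Valid σ n) {a b : ℕ} (hd : Dd a b) :
    Dd (lk n a) (σ b) := by
  obtain ⟨h1, h2⟩ := hd
  refine ⟨?_, hσ.lt b h2⟩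
  rcases h1 with rfl | rfl
  · left
    have := h 0 (by omega)
    rw [hσ.zero] at this
    tauto
  · exact h a h2

theorem Dd.x {a b : ℕ} (hd : Dd a b) : Dd (lk xT a) (lk xT b) := by
  obtain ⟨h1, h2⟩ := hd
  refine ⟨?_, lkx_le b (by omega)⟩
  rcases h1 with rfl | rfl
  · left; decide
  · right; rfl

theorem Dd.t {a b : ℕ} (hd : Dd a b) : Dd (lk tT a) (lk tT b) := by
  obtain ⟨h1, h2⟩ := hd
  refine ⟨?_, lkt_le b (by omega)⟩
  rcases h1 with rfl | rfl
  · left; decide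
  · right; rfl

theorem okAt_of {i c : ℕ} (h : Dd c i) : okAt i c = true := by
  rw [okAt, force_eq]
  rcases h.1 with rfl | rfl <;> simp

theorem consistent_of {σ : ℕ → ℕ} (hσ : Good σ) {n : ℕ} (h : Valid σ n) :
    consistent n = true := by
  simp only [consistent, List.all_eq_true, Bool.and_eq_true]
  intro i hi
  have hi' := (mem_pts.1 hi).2
  have hd : Dd i i := ⟨Or.inr rfl, hi'⟩
  constructor
  · apply okAt_of
    have := ((((((hd.x).s hσ h).x).s hσ h).x).s hσ h)
    rwa [hσ.relx i hi'] at this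
  · apply okAt_of
    have := ((((((hd.t).s hσ h).t).s hσ h).t).s hσ h)
    rwa [hσ.relt i hi'] at this

theorem search_sound {σ : ℕ → ℕ} (hσ : Good σ) : ∀ (ks : List ℕ) (n : ℕ),
    (∀ k ∈ ks, k ∈ pts) → Valid σ n → search ks n = true → ∃ n', Valid σ n' ∧ leaf n' = true := by
  intro ks
  induction ks with
  | nil => intro n _ hn h; exact ⟨n, hn, h⟩
  | cons k ks ih =>
    intro n hk hn h
    have hk' : ∀ k ∈ ks, k ∈ pts := fun k h => hk k (List.mem_cons_of_mem _ h)
    have hkk := mem_pts.1 (hk k List.mem_cons_self)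
    rw [search] at h
    cases hb : Nat.beq (lk n k) 0 with
    | false => rw [hb] at h; exact ih n hk' hn h
    | true =>
      rw [hb] at h
      simp only [cond_true, List.all_eq_true, force_eq] at h
      have h1 := h (σ k) (mem_pts.2 ⟨hσ.ne k hkk.1 hkk.2, hσ.lt k hkk.2⟩)
      have h0 : okAt k (lk n (σ k)) = true := by
        apply okAt_of
        have := Dd.s hσ hn ⟨Or.inr rfl, hσ.lt k hkk.2⟩
        rwa [hσ.inv k hkk.2] at this
      have hv := valid_setp hσ hn hkk.2
      rw [h0, consistent_of hσ hv] at h1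
      exact ih _ hk' hv (by simpa using h1)

theorem lk_zero (i : ℕ) : lk 0 i = 0 := by
  have h1 : ∀ a b : ℕ, Nat.land a b = a &&& b := fun _ _ => rfl
  have h2 : ∀ a b : ℕ, Nat.shiftRight a b = a >>> b := fun _ _ => rfl
  simp [lk]

theorem search_concl {σ : ℕ → ℕ} (hσ : Good σ) :
    ∃ n, (∀ i, i ≤ 12 → lk n i = σ i) ∧ ∃ i j, (1 ≤ i ∧ i ≤ 12) ∧ (1 ≤ j ∧ j ≤ 12) ∧
      cross n i j := by
  obtain ⟨n, hn, hl⟩ := search_sound hσ pts 0 (fun _ h => h)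
    (fun i _ => Or.inl (lk_zero i)) search_ok
  simp only [leaf, Bool.and_eq_true, List.all_eq_true, List.any_eq_true, decide_eq_true_eq] at hl
  obtain ⟨h1, i, hi, j, hj, hc⟩ := hl
  refine ⟨n, ?_, i, j, mem_pts.1 hi, mem_pts.1 hj, hc⟩
  intro k hk
  rcases hn k hk with h2 | h2
  · rcases Nat.eq_zero_or_pos k with rfl | h3
    · rw [h2, hσ.zero]
    · have := h1 k (mem_pts.2 ⟨h3, hk⟩)
      rw [h2] at this
      simp at this
  · exact h2

end B1

namespace B1

structure Rel {X : Type*} (x t : X → X) : Prop where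
  x3 : ∀ i, x (x (x i)) = i
  t2 : ∀ i, t (t i) = i
  r3 : ∀ i, t (x (t (x (t (x i))))) = i

namespace Rel
variable {X : Type*} {x t : X → X}

theorem txt (h : Rel x t) (i : X) : t (x (t i)) = x (x (t (x (x i)))) := by
  have h1 := h.r3 (x (x i))
  rw [h.x3] at h1
  have h2 := congrArg t h1
  rw [h.t2] at h2
  rw [← h2, h.x3]

theorem txxt (h : Rel x t) (i : X) : t (x (x (t i))) = x (t (x i)) := by
  have h1 := congrArg t (h.txt (x i))
  rw [h.t2, h.x3] at h1
  exact h1.symm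

theorem xinj (h : Rel x t) {i j : X} (e : x i = x j) : i = j := by
  rw [← h.x3 i, ← h.x3 j, e]

theorem tinj (h : Rel x t) {i j : X} (e : t i = t j) : i = j := by
  rw [← h.t2 i, ← h.t2 j, e]

end Rel

def ee {X : Type*} (x t : X → X) (p : X) : ℕ → X
  | 2 => x p
  | 3 => x (x p)
  | 4 => t p
  | 5 => x (t p)
  | 6 => x (x (t p))
  | 7 => t (x p)
  | 8 => x (t (x p))
  | 9 => x (x (t (x p)))
  | 10 => t (x (x p))
  | 11 => x (t (x (x p)))
  | 12 => x (x (t (x (x p))))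
  | _ => p

section
variable {X : Type*} {x t s : X → X}

theorem ee_x (h : Rel x t) (p : X) (k : ℕ) (h1 : 1 ≤ k) (h2 : k ≤ 12) :
    ee x t p (lk xT k) = x (ee x t p k) := by
  interval_cases k <;> simp [lk, xT, ee, h.x3]

theorem ee_t (h : Rel x t) (p : X) (k : ℕ) (h1 : 1 ≤ k) (h2 : k ≤ 12) :
    ee x t p (lk tT k) = t (ee x t p k) := by
  interval_cases k <;> simp [lk, tT, ee, h.x3, h.t2, h.txt, h.txxt]

theorem lkx_pos : ∀ i < 13, 1 ≤ i → 1 ≤ lk xT i := by decide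
theorem lkt_pos : ∀ i < 13, 1 ≤ i → 1 ≤ lk tT i := by decide

theorem ee_val (h : Rel x t) (p : X) (v : X → ℚ) (hv : ∀ i, v (x i) = v i)
    (k : ℕ) (h1 : 1 ≤ k) (h2 : k ≤ 12) :
    v (ee x t p k) = v p + ind 1 k * (v (t p) - v p) + ind 2 k * (v (t (x p)) - v p)
      + ind 3 k * (v (t (x (x p))) - v p) := by
  interval_cases k <;> simp [ee, ind, hv]

theorem exists_comb (a1 a2 a3 b1 b2 b3 : ℚ) (h1 : a1 * b2 = a2 * b1) (h2 : a2 * b3 = a3 * b2)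
    (h3 : a3 * b1 = a1 * b3) : ∃ α β : ℚ, (α ≠ 0 ∨ β ≠ 0) ∧ α * a1 + β * b1 = 0 ∧
      α * a2 + β * b2 = 0 ∧ α * a3 + β * b3 = 0 := by
  by_cases e1 : a1 = 0
  · by_cases e2 : a2 = 0
    · by_cases e3 : a3 = 0
      · exact ⟨1, 0, by simp, by simp [e1], by simp [e2], by simp [e3]⟩
      · exact ⟨b3, -a3, by simp [e3], by linarith, by linarith, by ring⟩
    · exact ⟨b2, -a2, by simp [e2], by linarith, by ring, by linarith⟩
  · exact ⟨b1, -a1, by simp [e1], by ring, by linarith, by linarith⟩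

theorem cross_aux (r1 r2 r3 q1 q2 q3 a1 a2 a3 b1 b2 b3 : ℚ)
    (ra : r1 * a1 + r2 * a2 + r3 * a3 = 0) (qa : q1 * a1 + q2 * a2 + q3 * a3 = 0)
    (rb : r1 * b1 + r2 * b2 + r3 * b3 = 0) (qb : q1 * b1 + q2 * b2 + q3 * b3 = 0)
    (hc : r1 * q2 - r2 * q1 ≠ 0 ∨ r2 * q3 - r3 * q2 ≠ 0 ∨ r3 * q1 - r1 * q3 ≠ 0) :
    a1 * b2 = a2 * b1 ∧ a2 * b3 = a3 * b2 ∧ a3 * b1 = a1 * b3 := by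
  rcases hc with hc | hc | hc
  · have A1 : (r1 * q2 - r2 * q1) * a1 = (r2 * q3 - r3 * q2) * a3 := by
      linear_combination q2 * ra - r2 * qa
    have A2 : (r1 * q2 - r2 * q1) * a2 = (r3 * q1 - r1 * q3) * a3 := by
      linear_combination r1 * qa - q1 * ra
    have B1 : (r1 * q2 - r2 * q1) * b1 = (r2 * q3 - r3 * q2) * b3 := by
      linear_combination q2 * rb - r2 * qb
    have B2 : (r1 * q2 - r2 * q1) * b2 = (r3 * q1 - r1 * q3) * b3 := by
      linear_combination r1 * qb - q1 * rb
    refine ⟨?_, ?_, ?_⟩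
    · apply mul_left_cancel₀ (mul_ne_zero hc hc)
      linear_combination (r1 * q2 - r2 * q1) * b2 * A1 + (r2 * q3 - r3 * q2) * a3 * B2
        - (r1 * q2 - r2 * q1) * b1 * A2 - (r3 * q1 - r1 * q3) * a3 * B1
    · apply mul_left_cancel₀ hc
      linear_combination b3 * A2 - a3 * B2
    · apply mul_left_cancel₀ hc
      linear_combination a3 * B1 - b3 * A1
  · have A1 : (r2 * q3 - r3 * q2) * a2 = (r3 * q1 - r1 * q3) * a1 := by
      linear_combination q3 * ra - r3 * qa
    have A2 : (r2 * q3 - r3 * q2) * a3 = (r1 * q2 - r2 * q1) * a1 := by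
      linear_combination r2 * qa - q2 * ra
    have B1 : (r2 * q3 - r3 * q2) * b2 = (r3 * q1 - r1 * q3) * b1 := by
      linear_combination q3 * rb - r3 * qb
    have B2 : (r2 * q3 - r3 * q2) * b3 = (r1 * q2 - r2 * q1) * b1 := by
      linear_combination r2 * qb - q2 * rb
    refine ⟨?_, ?_, ?_⟩
    · apply mul_left_cancel₀ hc
      linear_combination a1 * B1 - b1 * A1
    · apply mul_left_cancel₀ (mul_ne_zero hc hc)
      linear_combination (r2 * q3 - r3 * q2) * b3 * A1 + (r3 * q1 - r1 * q3) * a1 * B2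
        - (r2 * q3 - r3 * q2) * b2 * A2 - (r1 * q2 - r2 * q1) * a1 * B1
    · apply mul_left_cancel₀ hc
      linear_combination b1 * A2 - a1 * B2
  · have A1 : (r3 * q1 - r1 * q3) * a3 = (r1 * q2 - r2 * q1) * a2 := by
      linear_combination q1 * ra - r1 * qa
    have A2 : (r3 * q1 - r1 * q3) * a1 = (r2 * q3 - r3 * q2) * a2 := by
      linear_combination r3 * qa - q3 * ra
    have B1 : (r3 * q1 - r1 * q3) * b3 = (r1 * q2 - r2 * q1) * b2 := by
      linear_combination q1 * rb - r1 * qb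
    have B2 : (r3 * q1 - r1 * q3) * b1 = (r2 * q3 - r3 * q2) * b2 := by
      linear_combination r3 * qb - q3 * rb
    refine ⟨?_, ?_, ?_⟩
    · apply mul_left_cancel₀ hc
      linear_combination b2 * A2 - a2 * B2
    · apply mul_left_cancel₀ hc
      linear_combination a2 * B1 - b2 * A1
    · apply mul_left_cancel₀ (mul_ne_zero hc hc)
      linear_combination (r3 * q1 - r1 * q3) * b1 * A1 + (r1 * q2 - r2 * q1) * a2 * B2
        - (r3 * q1 - r1 * q3) * b3 * A2 - (r2 * q3 - r3 * q2) * a2 * B1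

/-- the alternating relation satisfied by differences of `t`- and `s`-invariant functions -/
def Alt (t s : X → X) (v : X → ℚ) : Prop := ∀ i,
  v i - v (t i) + v (s (t i)) - v (t (s (t i))) + v (s (t (s (t i)))) -
    v (t (s (t (s (t i))))) = 0

theorem regular (h : Rel x t) (h' : Rel x s) (hts : ∀ i, s (t (s (t (s (t i))))) = i) (p : X)
    (hinj : ∀ k l, 1 ≤ k → k ≤ 12 → 1 ≤ l → l ≤ 12 → ee x t p k = ee x t p l → k = l)
    (hsurj : ∀ a, ∃ k, (1 ≤ k ∧ k ≤ 12) ∧ ee x t p k = a)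
    (v w : X → ℚ) (hv : ∀ i, v (x i) = v i) (hw : ∀ i, w (x i) = w i)
    (hva : Alt t s v) (hwa : Alt t s w) :
    ∃ α β : ℚ, (α ≠ 0 ∨ β ≠ 0) ∧ ∃ c, ∀ i, α * v i + β * w i = c := by
  choose g hg hge using hsurj
  let σ : ℕ → ℕ := fun k => if 1 ≤ k ∧ k ≤ 12 then g (s (ee x t p k)) else 0
  have σr : ∀ k, 1 ≤ k → k ≤ 12 → 1 ≤ σ k ∧ σ k ≤ 12 := by
    intro k h1 h2
    simp only [σ, h1, h2, and_self, if_true]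
    exact hg _
  have σe : ∀ k, 1 ≤ k → k ≤ 12 → ee x t p (σ k) = s (ee x t p k) := by
    intro k h1 h2
    simp only [σ, h1, h2, and_self, if_true]
    exact hge _
  have xr : ∀ k, 1 ≤ k → k ≤ 12 → 1 ≤ lk xT k ∧ lk xT k ≤ 12 := fun k h1 h2 =>
    ⟨lkx_pos k (by omega) h1, lkx_le k (by omega)⟩
  have tr : ∀ k, 1 ≤ k → k ≤ 12 → 1 ≤ lk tT k ∧ lk tT k ≤ 12 := fun k h1 h2 =>
    ⟨lkt_pos k (by omega) h1, lkt_le k (by omega)⟩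
  have σ0 : σ 0 = 0 := by simp [σ]
  have x0 : lk xT 0 = 0 := by decide
  have t0 : lk tT 0 = 0 := by decide
  have good : Good σ := by
    refine ⟨σ0, ?_, ?_, ?_, ?_, ?_⟩
    · intro i hi
      rcases Nat.eq_zero_or_pos i with rfl | h0
      · simp [σ0]
      · exact (σr i h0 hi).2
    · intro i h0 hi
      exact (σr i h0 hi).1
    · intro i hi
      rcases Nat.eq_zero_or_pos i with rfl | h0
      · simp [σ0]
      · have a1 := σr i h0 hi
        have a2 := σr _ a1.1 a1.2
        apply hinj _ _ a2.1 a2.2 h0 hi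
        rw [σe _ a1.1 a1.2, σe _ h0 hi, h'.t2]
    · intro i hi
      rcases Nat.eq_zero_or_pos i with rfl | h0
      · simp [σ0, x0]
      · have a1 := xr i h0 hi
        have a2 := σr _ a1.1 a1.2
        have a3 := xr _ a2.1 a2.2
        have a4 := σr _ a3.1 a3.2
        have a5 := xr _ a4.1 a4.2
        have a6 := σr _ a5.1 a5.2
        apply hinj _ _ a6.1 a6.2 h0 hi
        rw [σe _ a5.1 a5.2, ee_x h p _ a4.1 a4.2, σe _ a3.1 a3.2, ee_x h p _ a2.1 a2.2,
          σe _ a1.1 a1.2, ee_x h p _ h0 hi, h'.r3]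
    · intro i hi
      rcases Nat.eq_zero_or_pos i with rfl | h0
      · simp [σ0, t0]
      · have a1 := tr i h0 hi
        have a2 := σr _ a1.1 a1.2
        have a3 := tr _ a2.1 a2.2
        have a4 := σr _ a3.1 a3.2
        have a5 := tr _ a4.1 a4.2
        have a6 := σr _ a5.1 a5.2
        apply hinj _ _ a6.1 a6.2 h0 hi
        rw [σe _ a5.1 a5.2, ee_t h p _ a4.1 a4.2, σe _ a3.1 a3.2, ee_t h p _ a2.1 a2.2,
          σe _ a1.1 a1.2, ee_t h p _ h0 hi, hts]
  obtain ⟨n, hn, i, j, hi, hj, hc⟩ := search_concl good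
  have rowE : ∀ i, 1 ≤ i → i ≤ 12 → ∀ v : X → ℚ, (∀ i, v (x i) = v i) → Alt t s v →
      (row n i 1 : ℚ) * (v (t p) - v p) + row n i 2 * (v (t (x p)) - v p)
      + row n i 3 * (v (t (x (x p))) - v p) = 0 := by
    intro i h0 hi v hv hva
    have a1 := tr i h0 hi
    have a2 := σr _ a1.1 a1.2
    have a3 := tr _ a2.1 a2.2
    have a4 := σr _ a3.1 a3.2
    have a5 := tr _ a4.1 a4.2
    have E := hva (ee x t p i)
    rw [← ee_t h p _ h0 hi, ← σe _ a1.1 a1.2, ← ee_t h p _ a2.1 a2.2, ← σe _ a3.1 a3.2,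
      ← ee_t h p _ a4.1 a4.2, ee_val h p v hv _ h0 hi, ee_val h p v hv _ a1.1 a1.2,
      ee_val h p v hv _ a2.1 a2.2, ee_val h p v hv _ a3.1 a3.2, ee_val h p v hv _ a4.1 a4.2,
      ee_val h p v hv _ a5.1 a5.2] at E
    simp only [row]
    rw [hn _ a1.2, hn _ a3.2]
    push_cast
    linear_combination E
  obtain ⟨c1, c2, c3⟩ := cross_aux (row n i 1) (row n i 2) (row n i 3) (row n j 1) (row n j 2)
    (row n j 3) _ _ _ _ _ _ (rowE i hi.1 hi.2 v hv hva) (rowE j hj.1 hj.2 v hv hva)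
    (rowE i hi.1 hi.2 w hw hwa) (rowE j hj.1 hj.2 w hw hwa) (by
      unfold cross at hc
      exact_mod_cast hc)
  obtain ⟨α, β, h0, e1, e2, e3⟩ := exists_comb _ _ _ _ _ _ c1 c2 c3
  refine ⟨α, β, h0, α * v p + β * w p, fun a => ?_⟩
  rw [← hge a, ee_val h p v hv _ (hg a).1 (hg a).2, ee_val h p w hw _ (hg a).1 (hg a).2]
  linear_combination (ind 1 (g a) : ℚ) * e1 + (ind 2 (g a) : ℚ) * e2 + (ind 3 (g a) : ℚ) * e3

end
end B1

namespace B1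
section
variable {X : Type*} {x t s : X → X}

def rA (x t : X → X) : X → X → Prop := fun i j => j = x i ∨ j = t i
def rC (x : X → X) : X → X → Prop := fun i j => j = x i

def Bad (x t : X → X) (q : X) : Prop := x q = q ∨ t q = q ∨ t q = x q ∨ t q = x (x q)

theorem mkx (q : X) : Quot.mk (rA x t) (x q) = Quot.mk (rA x t) q :=
  Eq.symm (Quot.sound (show rA x t q (x q) from Or.inl rfl))
theorem mkt (q : X) : Quot.mk (rA x t) (t q) = Quot.mk (rA x t) q :=
  Eq.symm (Quot.sound (show rA x t q (t q) from Or.inr rfl))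
theorem mkc (q : X) : Quot.mk (rC x) (x q) = Quot.mk (rC x) q :=
  Eq.symm (Quot.sound (show rC x q (x q) from rfl))

theorem ee_ne (h : Rel x t) (p : X)
    (H : ∀ q, Quot.mk (rA x t) q = Quot.mk (rA x t) p → ¬ Bad x t q)
    (k : ℕ) (h1 : 2 ≤ k) (h2 : k ≤ 12) : ee x t p k ≠ p := by
  have H0 := H p rfl
  have H1 := H (x p) (mkx p)
  have H2 := H (x (x p)) ((mkx _).trans (mkx p))
  simp only [Bad, not_or, h.x3] at H0 H1 H2
  obtain ⟨a1, a2, a3, a4⟩ := H0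
  obtain ⟨b1, b2, b3, b4⟩ := H1
  obtain ⟨c1, c2, c3, c4⟩ := H2
  have X1 : ∀ {a b : X}, x a = b → a = x (x b) := by
    intro a b e; rw [← e, h.x3]
  have X2 : ∀ {a b : X}, x (x a) = b → a = x b := by
    intro a b e; rw [← e, h.x3]
  interval_cases k <;> simp only [ee] <;> intro e
  · exact a1 e
  · exact a1 (X2 e).symm
  · exact a2 e
  · exact a4 (X1 e)
  · exact a3 (X2 e)
  · exact b4 e
  · exact b3 (X1 e)
  · exact b2 (X2 e)
  · exact c3 e
  · exact c2 (X1 e)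
  · exact c4 (X2 e)

theorem xT3 : ∀ l < 13, lk xT (lk xT (lk xT l)) = l := by decide
theorem tT2 : ∀ l < 13, lk tT (lk tT l) = l := by decide

theorem ee_inj (h : Rel x t) (p : X)
    (H : ∀ q, Quot.mk (rA x t) q = Quot.mk (rA x t) p → ¬ Bad x t q)
    (k l : ℕ) (h1 : 1 ≤ k) (h2 : k ≤ 12) (h3 : 1 ≤ l) (h4 : l ≤ 12)
    (e : ee x t p k = ee x t p l) : k = l := by
  let P : ℕ → Prop := fun k => ∀ l, 1 ≤ l → l ≤ 12 → ee x t p k = ee x t p l → k = l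
  have p1 : P 1 := by
    intro l h3 h4 e
    by_contra hne
    exact ee_ne h p H l (by omega) h4 e.symm
  have px : ∀ k, 1 ≤ k → k ≤ 12 → P k → P (lk xT k) := by
    intro k h1 h2 hk l h3 h4 e
    have b1 := lkx_pos l (by omega) h3
    have b2 := lkx_le l (by omega)
    rw [ee_x h p k h1 h2] at e
    have e2 : ee x t p k = ee x t p (lk xT (lk xT l)) := by
      rw [ee_x h p _ b1 b2, ee_x h p _ h3 h4, ← e, h.x3]
    have := hk _ (lkx_pos _ (by omega) b1) (lkx_le _ (by omega)) e2
    rw [this, xT3 l (by omega)]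
  have pt : ∀ k, 1 ≤ k → k ≤ 12 → P k → P (lk tT k) := by
    intro k h1 h2 hk l h3 h4 e
    have b1 := lkt_pos l (by omega) h3
    have b2 := lkt_le l (by omega)
    rw [ee_t h p k h1 h2] at e
    have e2 : ee x t p k = ee x t p (lk tT l) := by
      rw [ee_t h p _ h3 h4, ← e, h.t2]
    have := hk _ b1 b2 e2
    rw [this, tT2 l (by omega)]
  have p2 : P 2 := px 1 (by omega) (by omega) p1
  have p3 : P 3 := px 2 (by omega) (by omega) p2
  have p4 : P 4 := pt 1 (by omega) (by omega) p1
  have p5 : P 5 := px 4 (by omega) (by omega) p4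
  have p6 : P 6 := px 5 (by omega) (by omega) p5
  have p7 : P 7 := pt 2 (by omega) (by omega) p2
  have p8 : P 8 := px 7 (by omega) (by omega) p7
  have p9 : P 9 := px 8 (by omega) (by omega) p8
  have p10 : P 10 := pt 3 (by omega) (by omega) p3
  have p11 : P 11 := px 10 (by omega) (by omega) p10
  have p12 : P 12 := px 11 (by omega) (by omega) p11
  have : P k := by interval_cases k <;> assumption
  exact this l h3 h4 e

def SS (x t : X → X) (p : X) : Set (Quot (rC x)) :=
  {Quot.mk _ p, Quot.mk _ (t p), Quot.mk _ (t (x p)), Quot.mk _ (t (x (x p)))}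

theorem SS_x (h : Rel x t) (p : X) : SS x t (x p) = SS x t p := by
  ext c
  simp only [SS, Set.mem_insert_iff, Set.mem_singleton_iff, h.x3, mkc]
  tauto

theorem SS_t (h : Rel x t) (p : X) : SS x t (t p) = SS x t p := by
  ext c
  simp only [SS, Set.mem_insert_iff, Set.mem_singleton_iff, h.t2, h.txt, h.txxt, mkc]
  tauto

theorem SS_eq (h : Rel x t) {p q : X} (e : Quot.mk (rA x t) p = Quot.mk (rA x t) q) :
    SS x t p = SS x t q := by
  have hr : ∀ a b, rA x t a b → SS x t a = SS x t b := by
    rintro a b (rfl | rfl)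
    · exact (SS_x h a).symm
    · exact (SS_t h a).symm
  exact congrArg (Quot.lift (SS x t) hr) e

theorem SS_bad (h : Rel x t) {q : X} (hq : Bad x t q) :
    ∃ c1 c2, ∀ c ∈ SS x t q, c = c1 ∨ c = c2 := by
  simp only [SS, Set.mem_insert_iff, Set.mem_singleton_iff]
  rcases hq with e | e | e | e
  · refine ⟨Quot.mk _ q, Quot.mk _ (t q), ?_⟩
    rintro c (rfl | rfl | rfl | rfl) <;> simp [e]
  · refine ⟨Quot.mk _ q, Quot.mk _ (t (x q)), ?_⟩
    have e2 : t (x (x q)) = x (t (x q)) := by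
      have := h.txxt q
      rwa [e] at this
    rintro c (rfl | rfl | rfl | rfl) <;> simp [e, e2, mkc]
  · refine ⟨Quot.mk _ q, Quot.mk _ (t (x (x q))), ?_⟩
    have e2 : t (x q) = q := by rw [← e, h.t2]
    rintro c (rfl | rfl | rfl | rfl) <;> simp [e, e2, mkc]
  · refine ⟨Quot.mk _ q, Quot.mk _ (t (x q)), ?_⟩
    have e2 : t (x (x q)) = q := by rw [← e, h.t2]
    rintro c (rfl | rfl | rfl | rfl) <;> simp [e, e2, mkc]

theorem card_bound [Finite X] (h : Rel x t)
    (H : ∀ p, ∃ q, Quot.mk (rA x t) q = Quot.mk (rA x t) p ∧ Bad x t q) :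
    Nat.card (Quot (rC x)) ≤ 2 * Nat.card (Quot (rA x t)) := by
  classical
  have := Fintype.ofFinite (Quot (rC x))
  have := Fintype.ofFinite (Quot (rA x t))
  rw [Nat.card_eq_fintype_card, Nat.card_eq_fintype_card]
  let π : Quot (rC x) → Quot (rA x t) := Quot.lift (Quot.mk _) (by
    rintro a b rfl; exact (mkx a).symm)
  have := Finset.card_le_mul_card_image (f := π) Finset.univ 2 (by
    intro o _
    obtain ⟨p, rfl⟩ := Quot.exists_rep o
    obtain ⟨q, hq, hb⟩ := H p
    obtain ⟨c1, c2, hc⟩ := SS_bad h hb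
    refine (Finset.card_le_card (t := {c1, c2}) ?_).trans Finset.card_le_two
    intro c hcm
    obtain ⟨i, rfl⟩ := Quot.exists_rep c
    have e : Quot.mk (rA x t) i = Quot.mk (rA x t) p := (Finset.mem_filter.1 hcm).2
    have := hc (Quot.mk _ i) (by
      rw [SS_eq h (hq.trans e.symm)]
      simp [SS])
    simpa using this)
  refine this.trans (Nat.mul_le_mul_left _ ?_)
  exact Finset.card_le_univ _

/-- Conclusion of the combinatorial core. -/
def Concl (x t s : X → X) (v w : X → ℚ) : Prop :=
  ∃ α β : ℚ, (α ≠ 0 ∨ β ≠ 0) ∧ ∃ a a' : X → ℚ, (∀ i, a (x i) = a i) ∧ (∀ i, a (t i) = a i) ∧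
    (∀ i, a' (x i) = a' i) ∧ (∀ i, a' (s i) = a' i) ∧ ∀ i, α * v i + β * w i = a' i - a i

theorem concl_of_card [Finite X] (hA : Nat.card (Quot (rC x)) ≤ 2 * Nat.card (Quot (rA x t)))
    (hB : Nat.card (Quot (rC x)) ≤ 2 * Nat.card (Quot (rA x s)))
    (htr : ∀ a : X → ℚ, (∀ i, a (x i) = a i) → (∀ i, a (t i) = a i) → (∀ i, a (s i) = a i) →
      ∀ i j, a i = a j)
    (v w : X → ℚ) (hv : ∀ i, v (x i) = v i) (hw : ∀ i, w (x i) = w i) : Concl x t s v w := by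
  classical
  rcases isEmpty_or_nonempty X with hX | ⟨⟨i0⟩⟩
  · exact ⟨1, 0, by simp, 0, 0, by simp, by simp, by simp, by simp, fun i => hX.elim i⟩
  by_contra hcon
  have := Fintype.ofFinite (Quot (rC x))
  have := Fintype.ofFinite (Quot (rA x t))
  have := Fintype.ofFinite (Quot (rA x s))
  rw [Nat.card_eq_fintype_card, Nat.card_eq_fintype_card] at hA hB
  let v' : Quot (rC x) → ℚ := Quot.lift v (by rintro a b rfl; exact (hv a).symm)
  let w' : Quot (rC x) → ℚ := Quot.lift w (by rintro a b rfl; exact (hw a).symm)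
  let π : Quot (rC x) → Quot (rA x t) := Quot.lift (Quot.mk _) (by
    rintro a b rfl; exact (mkx a).symm)
  let π' : Quot (rC x) → Quot (rA x s) := Quot.lift (Quot.mk _) (by
    rintro a b rfl; exact (mkx a).symm)
  let Φ : ((ℚ × ℚ) × ((Quot (rA x t) → ℚ) × (Quot (rA x s) → ℚ))) →ₗ[ℚ]
      ((Quot (rC x) → ℚ) × ℚ) :=
    { toFun := fun z => (fun c => z.1.1 * v' c + z.1.2 * w' c + z.2.1 (π c) - z.2.2 (π' c),
        z.2.1 (Quot.mk _ i0))
      map_add' := by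
        intro y z
        ext
        · simp; ring
        · simp
      map_smul' := by
        intro r z
        ext
        · simp; ring
        · simp }
  have inj : Function.Injective Φ := by
    rw [injective_iff_map_eq_zero]
    rintro ⟨⟨α, β⟩, ⟨a, a'⟩⟩ hz
    have h1 : ∀ i, α * v i + β * w i = a' (Quot.mk _ i) - a (Quot.mk _ i) := by
      intro i
      have := congrFun (congrArg Prod.fst hz) (Quot.mk _ i)
      have e : α * v i + β * w i + a (Quot.mk _ i) - a' (Quot.mk _ i) = 0 := this
      linarith
    have h2 : a (Quot.mk _ i0) = 0 := congrArg Prod.snd hz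
    have h3 : α = 0 ∧ β = 0 := by
      by_contra hne
      apply hcon
      refine ⟨α, β, by tauto, fun i => a (Quot.mk _ i), fun i => a' (Quot.mk _ i), ?_, ?_, ?_, ?_,
        h1⟩
      · intro i; simp only [mkx]
      · intro i; simp only [mkt]
      · intro i; simp only [mkx]
      · intro i; simp only [mkt]
    obtain ⟨rfl, rfl⟩ := h3
    have h4 : ∀ i, a' (Quot.mk _ i) = a (Quot.mk _ i) := by
      intro i; have := h1 i; linarith
    have h5 := htr (fun i => a (Quot.mk _ i)) (fun i => by simp only [mkx])
      (fun i => by simp only [mkt]) (fun i => by simp only [← h4, mkt])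
    have h6 : ∀ i, a (Quot.mk _ i) = 0 := fun i => (h5 i i0).trans h2
    have h7 : a = 0 := by
      ext c; obtain ⟨i, rfl⟩ := Quot.exists_rep c; exact h6 i
    have h8 : a' = 0 := by
      ext c; obtain ⟨i, rfl⟩ := Quot.exists_rep c; rw [h4]; exact h6 i
    rw [h7, h8]; rfl
  have := LinearMap.finrank_le_finrank_of_injective inj
  simp only [Module.finrank_prod, Module.finrank_self, Module.finrank_fintype_fun_eq_card] at this
  omega

theorem bij_of [Finite X] (hX : Nat.card X ≤ 12) (p : X)
    (hinj : ∀ k l, 1 ≤ k → k ≤ 12 → 1 ≤ l → l ≤ 12 → ee x t p k = ee x t p l → k = l) :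
    ∀ a, ∃ k, (1 ≤ k ∧ k ≤ 12) ∧ ee x t p k = a := by
  have hi : Function.Injective (fun k : Fin 12 => ee x t p (k.1 + 1)) := by
    intro k l e
    have := hinj _ _ (by omega) (by omega) (by omega) (by omega) e
    ext; omega
  have hb : Function.Bijective (fun k : Fin 12 => ee x t p (k.1 + 1)) :=
    hi.bijective_of_nat_card_le (by simpa using hX)
  intro a
  obtain ⟨k, hk⟩ := hb.2 a
  exact ⟨k.1 + 1, by omega, hk⟩

theorem core [Finite X] (hX : Nat.card X ≤ 12) (h : Rel x t) (h' : Rel x s)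
    (hts : ∀ i, s (t (s (t (s (t i))))) = i)
    (htr : ∀ a : X → ℚ, (∀ i, a (x i) = a i) → (∀ i, a (t i) = a i) → (∀ i, a (s i) = a i) →
      ∀ i j, a i = a j)
    (v w : X → ℚ) (hv : ∀ i, v (x i) = v i) (hw : ∀ i, w (x i) = w i)
    (hva : Alt t s v) (hwa : Alt t s w) : Concl x t s v w := by
  have hst : ∀ i, t (s (t (s (t (s i))))) = i := by
    intro i
    apply h'.tinj
    rw [← hts (s i)]
    simp only [hts]
  by_cases c1 : ∀ p, ∃ q, Quot.mk (rA x t) q = Quot.mk (rA x t) p ∧ Bad x t q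
  · by_cases c2 : ∀ p, ∃ q, Quot.mk (rA x s) q = Quot.mk (rA x s) p ∧ Bad x s q
    · exact concl_of_card (card_bound h c1) (card_bound h' c2) htr v w hv hw
    · push Not at c2
      obtain ⟨p, hp⟩ := c2
      have hinj := ee_inj h' p hp
      have flip : ∀ v : X → ℚ, Alt t s v → Alt s t v := by
        intro v hv i
        have k1 : t (s (t (s (t (s i))))) = i := hst i
        have k2 : s (t (s (t (s i)))) = t i := by
          apply h.tinj; rw [k1, h.t2]
        have k3 : t (s (t (s i))) = s (t i) := by
          apply h'.tinj; rw [k2, h'.t2]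
        have k4 : s (t (s i)) = t (s (t i)) := by
          apply h.tinj; rw [k3, h.t2]
        have e := hv i
        rw [← k4] at e
        have k5 : s (s (t (s i))) = t (s i) := h'.t2 _
        rw [k5, h.t2] at e
        rw [k2, k3, k4, ← k4]
        linarith
      obtain ⟨α, β, h0, c, hc⟩ := regular h' h hst p hinj (bij_of hX p hinj) v w hv hw
        (flip v hva) (flip w hwa)
      exact ⟨α, β, h0, 0, fun _ => c, by simp, by simp, by simp, by simp, by simpa using hc⟩
  · push Not at c1
    obtain ⟨p, hp⟩ := c1
    have hinj := ee_inj h p hp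
    obtain ⟨α, β, h0, c, hc⟩ := regular h h' hts p hinj (bij_of hX p hinj) v w hv hw hva hwa
    exact ⟨α, β, h0, 0, fun _ => c, by simp, by simp, by simp, by simp, by simpa using hc⟩

end
end B1

namespace B1
section
variable {G : Type*} [Group G]

def QE (Δ : Subgroup G) (F : Δ → ℚ) (φ : G → ℚ) : Prop :=
  ∀ (g : G) (d : Δ), φ (g * d) = φ g + F d

theorem exists_QE (Δ : Subgroup G) (F : Δ → ℚ) (hF : ∀ a b, F (a * b) = F a + F b) :
    ∃ φ, QE Δ F φ := by
  have hm : ∀ g : G, ((g : G ⧸ Δ).out)⁻¹ * g ∈ Δ := fun g =>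
    QuotientGroup.eq.1 (QuotientGroup.out_eq' (g : G ⧸ Δ))
  refine ⟨fun g => F ⟨_, hm g⟩, ?_⟩
  intro g d
  rw [← hF]
  have : ((g * d : G) : G ⧸ Δ) = (g : G ⧸ Δ) := by
    rw [QuotientGroup.eq]; simp
  apply congrArg F
  apply Subtype.ext
  simp only [this, Subgroup.coe_mul, mul_assoc]

theorem exists_avg (Δ : Subgroup G) (F : Δ → ℚ) (φ : G → ℚ) (hφ : QE Δ F φ) (x t : G)
    (h : Rel (fun g : G => x * g) (fun g : G => t * g)) :
    ∃ ψ, QE Δ F ψ ∧ (∀ g, ψ (x * g) = ψ g) ∧ ∀ g, ψ (t * g) = ψ g := by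
  let χ : G → ℚ := fun g => φ g + φ (x * g) + φ (x * (x * g))
  have x3 : ∀ g, x * (x * (x * g)) = g := h.x3
  have t2 : ∀ g, t * (t * g) = g := h.t2
  have e1 : ∀ g, t * (x * (t * g)) = x * (x * (t * (x * (x * g)))) := h.txt
  have e2 : ∀ g, t * (x * (x * (t * g))) = x * (t * (x * g)) := h.txxt
  have hχ : ∀ g, χ (x * g) = χ g := by
    intro g; simp only [χ, x3]; ring
  refine ⟨fun g => (χ g + χ (t * g) + χ (t * (x * g)) + χ (t * (x * (x * g)))) / 12, ?_, ?_, ?_⟩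
  · intro g d
    simp only [χ, ← mul_assoc, hφ _ d]
    ring
  · intro g
    simp only [x3, hχ]; ring
  · intro g
    simp only [t2, e1, e2, hχ]; ring

/-- Everything about one homomorphism. -/
theorem data (Δ : Subgroup G) (F : Δ → ℚ) (hF : ∀ a b, F (a * b) = F a + F b) (x t s : G)
    (h : Rel (fun g : G => x * g) (fun g : G => t * g))
    (h' : Rel (fun g : G => x * g) (fun g : G => s * g)) 
    (hts : ∀ g : G, s * (t * (s * (t * (s * (t * g))))) = g) :
    ∃ (φ φ' : G → ℚ) (v : G ⧸ Δ → ℚ), QE Δ F φ ∧ (∀ g, φ (x * g) = φ g) ∧ (∀ g, φ (t * g) = φ g) ∧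
      (∀ g, φ' (x * g) = φ' g) ∧ (∀ g, φ' (s * g) = φ' g) ∧
      (∀ g : G, v (g : G ⧸ Δ) = φ' g - φ g) ∧ (∀ i, v (x • i) = v i) ∧
      Alt (fun i : G ⧸ Δ => t • i) (fun i => s • i) v := by
  obtain ⟨φ0, h0⟩ := exists_QE Δ F hF
  obtain ⟨φ, a1, a2, a3⟩ := exists_avg Δ F φ0 h0 x t h
  obtain ⟨φ', b1, b2, b3⟩ := exists_avg Δ F φ0 h0 x s h'
  let v : G ⧸ Δ → ℚ := fun i => φ' i.out - φ i.out
  have hv : ∀ g : G, v (g : G ⧸ Δ) = φ' g - φ g := by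
    intro g
    have hm : ((g : G ⧸ Δ).out)⁻¹ * g ∈ Δ :=
      QuotientGroup.eq.1 (QuotientGroup.out_eq' (g : G ⧸ Δ))
    have e1 := a1 (g : G ⧸ Δ).out ⟨_, hm⟩
    have e2 := b1 (g : G ⧸ Δ).out ⟨_, hm⟩
    simp only [mul_inv_cancel_left] at e1 e2
    simp only [v]
    rw [e1, e2]; ring
  have sm : ∀ a g : G, a • (g : G ⧸ Δ) = ((a * g : G) : G ⧸ Δ) := fun _ _ => rfl
  refine ⟨φ, φ', v, a1, a2, a3, b2, b3, hv, ?_, ?_⟩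
  · intro i
    obtain ⟨g, rfl⟩ := QuotientGroup.mk_surjective i
    rw [sm, hv, hv, a2, b2]
  · intro i
    obtain ⟨g, rfl⟩ := QuotientGroup.mk_surjective i
    simp only [sm, hv, a3, b3]
    have k := b3 (t * (s * (t * (s * (t * g)))))
    rw [hts] at k
    linarith

theorem grp (x t s : G) (h : Rel (fun g : G => x * g) (fun g : G => t * g))
    (h' : Rel (fun g : G => x * g) (fun g : G => s * g))
    (hts : ∀ g : G, s * (t * (s * (t * (s * (t * g))))) = g)
    (hgen : ∀ H : Subgroup G, x ∈ H → t ∈ H → s ∈ H → H = ⊤)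
    (Δ : Subgroup G) (hfin : Δ.FiniteIndex) (h12 : Δ.index ≤ 12) :
    ¬ ∃ f : Δ →* Multiplicative ℤ × Multiplicative ℤ, Function.Surjective f := by
  rintro ⟨f, hf⟩
  let F1 : Δ → ℚ := fun d => ((f d).1.toAdd : ℤ)
  let F2 : Δ → ℚ := fun d => ((f d).2.toAdd : ℤ)
  have hF1 : ∀ a b, F1 (a * b) = F1 a + F1 b := by intro a b; simp [F1]
  have hF2 : ∀ a b, F2 (a * b) = F2 a + F2 b := by intro a b; simp [F2]
  obtain ⟨φ1, ψ1, v1, a1, a2, a3, a4, a5, a6, a7, a8⟩ := data Δ F1 hF1 x t s h h' hts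
  obtain ⟨φ2, ψ2, v2, b1, b2, b3, b4, b5, b6, b7, b8⟩ := data Δ F2 hF2 x t s h h' hts
  have sm : ∀ a g : G, a • (g : G ⧸ Δ) = ((a * g : G) : G ⧸ Δ) := fun _ _ => rfl
  have lift : ∀ {a b : G}, Rel (fun g : G => a * g) (fun g : G => b * g) →
      Rel (fun i : G ⧸ Δ => a • i) (fun i : G ⧸ Δ => b • i) := by
    intro a b h
    refine ⟨?_, ?_, ?_⟩ <;> intro i <;> obtain ⟨g, rfl⟩ := QuotientGroup.mk_surjective i <;>
      simp only [sm]
    · exact congrArg _ (h.x3 g)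
    · exact congrArg _ (h.t2 g)
    · exact congrArg _ (h.r3 g)
  have inv_all : ∀ {Y : Type _} [MulAction G Y] (a : Y → ℚ), (∀ i, a (x • i) = a i) →
      (∀ i, a (t • i) = a i) → (∀ i, a (s • i) = a i) → ∀ (g : G) i, a (g • i) = a i := by
    intro Y _ a c1 c2 c3
    let H : Subgroup G :=
      { carrier := {g | ∀ i, a (g • i) = a i}
        one_mem' := by intro i; simp
        mul_mem' := by
          intro p q hp hq i
          rw [mul_smul, hp, hq]
        inv_mem' := by
          intro p hp i
          have := hp (p⁻¹ • i)
          rw [smul_inv_smul] at this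
          exact this.symm }
    have := hgen H c1 c2 c3
    intro g
    have hg : g ∈ H := by rw [this]; trivial
    exact hg
  have : Finite (G ⧸ Δ) := Subgroup.finite_quotient_of_finiteIndex
  obtain ⟨α, β, hne, a, a', c1, c2, c3, c4, c5⟩ := core (X := G ⧸ Δ) (x := fun i => x • i)
    (t := fun i => t • i) (s := fun i => s • i) h12 (lift h) (lift h')
    (by
      intro i
      obtain ⟨g, rfl⟩ := QuotientGroup.mk_surjective i
      simp only [sm]
      exact congrArg _ (hts g))
    (by
      intro a c1 c2 c3 i j
      obtain ⟨g, rfl⟩ := MulAction.exists_smul_eq G j i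
      exact inv_all a c1 c2 c3 g j) v1 v2 a7 b7 a8 b8
  let Ψ : G → ℚ := fun g => α * φ1 g + β * φ2 g + a' g - a' g + a g
  have hΨ : ∀ g, α * φ1 g + β * φ2 g - a g = α * ψ1 g + β * ψ2 g - a' g := by
    intro g
    have := c5 (g : G ⧸ Δ)
    rw [a6, b6] at this
    linarith
  have hΨ' := inv_all (Y := G) (fun g => α * φ1 g + β * φ2 g - a g)
    (by intro g; simp only [smul_eq_mul, a2, b2]; rw [← sm, c1])
    (by intro g; simp only [smul_eq_mul, a3, b3]; rw [← sm, c2])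
    (by intro g; simp only [smul_eq_mul, hΨ, a5, b5]; rw [← sm, c4])
  have key : ∀ d : Δ, α * F1 d + β * F2 d = 0 := by
    intro d
    have e := hΨ' (d : G) 1
    have e1 := a1 1 d
    have e2 := b1 1 d
    have e3 : ((d : G) : G ⧸ Δ) = ((1 : G) : G ⧸ Δ) := by
      rw [QuotientGroup.eq]; simp
    rw [one_mul] at e1 e2
    simp only [smul_eq_mul, mul_one] at e
    rw [e1, e2, e3] at e
    linarith
  obtain ⟨d1, hd1⟩ := hf (Multiplicative.ofAdd 1, Multiplicative.ofAdd 0)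
  obtain ⟨d2, hd2⟩ := hf (Multiplicative.ofAdd 0, Multiplicative.ofAdd 1)
  have k1 := key d1
  have k2 := key d2
  simp [F1, F2, hd1] at k1
  simp [F1, F2, hd2] at k2
  simp [k1, k2] at hne

end
end B1

namespace B1
section
set_option linter.unusedSimpArgs false
set_option linter.unusedSectionVars false
open Matrix

theorem w_facts (w : ℂ) (hw : w ^ 2 + w + 1 = 0) : w.re = -1 / 2 ∧ w.im ^ 2 = 3 / 4 := by
  have h1 := congrArg Complex.re hw
  have h2 := congrArg Complex.im hw
  simp [pow_two] at h1 h2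
  have h3 : w.im ≠ 0 := by
    intro h
    rw [h] at h1
    nlinarith [sq_nonneg (w.re + 1 / 2)]
  have h4 : w.re = -1 / 2 := by
    apply mul_left_cancel₀ h3; linarith
  refine ⟨h4, ?_⟩
  rw [h4] at h1
  nlinarith

theorem normSq_uv (w : ℂ) (hw : w ^ 2 + w + 1 = 0) (u v : ℝ) :
    Complex.normSq (u + v * w) = u ^ 2 - u * v + v ^ 2 := by
  obtain ⟨h1, h2⟩ := w_facts w hw
  rw [Complex.normSq_apply]
  simp
  rw [h1]
  linear_combination v ^ 2 * h2

theorem exists_round (w : ℂ) (hw : w ^ 2 + w + 1 = 0) (z : ℂ) :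
    ∃ m n : ℤ, Complex.normSq (z - (m + n * w)) < 1 := by
  obtain ⟨h1, h2⟩ := w_facts w hw
  have h3 : w.im ≠ 0 := by
    intro h; rw [h] at h2; norm_num at h2
  let v : ℝ := z.im / w.im
  let u : ℝ := z.re + v / 2
  have hz : z = u + v * w := by
    apply Complex.ext
    · simp [u, h1]; ring
    · simp [v, h3]
  refine ⟨round u, round v, ?_⟩
  have e : z - ((round u : ℤ) + (round v : ℤ) * w) =
      ((u - round u : ℝ) : ℂ) + ((v - round v : ℝ) : ℂ) * w := by
    rw [hz]; push_cast; ring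
  rw [e, normSq_uv w hw]
  have a1 := abs_le.1 (abs_sub_round u)
  have a2 := abs_le.1 (abs_sub_round v)
  clear e
  generalize u - round u = e at a1 ⊢
  generalize v - round v = f at a2 ⊢
  nlinarith [mul_nonneg (sub_nonneg.2 a1.2) (sub_nonneg.2 a2.2), sq_nonneg (e + f), sq_nonneg (e - f)]

variable {R : Type*} [CommRing R]

def Um (c : R) : SpecialLinearGroup (Fin 2) R := ⟨!![1, c; 0, 1], by simp [det_fin_two]⟩
def Lm (c : R) : SpecialLinearGroup (Fin 2) R := ⟨!![1, 0; c, 1], by simp [det_fin_two]⟩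
def tm : SpecialLinearGroup (Fin 2) R := ⟨!![0, -1; 1, 0], by simp [det_fin_two]⟩
def xm (ω : R) (h : ω ^ 2 + ω + 1 = 0) : SpecialLinearGroup (Fin 2) R :=
  ⟨!![0, -ω ^ 2; ω, 1], by simp [det_fin_two]; linear_combination (ω - 1) * h⟩
def sm (ω : R) (h : ω ^ 2 + ω + 1 = 0) : SpecialLinearGroup (Fin 2) R :=
  ⟨!![0, -ω; ω ^ 2, 0], by simp [det_fin_two]; linear_combination (ω - 1) * h⟩

theorem Um_coe (c : R) : (Um c).1 = !![1, c; 0, 1] := rfl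
theorem Lm_coe (c : R) : (Lm c).1 = !![1, 0; c, 1] := rfl
theorem tm_coe : (tm : SpecialLinearGroup (Fin 2) R).1 = !![0, -1; 1, 0] := rfl
theorem xm_coe (ω : R) (h : ω ^ 2 + ω + 1 = 0) : (xm ω h).1 = !![0, -ω ^ 2; ω, 1] := rfl
theorem sm_coe (ω : R) (h : ω ^ 2 + ω + 1 = 0) : (sm ω h).1 = !![0, -ω; ω ^ 2, 0] := rfl
theorem mul_coe (A B : SpecialLinearGroup (Fin 2) R) : (A * B).1 = A.1 * B.1 := rfl
theorem one_coe : (1 : SpecialLinearGroup (Fin 2) R).1 = !![1, 0; 0, 1] := by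
  rw [← Matrix.one_fin_two]; rfl
theorem neg_one_coe : (-1 : SpecialLinearGroup (Fin 2) R).1 = !![-1, 0; 0, -1] := by
  have : (-1 : SpecialLinearGroup (Fin 2) R).1 = - (1 : Matrix (Fin 2) (Fin 2) R) := rfl
  rw [this, Matrix.one_fin_two]; simp
theorem fin_two_ext {a b c d a' b' c' d' : R} (h1 : a = a') (h2 : b = b') (h3 : c = c')
    (h4 : d = d') : !![a, b; c, d] = !![a', b'; c', d'] := by
  subst h1 h2 h3 h4; rfl

theorem Lm_add (a b : R) : Lm (a + b) = Lm a * Lm b := by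
  apply Subtype.ext
  simp only [mul_coe, Um_coe, Lm_coe, tm_coe, xm_coe, sm_coe, one_coe, neg_one_coe, mul_fin_two]
  apply fin_two_ext <;> grind

theorem Lm_zero : Lm (0 : R) = 1 := by
  apply Subtype.ext
  rw [Lm_coe, one_coe]

theorem rel1 (ω : R) (h : ω ^ 2 + ω + 1 = 0) : Lm (-ω) * (tm * sm ω h) = xm ω h * tm := by
  apply Subtype.ext
  simp only [mul_coe, Um_coe, Lm_coe, tm_coe, xm_coe, sm_coe, one_coe, neg_one_coe, mul_fin_two]
  apply fin_two_ext <;> grind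

theorem rel2 (ω : R) (h : ω ^ 2 + ω + 1 = 0) :
    Lm (-1) * (tm * sm ω h) = (tm * sm ω h) * Lm (-ω) := by
  apply Subtype.ext
  simp only [mul_coe, Um_coe, Lm_coe, tm_coe, xm_coe, sm_coe, one_coe, neg_one_coe, mul_fin_two]
  apply fin_two_ext <;> grind

theorem rel3 (c : R) : Um c * tm = tm * Lm (-c) := by
  apply Subtype.ext
  simp only [mul_coe, Um_coe, Lm_coe, tm_coe, xm_coe, sm_coe, one_coe, neg_one_coe, mul_fin_two]
  apply fin_two_ext <;> grind

theorem gen_SL (ω : R) (h : ω ^ 2 + ω + 1 = 0) (hR : ∀ r : R, ∃ m n : ℤ, r = m + n * ω)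
    (ι : R →+* ℂ) (hι : Function.Injective ι) (H : Subgroup (SpecialLinearGroup (Fin 2) R))
    (hx : xm ω h ∈ H) (ht : tm ∈ H) (hs : sm ω h ∈ H) : H = ⊤ := by
  have hts : tm * sm ω h ∈ H := H.mul_mem ht hs
  have l1 : Lm (-ω) ∈ H := by
    rw [← H.mul_mem_cancel_right hts, rel1]
    exact H.mul_mem hx ht
  have l2 : Lm (-1 : R) ∈ H := by
    rw [← H.mul_mem_cancel_right hts, rel2]
    exact H.mul_mem hts l1
  let A : AddSubgroup R :=
    { carrier := {c | Lm c ∈ H}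
      zero_mem' := by simp only [Set.mem_ofPred_eq, Lm_zero]; exact H.one_mem
      add_mem' := by
        intro a b ha hb
        simp only [Set.mem_ofPred_eq, Lm_add] at *
        exact H.mul_mem ha hb
      neg_mem' := by
        intro a ha
        simp only [Set.mem_ofPred_eq] at *
        have : Lm (-a) * Lm a = 1 := by rw [← Lm_add, neg_add_cancel, Lm_zero]
        rw [eq_inv_of_mul_eq_one_left this]
        exact H.inv_mem ha }
  have hL : ∀ c : R, Lm c ∈ H := by
    intro c
    obtain ⟨m, n, rfl⟩ := hR c
    have e : ((m : R) + n * ω) = (-m) • (-1 : R) + (-n) • (-ω) := by simp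
    rw [e]
    exact A.add_mem (A.zsmul_mem l2 _) (A.zsmul_mem l1 _)
  have hU : ∀ c : R, Um c ∈ H := by
    intro c
    rw [← H.mul_mem_cancel_right ht, rel3]
    exact H.mul_mem ht (hL _)
  have hw : (ι ω) ^ 2 + ι ω + 1 = 0 := by
    rw [← map_pow, ← map_add, ← map_one ι, ← map_add, h, map_zero]
  have hN : ∀ r : R, ∃ k : ℕ, Complex.normSq (ι r) = k := by
    intro r
    obtain ⟨m, n, rfl⟩ := hR r
    have e : Complex.normSq (ι (m + n * ω)) = ((m ^ 2 - m * n + n ^ 2 : ℤ) : ℝ) := by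
      have := normSq_uv _ hw m n
      push_cast
      rw [← this]
      simp
    have h0 : (0 : ℤ) ≤ m ^ 2 - m * n + n ^ 2 := by
      have := Complex.normSq_nonneg (ι (m + n * ω))
      rw [e] at this
      exact_mod_cast this
    refine ⟨(m ^ 2 - m * n + n ^ 2).toNat, ?_⟩
    rw [e]
    have := Int.toNat_of_nonneg h0
    exact_mod_cast this.symm
  choose N hN using hN
  have main : ∀ k : ℕ, ∀ M : SpecialLinearGroup (Fin 2) R, N (M.1 1 0) = k → M ∈ H := by
    intro k
    induction k using Nat.strong_induction_on with
    | _ k ih =>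
      intro M hM
      have hdet : M.1 0 0 * M.1 1 1 - M.1 0 1 * M.1 1 0 = 1 := by
        rw [← det_fin_two]; exact M.2
      by_cases hc : M.1 1 0 = 0
      · rw [hc] at hdet
        have e : M = Um (M.1 0 0) * Lm (-M.1 1 1) * Um (M.1 0 0) * tm *
            Um (M.1 1 1 * M.1 0 1) := by
          apply Subtype.ext
          simp only [mul_coe, Um_coe, Lm_coe, tm_coe, mul_fin_two]
          rw [Matrix.eta_fin_two M.1, hc]
          simp only [Matrix.of_apply, Matrix.cons_val', Matrix.cons_val_zero, Matrix.cons_val_one,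
            Matrix.cons_val_fin_one]
          apply fin_two_ext <;> grind
        rw [e]
        exact H.mul_mem (H.mul_mem (H.mul_mem (H.mul_mem (hU _) (hL _)) (hU _)) ht) (hU _)
      · have hc' : ι (M.1 1 0) ≠ 0 := by
          rw [← map_zero ι]; exact fun e => hc (hι e)
        obtain ⟨m, n, hmn⟩ := exists_round _ hw (ι (M.1 0 0) / ι (M.1 1 0))
        let q : R := m + n * ω
        have hq : ι q = m + n * ι ω := by simp [q]
        rw [← hq] at hmn
        have e : (tm * (Um (-q) * M)).1 1 0 = M.1 0 0 - q * M.1 1 0 := by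
          rw [mul_coe, mul_coe, tm_coe, Um_coe, Matrix.eta_fin_two M.1, mul_fin_two, mul_fin_two]
          simp
          ring
        have hlt : N (M.1 0 0 - q * M.1 1 0) < k := by
          rw [← hM]
          have : (N (M.1 0 0 - q * M.1 1 0) : ℝ) < N (M.1 1 0) := by
            rw [← hN, ← hN]
            have e2 : ι (M.1 0 0 - q * M.1 1 0) =
                (ι (M.1 0 0) / ι (M.1 1 0) - ι q) * ι (M.1 1 0) := by
              rw [map_sub, map_mul]; field_simp
            rw [e2, Complex.normSq_mul]
            have := Complex.normSq_pos.2 hc'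
            nlinarith
          exact_mod_cast this
        have := ih _ hlt (tm * (Um (-q) * M)) (by rw [e])
        rw [H.mul_mem_cancel_left ht, H.mul_mem_cancel_left (hU _)] at this
        exact this
  rw [eq_top_iff]
  intro M _
  exact main _ M rfl

theorem rel_x3 (ω : R) (h : ω ^ 2 + ω + 1 = 0) : xm ω h * (xm ω h * xm ω h) = -1 := by
  apply Subtype.ext
  simp only [mul_coe, Um_coe, Lm_coe, tm_coe, xm_coe, sm_coe, one_coe, neg_one_coe, mul_fin_two]
  apply fin_two_ext <;> grind
theorem rel_t2 : (tm * tm : SpecialLinearGroup (Fin 2) R) = -1 := by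
  apply Subtype.ext
  simp only [mul_coe, Um_coe, Lm_coe, tm_coe, xm_coe, sm_coe, one_coe, neg_one_coe, mul_fin_two]
  apply fin_two_ext <;> grind
theorem rel_s2 (ω : R) (h : ω ^ 2 + ω + 1 = 0) : sm ω h * sm ω h = -1 := by
  apply Subtype.ext
  simp only [mul_coe, Um_coe, Lm_coe, tm_coe, xm_coe, sm_coe, one_coe, neg_one_coe, mul_fin_two]
  apply fin_two_ext <;> grind
theorem rel_tx (ω : R) (h : ω ^ 2 + ω + 1 = 0) :
    tm * (xm ω h * (tm * (xm ω h * (tm * xm ω h)))) = -1 := by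
  apply Subtype.ext
  simp only [mul_coe, Um_coe, Lm_coe, tm_coe, xm_coe, sm_coe, one_coe, neg_one_coe, mul_fin_two]
  apply fin_two_ext <;> grind
theorem rel_sx (ω : R) (h : ω ^ 2 + ω + 1 = 0) :
    sm ω h * (xm ω h * (sm ω h * (xm ω h * (sm ω h * xm ω h)))) = -1 := by
  apply Subtype.ext
  simp only [mul_coe, Um_coe, Lm_coe, tm_coe, xm_coe, sm_coe, one_coe, neg_one_coe, mul_fin_two]
  apply fin_two_ext <;> grind
theorem rel_st (ω : R) (h : ω ^ 2 + ω + 1 = 0) :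
    sm ω h * (tm * (sm ω h * (tm * (sm ω h * tm)))) = -1 := by
  apply Subtype.ext
  simp only [mul_coe, Um_coe, Lm_coe, tm_coe, xm_coe, sm_coe, one_coe, neg_one_coe, mul_fin_two]
  apply fin_two_ext <;> grind

end
end B1

namespace B1
section
open Matrix

instance eis_cyc : IsCyclotomicExtension {3} ℚ (CyclotomicField 3 ℚ) := by
  have h := CyclotomicField.isCyclotomicExtension 3 ℚ
  have e : CyclotomicField.algebra 3 ℚ = DivisionRing.toRatAlgebra := Subsingleton.elim _ _
  rw [e] at h
  exact h

theorem eis_w {ζ : CyclotomicField 3 ℚ} (hζ : IsPrimitiveRoot ζ 3) :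
    (hζ.toInteger : Eisenstein) ^ 2 + hζ.toInteger + 1 = 0 :=
  IsCyclotomicExtension.Rat.Three.eta_sq_add_eta_add_one hζ

theorem eis_R {ζ : CyclotomicField 3 ℚ} (hζ : IsPrimitiveRoot ζ 3) (r : Eisenstein) :
    ∃ m n : ℤ, r = m + n * hζ.toInteger := by
  have hd : hζ.integralPowerBasis.dim = 2 := by
    rw [IsPrimitiveRoot.integralPowerBasis_dim]; decide
  have hnt : Nontrivial Eisenstein := inferInstance
  obtain ⟨f, hf, e⟩ := hζ.integralPowerBasis.exists_eq_aeval r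
  rw [hd] at hf
  obtain ⟨a, b, rfl⟩ := Polynomial.exists_eq_X_add_C_of_natDegree_le_one (Nat.le_of_lt_succ hf)
  refine ⟨b, a, ?_⟩
  rw [e, IsPrimitiveRoot.integralPowerBasis_gen]
  simp
  ring

theorem eis_emb : ∃ ι : Eisenstein →+* ℂ, Function.Injective ι := by
  obtain ⟨φ⟩ := (inferInstance : Nonempty (CyclotomicField 3 ℚ →+* ℂ))
  refine ⟨φ.comp (algebraMap Eisenstein (CyclotomicField 3 ℚ)), ?_⟩
  exact φ.injective.comp (FaithfulSMul.algebraMap_injective _ _)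

theorem mk_neg_one {R : Type*} [CommRing R] : ((-1 : SpecialLinearGroup (Fin 2) R) : PSL2 R) = 1 := by
  rw [QuotientGroup.eq_one_iff, Subgroup.mem_center_iff]
  intro g
  simp

end
end B1

/-- Every subgroup of `PSL(2, ℤ[ω])` of finite index at most `12` has first
Betti number at most `1`: it admits no surjection onto `ℤ × ℤ`. -/
theorem b1_le_one_of_small_index (Δ : Subgroup (PSL2 Eisenstein))
    (hfin : Δ.FiniteIndex) (h12 : Δ.index ≤ 12) :
    ¬ ∃ f : Δ →* Multiplicative ℤ × Multiplicative ℤ, Function.Surjective f := by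
  have hζ := IsCyclotomicExtension.zeta_spec 3 ℚ (CyclotomicField 3 ℚ)
  obtain ⟨ι, hι⟩ := B1.eis_emb
  have hw := B1.eis_w hζ
  have hR := B1.eis_R hζ
  generalize (hζ.toInteger : Eisenstein) = w at hw hR
  let X : PSL2 Eisenstein := QuotientGroup.mk (B1.xm w hw)
  let T : PSL2 Eisenstein := QuotientGroup.mk B1.tm
  let S : PSL2 Eisenstein := QuotientGroup.mk (B1.sm w hw)
  have x3 : X * (X * X) = 1 := by
    have := congrArg (QuotientGroup.mk : _ → PSL2 Eisenstein) (B1.rel_x3 w hw)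
    rw [B1.mk_neg_one] at this; exact this
  have t2 : T * T = 1 := by
    have := congrArg (QuotientGroup.mk : _ → PSL2 Eisenstein) B1.rel_t2
    rw [B1.mk_neg_one] at this; exact this
  have s2 : S * S = 1 := by
    have := congrArg (QuotientGroup.mk : _ → PSL2 Eisenstein) (B1.rel_s2 w hw)
    rw [B1.mk_neg_one] at this; exact this
  have tx : T * (X * (T * (X * (T * X)))) = 1 := by
    have := congrArg (QuotientGroup.mk : _ → PSL2 Eisenstein) (B1.rel_tx w hw)
    rw [B1.mk_neg_one] at this; exact this
  have sx : S * (X * (S * (X * (S * X)))) = 1 := by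
    have := congrArg (QuotientGroup.mk : _ → PSL2 Eisenstein) (B1.rel_sx w hw)
    rw [B1.mk_neg_one] at this; exact this
  have st : S * (T * (S * (T * (S * T)))) = 1 := by
    have := congrArg (QuotientGroup.mk : _ → PSL2 Eisenstein) (B1.rel_st w hw)
    rw [B1.mk_neg_one] at this; exact this
  refine B1.grp X T S ⟨?_, ?_, ?_⟩ ⟨?_, ?_, ?_⟩ ?_ ?_ Δ hfin h12
  · intro g; simpa [mul_assoc] using congrArg (· * g) x3
  · intro g; simpa [mul_assoc] using congrArg (· * g) t2
  · intro g; simpa [mul_assoc] using congrArg (· * g) tx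
  · intro g; simpa [mul_assoc] using congrArg (· * g) x3
  · intro g; simpa [mul_assoc] using congrArg (· * g) s2
  · intro g; simpa [mul_assoc] using congrArg (· * g) sx
  · intro g; simpa [mul_assoc] using congrArg (· * g) st
  · intro H h1 h2 h3
    have := B1.gen_SL w hw hR ι hι (H.comap (QuotientGroup.mk' _)) h1 h2 h3
    rw [eq_top_iff]
    intro g _
    obtain ⟨M, rfl⟩ := QuotientGroup.mk_surjective g
    have hM : M ∈ H.comap (QuotientGroup.mk' _) := by rw [this]; trivial
    exact hM
end
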